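/- arXiv:1712.09477 — 2 statements merged into one kernel-verified Lean document; each statement's English description precedes it below -/
import Mathlib

section
/- Let DS(L, P^core, R) be a double spider with deg(v_l) > deg(v_r) ≥ 3 such that R contains no path of even length and R contains at least one path of odd length at least 3. Then DS(L, P^core, R) is strongly antimagic. -/
open Classical

noncomputable section

/-- The vertex sum at `u` of an edge labeling `f`: the sum of the labels of the
edges incident to `u`. -/
def vertexSum {V : Type*} [Fintype V] (G : SimpleGraph V) (f : Sym2 V → ℕ) (u : V) : ℕ :=
  ∑ e ∈ G.incidenceFinset u, f e

/-- `f` is an antimagic labeling of `G`: it is a bijection from the edge set of `G`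
onto `{1, …, |E|}` and the vertex sums are pairwise distinct. -/
def IsAntimagicLabeling {V : Type*} [Fintype V] (G : SimpleGraph V)
    (f : Sym2 V → ℕ) : Prop :=
  Set.BijOn f G.edgeSet (Set.Icc 1 G.edgeFinset.card) ∧
  Function.Injective (vertexSum G f)

/-- `f` is a strongly antimagic labeling of `G`: it is an antimagic labeling and moreover
`deg u < deg v` implies `vertexSum u < vertexSum v`. -/
def IsStronglyAntimagicLabeling {V : Type*} [Fintype V] (G : SimpleGraph V)
    (f : Sym2 V → ℕ) : Prop :=
  Set.BijOn f G.edgeSet (Set.Icc 1 G.edgeFinset.card) ∧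
  Function.Injective (vertexSum G f) ∧
  ∀ u v : V, G.degree u < G.degree v → vertexSum G f u < vertexSum G f v

/-- `G` is antimagic if it admits an antimagic labeling. -/
def IsAntimagic {V : Type*} [Fintype V] (G : SimpleGraph V) : Prop :=
  ∃ f : Sym2 V → ℕ, IsAntimagicLabeling G f

/-- `G` is strongly antimagic if it admits a strongly antimagic labeling. -/
def IsStronglyAntimagic {V : Type*} [Fintype V] (G : SimpleGraph V) : Prop :=
  ∃ f : Sym2 V → ℕ, IsStronglyAntimagicLabeling G f

/-- The vertex type of a double spider: the core path has vertices `0, …, s`,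
and each leg of length `ℓ` (an entry of `L` or of `R`) contributes `ℓ` further
vertices, at distances `1, …, ℓ` from the branch vertex it is attached to. -/
abbrev DSVert (s : ℕ) (L R : List ℕ) : Type :=
  Fin (s + 1) ⊕ (((i : Fin L.length) × Fin (L.get i)) ⊕ ((i : Fin R.length) × Fin (R.get i)))

/-- The double spider `DS(L, Pᶜᵒʳᵉ, R)`: the core path `v_l = 0 — 1 — ⋯ — s = v_r`,
together with, for each entry `ℓ` of `L` (resp. of `R`), a leg which is a path of
length `ℓ` attached at `v_l` (resp. at `v_r`). -/
def DoubleSpider (s : ℕ) (L R : List ℕ) : SimpleGraph (DSVert s L R) :=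
  SimpleGraph.fromRel fun x y =>
    match x, y with
    | Sum.inl a, Sum.inl b => (b : ℕ) = (a : ℕ) + 1
    | Sum.inl a, Sum.inr (Sum.inl p) => (a : ℕ) = 0 ∧ (p.2 : ℕ) = 0
    | Sum.inl a, Sum.inr (Sum.inr p) => (a : ℕ) = s ∧ (p.2 : ℕ) = 0
    | Sum.inr (Sum.inl p), Sum.inr (Sum.inl q) => p.1 = q.1 ∧ (q.2 : ℕ) = (p.2 : ℕ) + 1
    | Sum.inr (Sum.inr p), Sum.inr (Sum.inr q) => p.1 = q.1 ∧ (q.2 : ℕ) = (p.2 : ℕ) + 1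
    | _, _ => False

/-- The branch vertex `v_l` of a double spider. -/
def vL (s : ℕ) (L R : List ℕ) : DSVert s L R := Sum.inl 0

/-- The branch vertex `v_r` of a double spider. -/
def vR (s : ℕ) (L R : List ℕ) : DSVert s L R := Sum.inl (Fin.last s)

namespace DSA

/-- Total weight of the pieces preceding `p`. -/
def pre {P : Type} [Fintype P] (pos w : P → ℕ) (p : P) : ℕ :=
  ∑ q, if pos q < pos p then w q else 0

section
variable {P : Type} [Fintype P] (pos w : P → ℕ)

lemma pre_le {p p' : P} (h : pos p < pos p') : pre pos w p + w p ≤ pre pos w p' := by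
  have h1 : w p = ∑ q, if q = p then w q else 0 := by simp
  unfold pre
  conv_lhs => rw [h1]
  rw [← Finset.sum_add_distrib]
  apply Finset.sum_le_sum
  intro q _
  by_cases hq : q = p
  · subst hq; simp [h]
  · simp only [hq, if_false, add_zero]
    split_ifs <;> omega

lemma pre_tot (p : P) : pre pos w p + w p ≤ ∑ q, w q := by
  have h1 : w p = ∑ q, if q = p then w q else 0 := by simp
  unfold pre
  conv_lhs => rw [h1]
  rw [← Finset.sum_add_distrib]
  apply Finset.sum_le_sum
  intro q _
  by_cases hq : q = p
  · subst hq; simp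
  · simp only [hq, if_false, add_zero]
    split_ifs <;> omega

lemma pre_succ (hpos : Function.Injective pos) {p p' : P}
    (h : ∀ q, pos q ≤ pos p ∨ pos p' ≤ pos q) : pre pos w p' ≤ pre pos w p + w p := by
  have h1 : w p = ∑ q, if q = p then w q else 0 := by simp
  unfold pre
  conv_rhs => rw [h1]
  rw [← Finset.sum_add_distrib]
  apply Finset.sum_le_sum
  intro q _
  by_cases hq : q = p
  · subst hq; simp; split_ifs <;> omega
  · have : pos q ≠ pos p := fun e => hq (hpos e)
    have := h q
    simp only [hq, if_false, add_zero]
    split_ifs <;> omega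

lemma pre_last (hpos : Function.Injective pos) {p : P}
    (h : ∀ q, pos q ≤ pos p) : ∑ q, w q ≤ pre pos w p + w p := by
  have h1 : w p = ∑ q, if q = p then w q else 0 := by simp
  unfold pre
  conv_rhs => rw [h1]
  rw [← Finset.sum_add_distrib]
  apply Finset.sum_le_sum
  intro q _
  by_cases hq : q = p
  · subst hq; simp
  · have : pos q ≠ pos p := fun e => hq (hpos e)
    have := h q
    simp only [hq, if_false, add_zero]
    split_ifs <;> omega

lemma pre_add (w' : P → ℕ) (p : P) :
    pre pos (fun q => w q + w' q) p = pre pos w p + pre pos w' p := by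
  unfold pre
  rw [← Finset.sum_add_distrib]
  apply Finset.sum_congr rfl
  intro q _
  split_ifs <;> rfl

lemma pre_congr {w w' : P → ℕ} (h : ∀ q, w q = w' q) (p : P) :
    pre pos w p = pre pos w' p := by
  have : w = w' := funext h
  rw [this]

end

/-- number of small edges of a piece -/
def Sn {P : Type} (lp dl : P → ℕ) (p : P) : ℕ := (lp p + 1 - dl p) / 2
/-- number of large edges of a piece -/
def Gn {P : Type} (lp dl : P → ℕ) (p : P) : ℕ := (lp p + dl p) / 2

/-- the label of the `t`-th edge of the piece `p` -/
def gl {P : Type} [Fintype P] (pos lp dl : P → ℕ) (p : P) (t : ℕ) : ℕ :=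
  if t < lp p then
    (if (t + dl p) % 2 = 0 then pre pos (Sn lp dl) p + (t + dl p) / 2 + 1 - dl p
      else (∑ q, Sn lp dl q) + pre pos (Gn lp dl) p + (t + dl p) / 2 + 1)
  else (∑ q, lp q) + 1

section
variable {P : Type} [Fintype P] (pos lp dl : P → ℕ)

lemma SG (hd : ∀ p, dl p ≤ 1) (p : P) : Sn lp dl p + Gn lp dl p = lp p := by
  have := hd p
  unfold Sn Gn
  omega

lemma SGtot (hd : ∀ p, dl p ≤ 1) : ∑ p, Sn lp dl p + ∑ p, Gn lp dl p = ∑ p, lp p := by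
  rw [← Finset.sum_add_distrib]
  exact Finset.sum_congr rfl fun p _ => SG lp dl hd p

lemma SGpre (hd : ∀ p, dl p ≤ 1) (p : P) :
    pre pos (Sn lp dl) p + pre pos (Gn lp dl) p = pre pos lp p := by
  rw [← pre_add]
  exact pre_congr pos (SG lp dl hd) p

lemma gl_S (hd : ∀ p, dl p ≤ 1) {p : P} {t : ℕ} (ht : t < lp p) (h : (t + dl p) % 2 = 0) :
    pre pos (Sn lp dl) p < gl pos lp dl p t ∧
    gl pos lp dl p t ≤ pre pos (Sn lp dl) p + Sn lp dl p ∧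
    gl pos lp dl p t = pre pos (Sn lp dl) p + (t + dl p) / 2 + 1 - dl p := by
  have := hd p
  have e : Sn lp dl p = (lp p + 1 - dl p) / 2 := rfl
  have e2 : gl pos lp dl p t = pre pos (Sn lp dl) p + (t + dl p) / 2 + 1 - dl p := by
    simp only [gl, ht, h, if_true]
  refine ⟨?_, ?_, e2⟩ <;> omega

lemma gl_G (hd : ∀ p, dl p ≤ 1) {p : P} {t : ℕ} (ht : t < lp p) (h : (t + dl p) % 2 ≠ 0) :
    (∑ q, Sn lp dl q) + pre pos (Gn lp dl) p < gl pos lp dl p t ∧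
    gl pos lp dl p t ≤ (∑ q, Sn lp dl q) + pre pos (Gn lp dl) p + Gn lp dl p ∧
    gl pos lp dl p t = (∑ q, Sn lp dl q) + pre pos (Gn lp dl) p + (t + dl p) / 2 + 1 := by
  have := hd p
  have e : Gn lp dl p = (lp p + dl p) / 2 := rfl
  have e2 : gl pos lp dl p t =
      (∑ q, Sn lp dl q) + pre pos (Gn lp dl) p + (t + dl p) / 2 + 1 := by
    simp only [gl, ht, h, if_true, if_false]
  refine ⟨?_, ?_, e2⟩ <;> omega

lemma gl_T {p : P} {t : ℕ} (ht : ¬ t < lp p) : gl pos lp dl p t = (∑ q, lp q) + 1 := by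
  simp only [gl, ht, if_false]

lemma gl_range (hd : ∀ p, dl p ≤ 1) {p : P} {t : ℕ} (ht : t < lp p) :
    1 ≤ gl pos lp dl p t ∧ gl pos lp dl p t ≤ ∑ q, lp q := by
  have e := SGtot lp dl hd
  have e1 := pre_tot pos (Sn lp dl) p
  have e2 := pre_tot pos (Gn lp dl) p
  by_cases h : (t + dl p) % 2 = 0
  · have := gl_S pos lp dl hd ht h
    omega
  · have := gl_G pos lp dl hd ht h
    omega

lemma gl_inj (hd : ∀ p, dl p ≤ 1) (hpos : Function.Injective pos) {p q : P} {t u : ℕ}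
    (ht : t < lp p) (hu : u < lp q) (h : gl pos lp dl p t = gl pos lp dl q u) :
    p = q ∧ t = u := by
  have e1 := pre_tot pos (Sn lp dl) p
  have e1' := pre_tot pos (Sn lp dl) q
  have hdp := hd p
  have hdq := hd q
  by_cases h1 : (t + dl p) % 2 = 0 <;> by_cases h2 : (u + dl q) % 2 = 0
  · have a1 := gl_S pos lp dl hd ht h1
    have a2 := gl_S pos lp dl hd hu h2
    rcases lt_trichotomy (pos p) (pos q) with hh | hh | hh
    · have := pre_le pos (Sn lp dl) hh; omega
    · have := hpos hh
      subst this
      refine ⟨rfl, ?_⟩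
      omega
    · have := pre_le pos (Sn lp dl) hh; omega
  · have a1 := gl_S pos lp dl hd ht h1
    have a2 := gl_G pos lp dl hd hu h2
    omega
  · have a1 := gl_G pos lp dl hd ht h1
    have a2 := gl_S pos lp dl hd hu h2
    omega
  · have a1 := gl_G pos lp dl hd ht h1
    have a2 := gl_G pos lp dl hd hu h2
    rcases lt_trichotomy (pos p) (pos q) with hh | hh | hh
    · have := pre_le pos (Gn lp dl) hh; omega
    · have := hpos hh
      subst this
      refine ⟨rfl, ?_⟩
      omega
    · have := pre_le pos (Gn lp dl) hh; omega

lemma gl_mid (hd : ∀ p, dl p ≤ 1) {p : P} {t : ℕ} (ht : t + 1 < lp p) :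
    gl pos lp dl p t + gl pos lp dl p (t + 1) =
      (∑ q, Sn lp dl q) + pre pos lp p + t + 2 := by
  have e := SGpre pos lp dl hd p
  have hdp := hd p
  have ht' : t < lp p := by omega
  by_cases h1 : (t + dl p) % 2 = 0
  · have h2 : ¬ (t + 1 + dl p) % 2 = 0 := by omega
    have a1 := gl_S pos lp dl hd ht' h1
    have a2 := gl_G pos lp dl hd ht h2
    omega
  · have h2 : (t + 1 + dl p) % 2 = 0 := by omega
    have a1 := gl_G pos lp dl hd ht' h1
    have a2 := gl_S pos lp dl hd ht h2
    omega

end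
end DSA

namespace DSA

/-- The pieces: the core path, the left legs and the right legs. -/
abbrev Piece (a b : ℕ) : Type := Option (Fin a ⊕ Fin b)

/-- Lengths of the pieces. -/
def len (s : ℕ) {a b : ℕ} (Lf : Fin a → ℕ) (Rf : Fin b → ℕ) : Piece a b → ℕ
  | none => s
  | some (Sum.inl i) => Lf i
  | some (Sum.inr i) => Rf i

/-- The label sum at the left branch vertex. -/
def vl {a b : ℕ} (lab : Piece a b → ℕ → ℕ) : ℕ :=
  lab none 0 + ∑ i, lab (some (Sum.inl i)) 0

/-- The label sum at the right branch vertex. -/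
def vr (s : ℕ) {a b : ℕ} (lab : Piece a b → ℕ → ℕ) : ℕ :=
  lab none (s - 1) + ∑ i, lab (some (Sum.inr i)) 0

/-- The arithmetic requirements on a labeling of the pieces. -/
structure Good (s : ℕ) {a b : ℕ} (Lf : Fin a → ℕ) (Rf : Fin b → ℕ)
    (lab : Piece a b → ℕ → ℕ) : Prop where
  inj : ∀ p q j j', j < len s Lf Rf p → j' < len s Lf Rf q → lab p j = lab q j' → p = q ∧ j = j'
  range : ∀ p j, j < len s Lf Rf p → 1 ≤ lab p j ∧ lab p j ≤ ∑ q, len s Lf Rf q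
  leaf : ∀ x q j, j + 1 < len s Lf Rf q →
    lab (some x) (len s Lf Rf (some x) - 1) < lab q j + lab q (j + 1)
  midinj : ∀ p q j j', j + 1 < len s Lf Rf p → j' + 1 < len s Lf Rf q →
    lab p j + lab p (j + 1) = lab q j' + lab q (j' + 1) → p = q ∧ j = j'
  midr : ∀ p j, j + 1 < len s Lf Rf p → lab p j + lab p (j + 1) < vr s lab
  rl : vr s lab < vl lab

/-- Lengths of the pieces with the top edge of the right leg `i0` removed. -/
def lpf (s : ℕ) {a b : ℕ} (Lf : Fin a → ℕ) (Rf : Fin b → ℕ) (i0 : Fin b) (p : Piece a b) : ℕ :=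
  len s Lf Rf p - if p = some (Sum.inr i0) then 1 else 0

/-- The parity shift: the core starts with a large edge iff its length is odd. -/
def dlf (s : ℕ) {a b : ℕ} : Piece a b → ℕ
  | none => s % 2
  | some _ => 0

/-- The labels, counted from the branch vertices. -/
def labf (s : ℕ) {a b : ℕ} (Lf : Fin a → ℕ) (Rf : Fin b → ℕ) (i0 : Fin b)
    (pos : Piece a b → ℕ) (p : Piece a b) (j : ℕ) : ℕ :=
  gl pos (lpf s Lf Rf i0) (dlf s) p (len s Lf Rf p - 1 - j)

lemma dlf_le (s : ℕ) {a b : ℕ} : ∀ p : Piece a b, dlf s p ≤ 1 := by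
  rintro (_ | x)
  · simp only [dlf]; omega
  · simp [dlf]

section
variable (s : ℕ) {a b : ℕ} (Lf : Fin a → ℕ) (Rf : Fin b → ℕ) (i0 : Fin b)
  (pos : Piece a b → ℕ)

lemma lpf_ne {p : Piece a b} (h : p ≠ some (Sum.inr i0)) :
    lpf s Lf Rf i0 p = len s Lf Rf p := by
  simp [lpf, h]

lemma lpf_i0 : lpf s Lf Rf i0 (some (Sum.inr i0)) = Rf i0 - 1 := by
  simp [lpf, len]

lemma sum_len (h : 1 ≤ Rf i0) :
    ∑ p, len s Lf Rf p = ∑ p, lpf s Lf Rf i0 p + 1 := by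
  have h1 : 1 = ∑ p : Piece a b, if p = some (Sum.inr i0) then 1 else 0 := by simp
  rw [h1, ← Finset.sum_add_distrib]
  apply Finset.sum_congr rfl
  intro p _
  unfold lpf
  split_ifs with hp
  · subst hp; simp only [len]; omega
  · omega

lemma common (hpos : Function.Injective pos) (hL : ∀ i, 1 ≤ Lf i) (hR : ∀ i, Rf i % 2 = 1)
    (h3 : 3 ≤ Rf i0)
    (hvr : ∑ q, Sn (lpf s Lf Rf i0) (dlf s) q +
      pre pos (Gn (lpf s Lf Rf i0) (dlf s)) (some (Sum.inr i0)) +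
      Gn (lpf s Lf Rf i0) (dlf s) (some (Sum.inr i0)) + ∑ q, len s Lf Rf q
      < vr s (labf s Lf Rf i0 pos))
    (hvl : vr s (labf s Lf Rf i0 pos) < vl (labf s Lf Rf i0 pos)) :
    Good s Lf Rf (labf s Lf Rf i0 pos) := by
  have hd := dlf_le s (a := a) (b := b)
  have hM := sum_len s Lf Rf i0 (by omega)
  have hG : ∑ q, Sn (lpf s Lf Rf i0) (dlf s) q + ∑ q, Gn (lpf s Lf Rf i0) (dlf s) q =
    ∑ q, lpf s Lf Rf i0 q := SGtot _ _ hd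
  have hl0 := lpf_i0 s Lf Rf i0
  have hR0 := hR i0
  have hG0 : Gn (lpf s Lf Rf i0) (dlf s) (some (Sum.inr i0)) = (Rf i0 - 1) / 2 := by
    simp [Gn, hl0, dlf]
  have key : ∀ p t, t < len s Lf Rf p → t < lpf s Lf Rf i0 p ∨
      (p = some (Sum.inr i0) ∧ t + 1 = len s Lf Rf p ∧ t = lpf s Lf Rf i0 p) := by
    intro p t ht
    by_cases hp : p = some (Sum.inr i0)
    · subst hp
      simp only [len] at ht ⊢
      rw [hl0]
      by_cases h : t < Rf i0 - 1
      · exact Or.inl h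
      · right; refine ⟨trivial, ?_, ?_⟩ <;> omega
    · left; rwa [lpf_ne s Lf Rf i0 hp]
  have mid : ∀ p j, j + 1 < len s Lf Rf p →
      (len s Lf Rf p - 2 - j + 1 < lpf s Lf Rf i0 p ∧
        labf s Lf Rf i0 pos p j + labf s Lf Rf i0 pos p (j + 1) =
        ∑ q, Sn (lpf s Lf Rf i0) (dlf s) q + pre pos (lpf s Lf Rf i0) p +
          (len s Lf Rf p - 2 - j) + 2) ∨
      (p = some (Sum.inr i0) ∧ j = 0 ∧
        labf s Lf Rf i0 pos p j + labf s Lf Rf i0 pos p (j + 1) =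
        ∑ q, Sn (lpf s Lf Rf i0) (dlf s) q +
          pre pos (Gn (lpf s Lf Rf i0) (dlf s)) (some (Sum.inr i0)) +
          Gn (lpf s Lf Rf i0) (dlf s) (some (Sum.inr i0)) + ∑ q, len s Lf Rf q) := by
    intro p j hj
    have e1 : len s Lf Rf p - 1 - j = len s Lf Rf p - 2 - j + 1 := by omega
    have e2 : len s Lf Rf p - 1 - (j + 1) = len s Lf Rf p - 2 - j := by omega
    unfold labf
    rw [e1, e2]
    rcases key p (len s Lf Rf p - 2 - j + 1) (by omega) with h | ⟨h, h', hcc0⟩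
    · left
      refine ⟨h, ?_⟩
      rw [add_comm, gl_mid pos _ _ hd h]
    · right
      refine ⟨h, by omega, ?_⟩
      have hj0 : j = 0 := by omega
      subst h
      subst hj0
      simp only [len] at *
      have a1 := gl_T pos (lpf s Lf Rf i0) (dlf s) (p := some (Sum.inr i0))
        (t := Rf i0 - 2 - 0 + 1) (by omega)
      have a2 := gl_G pos (lpf s Lf Rf i0) (dlf s) hd (p := some (Sum.inr i0))
        (t := Rf i0 - 2 - 0) (by omega) (by simp only [dlf]; omega)
      rw [a1, a2.2.2, hG0]
      simp only [dlf]
      omega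
  have midlt : ∀ p t, t + 1 < lpf s Lf Rf i0 p →
      pre pos (lpf s Lf Rf i0) p + t + 2 ≤ ∑ q, lpf s Lf Rf i0 q := by
    intro p t ht
    have := pre_tot pos (lpf s Lf Rf i0) p
    omega
  constructor
  · intro p q j j' hj hj' h
    unfold labf at h
    have b1 := fun h => gl_range pos (lpf s Lf Rf i0) (dlf s) hd (p := p)
      (t := len s Lf Rf p - 1 - j) h
    have b2 := fun h => gl_range pos (lpf s Lf Rf i0) (dlf s) hd (p := q)
      (t := len s Lf Rf q - 1 - j') h
    rcases key p (len s Lf Rf p - 1 - j) (by omega) with h1 | ⟨h1, h1', hcc1⟩ <;>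
    rcases key q (len s Lf Rf q - 1 - j') (by omega) with h2 | ⟨h2, h2', hcc2⟩
    · have := gl_inj pos _ _ hd hpos h1 h2 h
      obtain ⟨rfl, h4⟩ := this
      refine ⟨rfl, by omega⟩
    · have b1 := b1 h1
      have := gl_T pos (lpf s Lf Rf i0) (dlf s) (p := q) (t := len s Lf Rf q - 1 - j') (by omega)
      omega
    · have b2 := b2 h2
      have := gl_T pos (lpf s Lf Rf i0) (dlf s) (p := p) (t := len s Lf Rf p - 1 - j) (by omega)
      omega
    · subst h1; subst h2
      refine ⟨rfl, by omega⟩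
  · intro p j hj
    unfold labf
    rcases key p (len s Lf Rf p - 1 - j) (by omega) with h1 | ⟨h1, h1', hcc1⟩
    · have := gl_range pos (lpf s Lf Rf i0) (dlf s) hd h1
      omega
    · have := gl_T pos (lpf s Lf Rf i0) (dlf s) (p := p) (t := len s Lf Rf p - 1 - j) (by omega)
      omega
  · intro x q j hj
    have hx1 : 0 < lpf s Lf Rf i0 (some x) := by
      by_cases hp : (some x : Piece a b) = some (Sum.inr i0)
      · rw [hp, hl0]; omega
      · rw [lpf_ne s Lf Rf i0 hp]
        rcases x with x | x
        · exact hL x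
        · have := hR x
          simp only [len]; omega
    have hle : lpf s Lf Rf i0 (some x) ≤ len s Lf Rf (some x) := Nat.sub_le _ _
    have h0 : labf s Lf Rf i0 pos (some x) (len s Lf Rf (some x) - 1) ≤
        ∑ q, Sn (lpf s Lf Rf i0) (dlf s) q := by
      have a1 := gl_S pos (lpf s Lf Rf i0) (dlf s) hd (p := some x) (t := 0) hx1 (by simp [dlf])
      have a2 := pre_tot pos (Sn (lpf s Lf Rf i0) (dlf s)) (some x)
      unfold labf
      rw [show len s Lf Rf (some x) - 1 - (len s Lf Rf (some x) - 1) = 0 by omega]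
      omega
    rcases mid q j hj with ⟨_, h⟩ | ⟨_, _, h⟩ <;> omega
  · intro p q j j' hj hj' h
    rcases mid p j hj with ⟨h1, h1'⟩ | ⟨h1, h1', hcc1⟩ <;>
    rcases mid q j' hj' with ⟨h2, h2'⟩ | ⟨h2, h2', hcc2⟩
    · rcases lt_trichotomy (pos p) (pos q) with hh | hh | hh
      · have := pre_le pos (lpf s Lf Rf i0) hh
        omega
      · have := hpos hh
        subst this
        refine ⟨rfl, by omega⟩
      · have := pre_le pos (lpf s Lf Rf i0) hh
        omega
    · have := midlt _ _ h1; omega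
    · have := midlt _ _ h2; omega
    · subst h1; subst h2
      refine ⟨rfl, by omega⟩
  · intro p j hj
    rcases mid p j hj with ⟨h1, h1'⟩ | ⟨h1, h1', hcc1⟩
    · have := midlt _ _ h1; omega
    · omega
  · exact hvl

end
end DSA

namespace DSA

lemma sum_match {α β : Type} (I : Finset α) (J : Finset β) (x : α → ℕ) (y : β → ℕ)
    (hc : I.card ≤ J.card) (h : ∀ i ∈ I, ∀ j ∈ J, x i ≤ y j) :
    ∑ i ∈ I, x i ≤ ∑ j ∈ J, y j := by
  rcases J.eq_empty_or_nonempty with hJ | hJ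
  · subst hJ
    have : I = ∅ := by simpa using hc
    subst this
    simp
  · obtain ⟨j0, hj0, hmin⟩ := J.exists_min_image y hJ
    calc ∑ i ∈ I, x i ≤ I.card • y j0 := Finset.sum_le_card_nsmul _ _ _ fun i hi => h i hi j0 hj0
      _ ≤ J.card • y j0 := by
        simp only [smul_eq_mul]
        exact Nat.mul_le_mul_right _ hc
      _ ≤ ∑ j ∈ J, y j := Finset.card_nsmul_le_sum _ _ _ hmin

section
variable (s : ℕ) {a b : ℕ} (Lf : Fin a → ℕ) (Rf : Fin b → ℕ) (i0 : Fin b)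
  (pos : Piece a b → ℕ)

local notation "ll" => lpf s Lf Rf i0
local notation "SS" => Sn (lpf s Lf Rf i0) (dlf s)
local notation "GG" => Gn (lpf s Lf Rf i0) (dlf s)
local notation "lb" => labf s Lf Rf i0 pos

lemma SS_L (j : Fin a) : SS (some (Sum.inl j)) = (Lf j + 1) / 2 := by
  simp [Sn, lpf, len, dlf]

lemma GG_L (j : Fin a) : GG (some (Sum.inl j)) = Lf j / 2 := by
  simp [Gn, lpf, len, dlf]

lemma SS_R {i : Fin b} (hi : i ≠ i0) : SS (some (Sum.inr i)) = (Rf i + 1) / 2 := by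
  simp [Sn, lpf, len, dlf, hi]

lemma GG_R {i : Fin b} (hi : i ≠ i0) : GG (some (Sum.inr i)) = Rf i / 2 := by
  simp [Gn, lpf, len, dlf, hi]

lemma SS_R0 : SS (some (Sum.inr i0)) = (Rf i0 - 1 + 1) / 2 := by
  simp [Sn, lpf, len, dlf]

lemma GG_R0 : GG (some (Sum.inr i0)) = (Rf i0 - 1) / 2 := by
  simp [Gn, lpf, len, dlf]

lemma SS_C : SS none = (s + 1 - s % 2) / 2 := by
  simp [Sn, lpf, len, dlf]

lemma GG_C : GG none = (s + s % 2) / 2 := by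
  simp [Gn, lpf, len, dlf]

lemma lab_L {j : Fin a} (hj : 1 ≤ Lf j) :
    pre pos SS (some (Sum.inl j)) + GG (some (Sum.inl j)) + 1 ≤ lb (some (Sum.inl j)) 0 ∧
    pre pos SS (some (Sum.inl j)) + SS (some (Sum.inl j)) ≤ lb (some (Sum.inl j)) 0 := by
  have hd := dlf_le s (a := a) (b := b)
  have e1 := SS_L s Lf Rf i0 j
  have e2 := GG_L s Lf Rf i0 j
  have e3 : ll (some (Sum.inl j)) = Lf j := by simp [lpf, len]
  have e4 := pre_tot pos SS (some (Sum.inl j))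
  have e5 : dlf s (some (Sum.inl j) : Piece a b) = 0 := rfl
  have e6 : lb (some (Sum.inl j)) 0 = gl pos ll (dlf s) (some (Sum.inl j)) (Lf j - 1) := rfl
  rw [e6]
  by_cases h : (Lf j - 1 + dlf s (some (Sum.inl j) : Piece a b)) % 2 = 0
  · have := gl_S pos ll (dlf s) hd (p := some (Sum.inl j)) (t := Lf j - 1) (by omega) h
    omega
  · have := gl_G pos ll (dlf s) hd (p := some (Sum.inl j)) (t := Lf j - 1) (by omega) h
    omega

lemma lab_R {i : Fin b} (hi : i ≠ i0) (hR : Rf i % 2 = 1) :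
    lb (some (Sum.inr i)) 0 = pre pos SS (some (Sum.inr i)) + SS (some (Sum.inr i)) := by
  have hd := dlf_le s (a := a) (b := b)
  have e1 := SS_R s Lf Rf i0 hi
  have e3 : ll (some (Sum.inr i)) = Rf i := by simp [lpf, len, hi]
  have e5 : dlf s (some (Sum.inr i) : Piece a b) = 0 := rfl
  have e6 : lb (some (Sum.inr i)) 0 = gl pos ll (dlf s) (some (Sum.inr i)) (Rf i - 1) := rfl
  rw [e6]
  have := gl_S pos ll (dlf s) hd (p := some (Sum.inr i)) (t := Rf i - 1) (by omega) (by omega)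
  omega

lemma lab_R0 (hR : 1 ≤ Rf i0) :
    lb (some (Sum.inr i0)) 0 = ∑ q, len s Lf Rf q := by
  have e6 : lb (some (Sum.inr i0)) 0 = gl pos ll (dlf s) (some (Sum.inr i0)) (Rf i0 - 1) := rfl
  rw [e6, gl_T, sum_len s Lf Rf i0 hR]
  rw [lpf_i0]; omega

lemma lab_Cr_even (hs : 1 ≤ s) (h2 : s % 2 = 0) :
    lb none (s - 1) = pre pos SS none + 1 := by
  have hd := dlf_le s (a := a) (b := b)
  have e3 : ll none = s := by simp [lpf, len]
  have e5 : dlf s (none : Piece a b) = 0 := h2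
  have e6 : lb none (s - 1) = gl pos ll (dlf s) none (s - 1 - (s - 1)) := rfl
  rw [e6, Nat.sub_self]
  have := gl_S pos ll (dlf s) hd (p := none) (t := 0) (by omega) (by omega)
  omega

lemma lab_Cl_even (hs : 1 ≤ s) (h2 : s % 2 = 0) :
    lb none 0 = ∑ q, SS q + pre pos GG none + GG none := by
  have hd := dlf_le s (a := a) (b := b)
  have e3 : ll none = s := by simp [lpf, len]
  have e5 : dlf s (none : Piece a b) = 0 := h2
  have e6 : lb none 0 = gl pos ll (dlf s) none (s - 1) := rfl
  have e7 := GG_C s Lf Rf i0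
  rw [e6]
  have := gl_G pos ll (dlf s) hd (p := none) (t := s - 1) (by omega) (by omega)
  omega

lemma lab_Cr_odd (hs : 1 ≤ s) (h2 : s % 2 = 1) :
    lb none (s - 1) = ∑ q, SS q + pre pos GG none + 1 := by
  have hd := dlf_le s (a := a) (b := b)
  have e3 : ll none = s := by simp [lpf, len]
  have e5 : dlf s (none : Piece a b) = 1 := h2
  have e6 : lb none (s - 1) = gl pos ll (dlf s) none (s - 1 - (s - 1)) := rfl
  rw [e6, Nat.sub_self]
  have := gl_G pos ll (dlf s) hd (p := none) (t := 0) (by omega) (by omega)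
  omega

lemma lab_Cl_odd (hs : 1 ≤ s) (h2 : s % 2 = 1) :
    lb none 0 = ∑ q, SS q + pre pos GG none + GG none := by
  have hd := dlf_le s (a := a) (b := b)
  have e3 : ll none = s := by simp [lpf, len]
  have e5 : dlf s (none : Piece a b) = 1 := h2
  have e6 : lb none 0 = gl pos ll (dlf s) none (s - 1) := rfl
  have e7 := GG_C s Lf Rf i0
  rw [e6]
  have := gl_G pos ll (dlf s) hd (p := none) (t := s - 1) (by omega) (by omega)
  omega

lemma totM (h : 1 ≤ Rf i0) : ∑ q, len s Lf Rf q = ∑ q, SS q + ∑ q, GG q + 1 := by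
  rw [SGtot _ _ (dlf_le s), sum_len s Lf Rf i0 h]

end

/-- Order of the pieces when the core is odd. -/
def posO {a b : ℕ} (i0 : Fin b) (D E : Fin a) : Piece a b → ℕ
  | none => 1 + b
  | some (Sum.inl j) => if j = E then 3 + b + a else if j = D then 2 + b + a else 2 + b + j
  | some (Sum.inr i) => if i = i0 then 0 else 1 + i

/-- Order of the pieces when the core is even. -/
def posE {a b : ℕ} (i0 i1 : Fin b) (D E : Fin a) : Piece a b → ℕ
  | none => 1 + b + a
  | some (Sum.inl j) => if j = E then 4 + b + a else if j = D then 2 + b + a else 1 + b + j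
  | some (Sum.inr i) => if i = i0 then 0 else if i = i1 then 3 + b + a else 1 + i

lemma posO_inj {a b : ℕ} (i0 : Fin b) (D E : Fin a) : Function.Injective (posO i0 D E) := by
  rintro (_ | p | p) (_ | q | q) h <;> simp only [posO] at h <;>
    (try have := p.2) <;> (try have := q.2) <;> (try split_ifs at h) <;>
    first
    | rfl
    | (exfalso; omega)
    | (subst_vars; rfl)
    | (have : p = q := by ext; omega
       subst this; rfl)

lemma posE_inj {a b : ℕ} (i0 i1 : Fin b) (D E : Fin a) :
    Function.Injective (posE i0 i1 D E) := by
  rintro (_ | p | p) (_ | q | q) h <;> simp only [posE] at h <;>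
    (try have := p.2) <;> (try have := q.2) <;> (try split_ifs at h) <;>
    first
    | rfl
    | (exfalso; omega)
    | (subst_vars; rfl)
    | (have : p = q := by ext; omega
       subst this; rfl)

end DSA

namespace DSA

section
variable (s : ℕ) {a b : ℕ} (Lf : Fin a → ℕ) (Rf : Fin b → ℕ) (i0 : Fin b)

local notation "ll" => lpf s Lf Rf i0
local notation "SS" => Sn (lpf s Lf Rf i0) (dlf s)
local notation "GG" => Gn (lpf s Lf Rf i0) (dlf s)

lemma good_odd (hab : b < a) (hb : 2 ≤ b) (hs : 1 ≤ s) (h2 : s % 2 = 1)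
    (hL : ∀ i, 1 ≤ Lf i) (hR : ∀ i, Rf i % 2 = 1) (h3 : 3 ≤ Rf i0)
    (D E F : Fin a) (hDE : D ≠ E) (hFE : F ≠ E) (hFD : F ≠ D) (hmin : ∀ j, Lf E ≤ Lf j) :
    Good s Lf Rf (labf s Lf Rf i0 (posO i0 D E)) := by
  have hpos := posO_inj i0 D E
  have hM := totM s Lf Rf i0 (by omega)
  have cr := lab_Cr_odd s Lf Rf i0 (posO i0 D E) hs h2
  have cl := lab_Cl_odd s Lf Rf i0 (posO i0 D E) hs h2
  have r0 := lab_R0 s Lf Rf i0 (posO i0 D E) (by omega)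
  have sumR : ∑ i, labf s Lf Rf i0 (posO i0 D E) (some (Sum.inr i)) 0 =
      labf s Lf Rf i0 (posO i0 D E) (some (Sum.inr i0)) 0 +
      ∑ i ∈ Finset.univ.erase i0, labf s Lf Rf i0 (posO i0 D E) (some (Sum.inr i)) 0 :=
    (Finset.add_sum_erase _ _ (Finset.mem_univ i0)).symm
  apply common s Lf Rf i0 (posO i0 D E) hpos hL hR h3
  · have hlt : posO i0 D E (some (Sum.inr i0)) < posO i0 D E none := by simp [posO]
    have := pre_le (posO i0 D E) GG hlt
    unfold vr
    omega
  · have hγ : pre (posO i0 D E) GG none = ∑ i, GG (some (Sum.inr i)) := by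
      unfold pre
      rw [Fintype.sum_option, Fintype.sum_sum_type]
      have e1 : ∀ j : Fin a, ¬ posO i0 D E (some (Sum.inl j)) < posO i0 D E none := by
        intro j; simp only [posO]; split_ifs <;> omega
      have e2 : ∀ i : Fin b, posO i0 D E (some (Sum.inr i)) < posO i0 D E none := by
        intro i; simp only [posO]; split_ifs <;> omega
      simp [e1, e2]
    have hGt : ∑ q, GG q = GG none + (∑ j, GG (some (Sum.inl j)) + ∑ i, GG (some (Sum.inr i))) := by
      rw [Fintype.sum_option, Fintype.sum_sum_type]
    have hγσ : pre (posO i0 D E) GG none ≤ pre (posO i0 D E) SS none := by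
      unfold pre
      apply Finset.sum_le_sum
      intro q _
      split_ifs with h
      · rcases q with _ | q
        · exact absurd h (lt_irrefl _)
        · simp only [Sn, Gn, dlf]; omega
      · exact le_rfl
    have hK := pre_last (posO i0 D E) SS hpos (p := some (Sum.inl E)) (by
      rintro (_ | q | q) <;> simp only [posO] <;> split_ifs <;> omega)
    have hsumL : ∑ j, (pre (posO i0 D E) SS (some (Sum.inl j)) + GG (some (Sum.inl j)) + 1) ≤
        ∑ j, labf s Lf Rf i0 (posO i0 D E) (some (Sum.inl j)) 0 :=
      Finset.sum_le_sum fun j _ => (lab_L s Lf Rf i0 (posO i0 D E) (hL j)).1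
    rw [Finset.sum_add_distrib, Finset.sum_add_distrib] at hsumL
    simp only [Finset.sum_const, Finset.card_univ, Fintype.card_fin, smul_eq_mul, mul_one] at hsumL
    have hDm : D ∈ Finset.univ.erase E := by simp [hDE]
    have hsplit : ∑ j, pre (posO i0 D E) SS (some (Sum.inl j)) =
        pre (posO i0 D E) SS (some (Sum.inl E)) + (pre (posO i0 D E) SS (some (Sum.inl D)) +
        ∑ j ∈ (Finset.univ.erase E).erase D, pre (posO i0 D E) SS (some (Sum.inl j))) := by
      rw [Finset.add_sum_erase _ (fun j => pre (posO i0 D E) SS (some (Sum.inl j))) hDm,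
        Finset.add_sum_erase _ (fun j => pre (posO i0 D E) SS (some (Sum.inl j)))
          (Finset.mem_univ E)]
    have hm : ∑ i ∈ Finset.univ.erase i0, labf s Lf Rf i0 (posO i0 D E) (some (Sum.inr i)) 0 ≤
        ∑ j ∈ (Finset.univ.erase E).erase D, pre (posO i0 D E) SS (some (Sum.inl j)) := by
      apply sum_match
      · rw [Finset.card_erase_of_mem hDm, Finset.card_erase_of_mem (Finset.mem_univ _),
          Finset.card_erase_of_mem (Finset.mem_univ _)]
        simp only [Finset.card_univ, Fintype.card_fin]
        omega
      · intro i hi j hj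
        have hi : i ≠ i0 := by simpa using hi
        rw [lab_R s Lf Rf i0 (posO i0 D E) hi (hR i)]
        apply pre_le
        simp only [posO]; split_ifs <;> omega
    have hF1 := pre_le (posO i0 D E) SS (p := none) (p' := some (Sum.inl F)) (by
      simp only [posO]; split_ifs <;> omega)
    have hF2 := pre_le (posO i0 D E) SS (p := some (Sum.inl F)) (p' := some (Sum.inl D)) (by
      simp only [posO, hFE, hFD, hDE, if_true, if_false]; omega)
    have hSF := SS_L s Lf Rf i0 F
    have hSE := SS_L s Lf Rf i0 E
    have hSEF := hmin F
    unfold vr vl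
    omega

lemma good_even (hab : b < a) (hs : 1 ≤ s) (h2 : s % 2 = 0)
    (hL : ∀ i, 1 ≤ Lf i) (hR : ∀ i, Rf i % 2 = 1) (h3 : 3 ≤ Rf i0)
    (i1 : Fin b) (hi1 : i1 ≠ i0) (hmax : ∀ i, Rf i ≤ Rf i0)
    (D E F : Fin a) (hDE : D ≠ E) (hFE : F ≠ E) (hFD : F ≠ D) (hmin : ∀ j, Lf E ≤ Lf j) :
    Good s Lf Rf (labf s Lf Rf i0 (posE i0 i1 D E)) := by
  have hpos := posE_inj i0 i1 D E
  have hM := totM s Lf Rf i0 (by omega)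
  have cr := lab_Cr_even s Lf Rf i0 (posE i0 i1 D E) hs h2
  have cl := lab_Cl_even s Lf Rf i0 (posE i0 i1 D E) hs h2
  have r0 := lab_R0 s Lf Rf i0 (posE i0 i1 D E) (by omega)
  have r1 := lab_R s Lf Rf i0 (posE i0 i1 D E) hi1 (hR i1)
  have hi1m : i1 ∈ Finset.univ.erase i0 := by simp [hi1]
  have sumR : ∑ i, labf s Lf Rf i0 (posE i0 i1 D E) (some (Sum.inr i)) 0 =
      labf s Lf Rf i0 (posE i0 i1 D E) (some (Sum.inr i0)) 0 +
      (labf s Lf Rf i0 (posE i0 i1 D E) (some (Sum.inr i1)) 0 +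
      ∑ i ∈ (Finset.univ.erase i0).erase i1,
        labf s Lf Rf i0 (posE i0 i1 D E) (some (Sum.inr i)) 0) := by
    rw [Finset.add_sum_erase _
        (fun i => labf s Lf Rf i0 (posE i0 i1 D E) (some (Sum.inr i)) 0) hi1m,
      Finset.add_sum_erase _
        (fun i => labf s Lf Rf i0 (posE i0 i1 D E) (some (Sum.inr i)) 0) (Finset.mem_univ i0)]
  -- positions
  have p1 : ∀ w, pre (posE i0 i1 D E) w (some (Sum.inr i0)) + w (some (Sum.inr i0)) ≤
      pre (posE i0 i1 D E) w (some (Sum.inl F)) := fun w => pre_le _ _ (by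
    simp only [posE, hFE, hFD, if_true, if_false]; omega)
  have p2 : ∀ w, pre (posE i0 i1 D E) w (some (Sum.inl F)) + w (some (Sum.inl F)) ≤
      pre (posE i0 i1 D E) w none := fun w => pre_le _ _ (by
    simp only [posE, hFE, hFD, if_false]; omega)
  have p3 : ∀ w, pre (posE i0 i1 D E) w none + w none ≤
      pre (posE i0 i1 D E) w (some (Sum.inl D)) := fun w => pre_le _ _ (by
    simp only [posE, hDE, if_true, if_false]; omega)
  have p5 : ∀ w, pre (posE i0 i1 D E) w (some (Sum.inr i1)) + w (some (Sum.inr i1)) ≤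
      pre (posE i0 i1 D E) w (some (Sum.inl E)) := fun w => pre_le _ _ (by
    simp only [posE, hi1, if_true, if_false]; omega)
  have q3 : ∀ w, pre (posE i0 i1 D E) w (some (Sum.inl D)) ≤
      pre (posE i0 i1 D E) w none + w none := fun w => pre_succ _ _ hpos (by
    rintro (_ | q | q) <;> simp only [posE, hDE, if_true, if_false] <;> (try split_ifs) <;> omega)
  have q4 : ∀ w, pre (posE i0 i1 D E) w (some (Sum.inr i1)) ≤
      pre (posE i0 i1 D E) w (some (Sum.inl D)) + w (some (Sum.inl D)) :=
    fun w => pre_succ _ _ hpos (by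
    rintro (_ | q | q) <;> simp only [posE, hDE, hi1, if_true, if_false] <;> (try split_ifs) <;> omega)
  have q5 : ∀ w, pre (posE i0 i1 D E) w (some (Sum.inl E)) ≤
      pre (posE i0 i1 D E) w (some (Sum.inr i1)) + w (some (Sum.inr i1)) :=
    fun w => pre_succ _ _ hpos (by
    rintro (_ | q | q) <;> simp only [posE, hi1, if_true, if_false] <;> (try split_ifs) <;> omega)
  have q6 : ∀ w, ∑ q, w q ≤
      pre (posE i0 i1 D E) w (some (Sum.inl E)) + w (some (Sum.inl E)) :=
    fun w => pre_last _ _ hpos (by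
    rintro (_ | q | q) <;> simp only [posE, if_true] <;> (try split_ifs) <;> omega)
  have z0 : ∀ w, pre (posE i0 i1 D E) w (some (Sum.inr i0)) = 0 := by
    intro w; simp [pre, posE]
  have hSF := SS_L s Lf Rf i0 F
  have hSE := SS_L s Lf Rf i0 E
  have hSEF := hmin F
  have hS0 := SS_R0 s Lf Rf i0 (a := a)
  have hG0 := GG_R0 s Lf Rf i0 (a := a)
  have hS1 := SS_R s Lf Rf i0 (a := a) hi1
  have hG1 := GG_R s Lf Rf i0 (a := a) hi1
  have hSC := SS_C s Lf Rf i0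
  have hmx := hmax i1
  have hR0 := hR i0
  have hR1 := hR i1
  apply common s Lf Rf i0 (posE i0 i1 D E) hpos hL hR h3
  · have a1 := p1 SS
    have a2 := p2 SS
    have a5 := q5 SS
    have a6 := q6 SS
    have b0 := z0 SS
    have b0' := z0 GG
    unfold vr
    omega
  · have hDm : D ∈ Finset.univ.erase E := by simp [hDE]
    have hFm : F ∈ (Finset.univ.erase E).erase D := by simp [hFE, hFD]
    have hsplit : ∑ j, labf s Lf Rf i0 (posE i0 i1 D E) (some (Sum.inl j)) 0 =
        labf s Lf Rf i0 (posE i0 i1 D E) (some (Sum.inl E)) 0 +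
        (labf s Lf Rf i0 (posE i0 i1 D E) (some (Sum.inl D)) 0 +
        (labf s Lf Rf i0 (posE i0 i1 D E) (some (Sum.inl F)) 0 +
        ∑ j ∈ ((Finset.univ.erase E).erase D).erase F,
          labf s Lf Rf i0 (posE i0 i1 D E) (some (Sum.inl j)) 0)) := by
      rw [Finset.add_sum_erase _
          (fun j => labf s Lf Rf i0 (posE i0 i1 D E) (some (Sum.inl j)) 0) hFm,
        Finset.add_sum_erase _
          (fun j => labf s Lf Rf i0 (posE i0 i1 D E) (some (Sum.inl j)) 0) hDm,
        Finset.add_sum_erase _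
          (fun j => labf s Lf Rf i0 (posE i0 i1 D E) (some (Sum.inl j)) 0) (Finset.mem_univ E)]
    have hm : ∑ i ∈ (Finset.univ.erase i0).erase i1,
          labf s Lf Rf i0 (posE i0 i1 D E) (some (Sum.inr i)) 0 ≤
        ∑ j ∈ ((Finset.univ.erase E).erase D).erase F,
          labf s Lf Rf i0 (posE i0 i1 D E) (some (Sum.inl j)) 0 := by
      apply sum_match
      · rw [Finset.card_erase_of_mem hFm, Finset.card_erase_of_mem hDm,
          Finset.card_erase_of_mem (Finset.mem_univ _), Finset.card_erase_of_mem hi1m,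
          Finset.card_erase_of_mem (Finset.mem_univ _)]
        simp only [Finset.card_univ, Fintype.card_fin]
        omega
      · intro i hi j hj
        simp only [Finset.mem_erase, Finset.mem_univ, and_true] at hi hj
        obtain ⟨hi', hi⟩ := hi
        obtain ⟨hjF, hjD, hjE⟩ := hj
        rw [lab_R s Lf Rf i0 (posE i0 i1 D E) hi (hR i)]
        have c1 := pre_le (posE i0 i1 D E) SS (p := some (Sum.inr i)) (p' := some (Sum.inl j)) (by
          simp only [posE, hi, hi', hjE, hjD, if_false]; omega)
        have c2 := lab_L s Lf Rf i0 (posE i0 i1 D E) (hL j)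
        omega
    have lE := lab_L s Lf Rf i0 (posE i0 i1 D E) (hL E)
    have lD := lab_L s Lf Rf i0 (posE i0 i1 D E) (hL D)
    have lF := lab_L s Lf Rf i0 (posE i0 i1 D E) (hL F)
    have hLF := hL F
    have a1 := p1 SS
    have a3 := p3 SS
    have a5 := p5 SS
    have g3 := q3 GG
    have g4 := q4 GG
    have g5 := q5 GG
    have g6 := q6 GG
    have b0 := z0 SS
    unfold vr vl
    omega

end

theorem exists_good (s a b : ℕ) (hs : 1 ≤ s) (hab : b < a) (hb : 2 ≤ b)
    (Lf : Fin a → ℕ) (Rf : Fin b → ℕ)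
    (hL : ∀ i, 1 ≤ Lf i) (hR : ∀ i, Rf i % 2 = 1) (h3 : ∃ i, 3 ≤ Rf i) :
    ∃ lab, Good s Lf Rf lab := by
  haveI : Nonempty (Fin a) := ⟨⟨0, by omega⟩⟩
  haveI : Nonempty (Fin b) := ⟨⟨0, by omega⟩⟩
  obtain ⟨E, hE⟩ := Finite.exists_min Lf
  obtain ⟨i0, hi0⟩ := Finite.exists_max Rf
  obtain ⟨i, hi⟩ := h3
  have h30 : 3 ≤ Rf i0 := hi.trans (hi0 i)
  obtain ⟨i1, hi1⟩ : ∃ i1 : Fin b, i1 ≠ i0 := by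
    haveI : Nontrivial (Fin b) := Fin.nontrivial_iff_two_le.mpr hb
    exact exists_ne i0
  obtain ⟨D, hD⟩ : ∃ D : Fin a, D ≠ E := by
    haveI : Nontrivial (Fin a) := Fin.nontrivial_iff_two_le.mpr (by omega)
    exact exists_ne E
  obtain ⟨F, hF⟩ : ∃ F : Fin a, F ∉ ({D, E} : Finset (Fin a)) := by
    by_contra hcon
    push Not at hcon
    have h1 : (Finset.univ : Finset (Fin a)) ⊆ {D, E} := fun x _ => hcon x
    have h2 := Finset.card_le_card h1
    have h3 : ({D, E} : Finset (Fin a)).card ≤ 2 := Finset.card_le_two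
    simp only [Finset.card_univ, Fintype.card_fin] at h2
    omega
  simp only [Finset.mem_insert, Finset.mem_singleton, not_or] at hF
  rcases Nat.mod_two_eq_zero_or_one s with h | h
  · exact ⟨_, good_even s Lf Rf i0 hab hs h hL hR h30 i1 hi1 hi0 D E F hD hF.2 hF.1 hE⟩
  · exact ⟨_, good_odd s Lf Rf i0 hab hb hs h hL hR h30 D E F hD hF.2 hF.1 hE⟩

end DSA

namespace DSA

/-- The edges of the double spider: a piece together with a position in it. -/
abbrev Edge (s : ℕ) (L R : List ℕ) : Type :=
  (p : Piece L.length R.length) × Fin (len s L.get R.get p)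

/-- The endpoint of an edge farther from `v_l`. -/
def hi (s : ℕ) (L R : List ℕ) : Edge s L R → DSVert s L R
  | ⟨none, j⟩ => Sum.inl (Fin.succ j)
  | ⟨some (Sum.inl i), j⟩ => Sum.inr (Sum.inl ⟨i, j⟩)
  | ⟨some (Sum.inr i), j⟩ => Sum.inr (Sum.inr ⟨i, j⟩)

/-- The endpoint of an edge closer to `v_l`. -/
def lo (s : ℕ) (L R : List ℕ) : Edge s L R → DSVert s L R
  | ⟨none, j⟩ => Sum.inl (Fin.castSucc j)
  | ⟨some (Sum.inl i), j⟩ => if j.1 = 0 then Sum.inl 0 else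
      Sum.inr (Sum.inl ⟨i, ⟨j.1 - 1, lt_of_le_of_lt (Nat.sub_le _ _) j.2⟩⟩)
  | ⟨some (Sum.inr i), j⟩ => if j.1 = 0 then Sum.inl (Fin.last s) else
      Sum.inr (Sum.inr ⟨i, ⟨j.1 - 1, lt_of_le_of_lt (Nat.sub_le _ _) j.2⟩⟩)

/-- Distance from `v_l`. -/
def depth (s : ℕ) (L R : List ℕ) : DSVert s L R → ℕ
  | Sum.inl c => c
  | Sum.inr (Sum.inl p) => p.2 + 1
  | Sum.inr (Sum.inr p) => s + p.2 + 1

theorem hi_inj (s : ℕ) (L R : List ℕ) : Function.Injective (hi s L R) := by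
  rintro ⟨_ | i | i, j⟩ ⟨_ | i' | i', j'⟩ h
  · simp only [hi, Sum.inl.injEq] at h
    have := Fin.succ_injective _ h
    subst this; rfl
  · simp [hi] at h
  · simp [hi] at h
  · simp [hi] at h
  · simp only [hi, Sum.inl.injEq, Sum.inr.injEq] at h
    cases h; rfl
  · simp [hi] at h
  · simp [hi] at h
  · simp [hi] at h
  · simp only [hi, Sum.inr.injEq] at h
    cases h; rfl

theorem depth_hi (s : ℕ) (L R : List ℕ) (e : Edge s L R) :
    depth s L R (hi s L R e) = depth s L R (lo s L R e) + 1 := by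
  rcases e with ⟨_ | i | i, j⟩
  · simp only [hi, lo, depth]; rfl
  · simp only [hi, lo, depth]
    split_ifs with h
    · simp [depth, h]
    · simp [depth]; omega
  · simp only [hi, lo, depth]
    split_ifs with h
    · simp [depth, h]
    · simp [depth]; omega

/-- The edge as an unordered pair. -/
def ep (s : ℕ) (L R : List ℕ) (e : Edge s L R) : Sym2 (DSVert s L R) :=
  s(lo s L R e, hi s L R e)

theorem ep_inj (s : ℕ) (L R : List ℕ) : Function.Injective (ep s L R) := by
  intro e e' h
  simp only [ep, Sym2.eq_iff] at h
  rcases h with h | h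
  · exact hi_inj s L R h.2
  · have h1 := depth_hi s L R e
    have h2 := depth_hi s L R e'
    rw [h.1, h.2] at h1
    omega

theorem adj_iff (s : ℕ) (L R : List ℕ) (x y : DSVert s L R) :
    (DoubleSpider s L R).Adj x y ↔ ∃ e, ep s L R e = s(x, y) := by
  have key : ∀ x y : DSVert s L R, (match x, y with
    | Sum.inl a, Sum.inl b => (b : ℕ) = (a : ℕ) + 1
    | Sum.inl a, Sum.inr (Sum.inl p) => (a : ℕ) = 0 ∧ (p.2 : ℕ) = 0
    | Sum.inl a, Sum.inr (Sum.inr p) => (a : ℕ) = s ∧ (p.2 : ℕ) = 0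
    | Sum.inr (Sum.inl p), Sum.inr (Sum.inl q) => p.1 = q.1 ∧ (q.2 : ℕ) = (p.2 : ℕ) + 1
    | Sum.inr (Sum.inr p), Sum.inr (Sum.inr q) => p.1 = q.1 ∧ (q.2 : ℕ) = (p.2 : ℕ) + 1
    | _, _ => False) ↔ ∃ e, lo s L R e = x ∧ hi s L R e = y := by
    intro x y
    constructor
    · intro h
      rcases x with c | ⟨i, j⟩ | ⟨i, j⟩ <;> rcases y with c' | ⟨i', j'⟩ | ⟨i', j'⟩ <;>
        simp only at h
      · refine ⟨⟨none, ⟨c.1, by simp only [len]; omega⟩⟩, ?_, ?_⟩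
        · simp only [lo]; congr 1
        · simp only [hi]; congr 1; ext; exact h.symm
      · refine ⟨⟨some (Sum.inl i'), j'⟩, ?_, rfl⟩
        simp only [lo, h.2, if_true]; congr 1; ext; simp; omega
      · refine ⟨⟨some (Sum.inr i'), j'⟩, ?_, rfl⟩
        simp only [lo, h.2, if_true]; congr 1; ext; simp; omega
      · obtain ⟨rfl, h⟩ := h
        refine ⟨⟨some (Sum.inl i), j'⟩, ?_, rfl⟩
        simp only [lo, h]; rw [if_neg (by omega)]; congr
      · obtain ⟨rfl, h⟩ := h
        refine ⟨⟨some (Sum.inr i), j'⟩, ?_, rfl⟩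
        simp only [lo, h]; rw [if_neg (by omega)]; congr
    · rintro ⟨⟨_ | i | i, j⟩, rfl, rfl⟩
      · simp only [lo, hi]; rfl
      · by_cases h : j.1 = 0
        · simp [lo, hi, h]
        · simp only [lo, hi, h, if_false]; exact ⟨trivial, by omega⟩
      · by_cases h : j.1 = 0
        · simp [lo, hi, h]
        · simp only [lo, hi, h, if_false]; exact ⟨trivial, by omega⟩
  unfold DoubleSpider
  rw [SimpleGraph.fromRel_adj]
  refine (and_congr Iff.rfl (or_congr (key x y) (key y x))).trans ?_
  constructor
  · rintro ⟨-, ⟨e, rfl, rfl⟩ | ⟨e, rfl, rfl⟩⟩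
    · exact ⟨e, rfl⟩
    · exact ⟨e, Sym2.eq_swap⟩
  · rintro ⟨e, he⟩
    have hd := depth_hi s L R e
    simp only [ep, Sym2.eq_iff] at he
    rcases he with ⟨rfl, rfl⟩ | ⟨rfl, rfl⟩
    · refine ⟨fun h => ?_, Or.inl ⟨e, rfl, rfl⟩⟩
      rw [h] at hd; omega
    · refine ⟨fun h => ?_, Or.inr ⟨e, rfl, rfl⟩⟩
      rw [h] at hd; omega

theorem edgeSet_eq (s : ℕ) (L R : List ℕ) :
    (DoubleSpider s L R).edgeSet = Set.range (ep s L R) := by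
  ext z
  induction z using Sym2.ind with
  | _ x y => rw [SimpleGraph.mem_edgeSet, adj_iff]; rfl

theorem card_edges (s : ℕ) (L R : List ℕ) :
    (DoubleSpider s L R).edgeFinset.card = ∑ q, len s L.get R.get q := by
  have h : (DoubleSpider s L R).edgeFinset = Finset.univ.image (ep s L R) := by
    ext z; simp [SimpleGraph.mem_edgeFinset, edgeSet_eq]
  rw [h, Finset.card_image_of_injective _ (ep_inj s L R), Finset.card_univ]
  simp [Fintype.card_sigma]

/-- Sum of weights over the edges at a vertex. -/
def wsum (s : ℕ) (L R : List ℕ) (w : Piece L.length R.length → ℕ → ℕ) (u : DSVert s L R) : ℕ :=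
  ∑ p, ∑ j : Fin (len s L.get R.get p), if u = lo s L R ⟨p, j⟩ ∨ u = hi s L R ⟨p, j⟩ then w p j else 0

theorem vertexSum_gen {V : Type*} [Fintype V] (G : SimpleGraph V) (f : Sym2 V → ℕ) (u : V)
    (S : Finset (Sym2 V)) (h : ∀ e, e ∈ S ↔ e ∈ G.incidenceSet u) :
    vertexSum G f u = ∑ e ∈ S, f e := by
  unfold vertexSum
  apply Finset.sum_congr _ (fun _ _ => rfl)
  ext e
  rw [SimpleGraph.mem_incidenceFinset, h]

theorem vertexSum_eq (s : ℕ) (L R : List ℕ) (w : Piece L.length R.length → ℕ → ℕ)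
    (f : Sym2 (DSVert s L R) → ℕ) (hf : ∀ e, f (ep s L R e) = w e.1 e.2) (u : DSVert s L R) :
    vertexSum (DoubleSpider s L R) f u = wsum s L R w u := by
  rw [vertexSum_gen _ f u
    ((Finset.univ.filter fun e => u = lo s L R e ∨ u = hi s L R e).image (ep s L R))]
  · unfold wsum
    rw [Finset.sum_image (fun x _ y _ h => ep_inj s L R h), Finset.sum_filter,
      Fintype.sum_sigma]
    simp only [hf]
  · intro z
    simp only [SimpleGraph.incidenceSet, edgeSet_eq, Set.mem_setOf_eq,
      Set.mem_range, Finset.mem_image, Finset.mem_filter, Finset.mem_univ, true_and]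
    constructor
    · rintro ⟨e, h, rfl⟩
      exact ⟨⟨e, rfl⟩, by simpa [ep] using h⟩
    · rintro ⟨⟨e, rfl⟩, h⟩
      exact ⟨e, by simpa [ep] using h, rfl⟩

theorem degree_eq (s : ℕ) (L R : List ℕ) (u : DSVert s L R) :
    (DoubleSpider s L R).degree u = wsum s L R (fun _ _ => 1) u := by
  rw [← vertexSum_eq s L R (fun _ _ => 1) (fun _ => 1) (fun _ => rfl)]
  simp [vertexSum]

theorem sum_one (n k : ℕ) (w : ℕ → ℕ) :
    ∑ j : Fin n, (if k = j.1 then w j else 0) = if k < n then w k else 0 := by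
  rw [Fin.sum_univ_eq_sum_range (fun j => if k = j then w j else 0) n]
  simp

theorem sum_two (n k : ℕ) (w : ℕ → ℕ) :
    ∑ j : Fin n, (if k + 1 = j.1 ∨ k = j.1 then w j else 0) =
      (if k < n then w k else 0) + if k + 1 < n then w (k + 1) else 0 := by
  rw [← sum_one n k, ← sum_one n (k + 1), ← Finset.sum_add_distrib]
  apply Finset.sum_congr rfl
  intro j _
  split_ifs <;> omega

theorem wsum_split (s : ℕ) (L R : List ℕ) (w : Piece L.length R.length → ℕ → ℕ)
    (u : DSVert s L R) : wsum s L R w u =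
    (∑ j : Fin s, if u = lo s L R ⟨none, j⟩ ∨ u = hi s L R ⟨none, j⟩ then w none j else 0) +
    ((∑ i, ∑ j : Fin (L.get i), if u = lo s L R ⟨some (Sum.inl i), j⟩ ∨
        u = hi s L R ⟨some (Sum.inl i), j⟩ then w (some (Sum.inl i)) j else 0) +
     (∑ i, ∑ j : Fin (R.get i), if u = lo s L R ⟨some (Sum.inr i), j⟩ ∨
        u = hi s L R ⟨some (Sum.inr i), j⟩ then w (some (Sum.inr i)) j else 0)) := by
  unfold wsum
  rw [Fintype.sum_option, Fintype.sum_sum_type]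
  rfl

theorem wsum_core (s : ℕ) (L R : List ℕ) (hL : ∀ i, 1 ≤ L.get i) (hR : ∀ i, 1 ≤ R.get i)
    (w : Piece L.length R.length → ℕ → ℕ) (c : Fin (s + 1)) :
    wsum s L R w (Sum.inl c) =
    ((if c.1 < s then w none c.1 else 0) + (if 0 < c.1 then w none (c.1 - 1) else 0)) +
    ((if c.1 = 0 then ∑ i, w (some (Sum.inl i)) 0 else 0) +
     (if c.1 = s then ∑ i, w (some (Sum.inr i)) 0 else 0)) := by
  rw [wsum_split]
  congr 1
  · have h1 : ∀ j : Fin s, ((Sum.inl c : DSVert s L R) = lo s L R ⟨none, j⟩ ∨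
        Sum.inl c = hi s L R ⟨none, j⟩) ↔ (c.1 = j.1 ∨ c.1 = j.1 + 1) := by
      intro j
      simp only [lo, hi, Sum.inl.injEq, Fin.ext_iff]
      rfl
    simp only [h1]
    by_cases hc : c.1 = 0
    · have : ∀ j : Fin s, (c.1 = j.1 ∨ c.1 = j.1 + 1) ↔ c.1 = j.1 := by intro j; omega
      simp only [this, sum_one]
      simp [hc]
    · obtain ⟨k, hk⟩ : ∃ k, c.1 = k + 1 := ⟨c.1 - 1, by omega⟩
      have : ∀ j : Fin s, (c.1 = j.1 ∨ c.1 = j.1 + 1) ↔ (k + 1 = j.1 ∨ k = j.1) := by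
        intro j; omega
      simp only [this]
      rw [sum_two, if_pos (show k < s by omega), hk]
      simp [add_comm]
  · congr 1
    · have h1 : ∀ i, ∀ j : Fin (L.get i), ((Sum.inl c : DSVert s L R) =
          lo s L R ⟨some (Sum.inl i), j⟩ ∨
          Sum.inl c = hi s L R ⟨some (Sum.inl i), j⟩) ↔ (c.1 = 0 ∧ 0 = j.1) := by
        intro i j
        simp only [lo, hi]
        split_ifs with h
        · simp only [Sum.inl.injEq, Fin.ext_iff, reduceCtorEq, or_false, h, and_true]
          rfl
        · simp; omega
      simp only [h1]
      by_cases hc : c.1 = 0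
      · simp only [hc, true_and, if_true]
        exact Finset.sum_congr rfl fun i _ => by
          rw [sum_one, if_pos (show 0 < _ from hL i)]
      · simp [hc]
    · have h1 : ∀ i, ∀ j : Fin (R.get i), ((Sum.inl c : DSVert s L R) =
          lo s L R ⟨some (Sum.inr i), j⟩ ∨
          Sum.inl c = hi s L R ⟨some (Sum.inr i), j⟩) ↔ (c.1 = s ∧ 0 = j.1) := by
        intro i j
        simp only [lo, hi]
        split_ifs with h
        · simp only [Sum.inl.injEq, Fin.ext_iff, reduceCtorEq, or_false, h, and_true]
          rfl
        · simp; omega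
      simp only [h1]
      by_cases hc : c.1 = s
      · simp only [hc, true_and, if_true]
        exact Finset.sum_congr rfl fun i _ => by
          rw [sum_one, if_pos (show 0 < _ from hR i)]
      · simp [hc]

theorem wsum_left (s : ℕ) (L R : List ℕ)
    (w : Piece L.length R.length → ℕ → ℕ) (i : Fin L.length) (k : Fin (L.get i)) :
    wsum s L R w (Sum.inr (Sum.inl ⟨i, k⟩)) =
    w (some (Sum.inl i)) k.1 + if k.1 + 1 < L.get i then w (some (Sum.inl i)) (k.1 + 1) else 0 := by
  rw [wsum_split]
  have h0 : ∀ j : Fin s, ¬ ((Sum.inr (Sum.inl ⟨i, k⟩) : DSVert s L R) = lo s L R ⟨none, j⟩ ∨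
        Sum.inr (Sum.inl ⟨i, k⟩) = hi s L R ⟨none, j⟩) := by
    intro j; simp [lo, hi]
  have h2 : ∀ i', ∀ j : Fin (R.get i'), ¬ ((Sum.inr (Sum.inl ⟨i, k⟩) : DSVert s L R) =
      lo s L R ⟨some (Sum.inr i'), j⟩ ∨
      Sum.inr (Sum.inl ⟨i, k⟩) = hi s L R ⟨some (Sum.inr i'), j⟩) := by
    intro i' j; simp only [lo, hi]; split_ifs <;> simp
  have h1 : ∀ j : Fin (L.get i), ((Sum.inr (Sum.inl ⟨i, k⟩) : DSVert s L R) =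
      lo s L R ⟨some (Sum.inl i), j⟩ ∨
      Sum.inr (Sum.inl ⟨i, k⟩) = hi s L R ⟨some (Sum.inl i), j⟩) ↔
        (k.1 + 1 = j.1 ∨ k.1 = j.1) := by
    intro j
    simp only [lo, hi]
    split_ifs with h
    · simp [Fin.ext_iff]; omega
    · simp [Fin.ext_iff]; omega
  have h3 : ∀ i', i' ≠ i → ∀ j : Fin (L.get i'), ¬ ((Sum.inr (Sum.inl ⟨i, k⟩) : DSVert s L R) =
      lo s L R ⟨some (Sum.inl i'), j⟩ ∨
      Sum.inr (Sum.inl ⟨i, k⟩) = hi s L R ⟨some (Sum.inl i'), j⟩) := by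
    intro i' hi' j
    simp only [lo, hi]
    split_ifs with h
    · simp [Ne.symm hi']
    · simp [Ne.symm hi']
  rw [Finset.sum_eq_zero (fun j _ => if_neg (h0 j)),
    Finset.sum_eq_zero (s := (Finset.univ : Finset (Fin R.length)))
      (fun i' _ => Finset.sum_eq_zero (fun j _ => if_neg (h2 i' j))),
    Finset.sum_eq_single i (fun i' _ hi' => Finset.sum_eq_zero (fun j _ => if_neg (h3 i' hi' j)))
      (fun h => absurd (Finset.mem_univ i) h)]
  simp only [h1]
  rw [sum_two, if_pos k.2]
  omega

theorem wsum_right (s : ℕ) (L R : List ℕ)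
    (w : Piece L.length R.length → ℕ → ℕ) (i : Fin R.length) (k : Fin (R.get i)) :
    wsum s L R w (Sum.inr (Sum.inr ⟨i, k⟩)) =
    w (some (Sum.inr i)) k.1 + if k.1 + 1 < R.get i then w (some (Sum.inr i)) (k.1 + 1) else 0 := by
  rw [wsum_split]
  have h0 : ∀ j : Fin s, ¬ ((Sum.inr (Sum.inr ⟨i, k⟩) : DSVert s L R) = lo s L R ⟨none, j⟩ ∨
        Sum.inr (Sum.inr ⟨i, k⟩) = hi s L R ⟨none, j⟩) := by
    intro j; simp [lo, hi]
  have h2 : ∀ i', ∀ j : Fin (L.get i'), ¬ ((Sum.inr (Sum.inr ⟨i, k⟩) : DSVert s L R) =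
      lo s L R ⟨some (Sum.inl i'), j⟩ ∨
      Sum.inr (Sum.inr ⟨i, k⟩) = hi s L R ⟨some (Sum.inl i'), j⟩) := by
    intro i' j; simp only [lo, hi]; split_ifs <;> simp
  have h1 : ∀ j : Fin (R.get i), ((Sum.inr (Sum.inr ⟨i, k⟩) : DSVert s L R) =
      lo s L R ⟨some (Sum.inr i), j⟩ ∨
      Sum.inr (Sum.inr ⟨i, k⟩) = hi s L R ⟨some (Sum.inr i), j⟩) ↔
        (k.1 + 1 = j.1 ∨ k.1 = j.1) := by
    intro j
    simp only [lo, hi]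
    split_ifs with h
    · simp [Fin.ext_iff]; omega
    · simp [Fin.ext_iff]; omega
  have h3 : ∀ i', i' ≠ i → ∀ j : Fin (R.get i'), ¬ ((Sum.inr (Sum.inr ⟨i, k⟩) : DSVert s L R) =
      lo s L R ⟨some (Sum.inr i'), j⟩ ∨
      Sum.inr (Sum.inr ⟨i, k⟩) = hi s L R ⟨some (Sum.inr i'), j⟩) := by
    intro i' hi' j
    simp only [lo, hi]
    split_ifs with h
    · simp [Ne.symm hi']
    · simp [Ne.symm hi']
  rw [Finset.sum_eq_zero (fun j _ => if_neg (h0 j)),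
    Finset.sum_eq_zero (s := (Finset.univ : Finset (Fin L.length)))
      (fun i' _ => Finset.sum_eq_zero (fun j _ => if_neg (h2 i' j))),
    Finset.sum_eq_single i (fun i' _ hi' => Finset.sum_eq_zero (fun j _ => if_neg (h3 i' hi' j)))
      (fun h => absurd (Finset.mem_univ i) h)]
  simp only [h1]
  rw [sum_two, if_pos k.2]
  omega

/-- Classification of the vertices: the weighted sums at leaves, vertices of degree two and
the two branch vertices. -/
inductive Kind (s : ℕ) (L R : List ℕ) : DSVert s L R → Prop
  | leaf (u : DSVert s L R) (x : Fin L.length ⊕ Fin R.length)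
      (hpos : 1 ≤ len s L.get R.get (some x))
      (hu : ∀ h, u = hi s L R ⟨some x, ⟨len s L.get R.get (some x) - 1, h⟩⟩)
      (hw : ∀ w, wsum s L R w u = w (some x) (len s L.get R.get (some x) - 1)) : Kind s L R u
  | mid (u : DSVert s L R) (p : Piece L.length R.length) (j : ℕ)
      (hj : j + 1 < len s L.get R.get p)
      (hu : ∀ h, u = hi s L R ⟨p, ⟨j, h⟩⟩)
      (hw : ∀ w, wsum s L R w u = w p j + w p (j + 1)) : Kind s L R u
  | right (u : DSVert s L R) (hu : u = vR s L R) (hw : ∀ w, wsum s L R w u = vr s w) : Kind s L R u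
  | left (u : DSVert s L R) (hu : u = vL s L R) (hw : ∀ w, wsum s L R w u = vl w) : Kind s L R u

theorem wsum_vL (s : ℕ) (hs : 1 ≤ s) (L R : List ℕ) (hL : ∀ i, 1 ≤ L.get i)
    (hR : ∀ i, 1 ≤ R.get i) (w : Piece L.length R.length → ℕ → ℕ) :
    wsum s L R w (vL s L R) = vl w := by
  unfold vL vl
  rw [wsum_core s L R hL hR]
  have h1 : ((0 : Fin (s + 1)) : ℕ) = 0 := rfl
  rw [h1, if_pos (by omega), if_neg (by omega), if_pos rfl, if_neg (by omega)]
  omega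

theorem wsum_vR (s : ℕ) (hs : 1 ≤ s) (L R : List ℕ) (hL : ∀ i, 1 ≤ L.get i)
    (hR : ∀ i, 1 ≤ R.get i) (w : Piece L.length R.length → ℕ → ℕ) :
    wsum s L R w (vR s L R) = vr s w := by
  unfold vR vr
  rw [wsum_core s L R hL hR]
  rw [Fin.val_last, if_neg (by omega), if_pos (by omega), if_neg (by omega), if_pos rfl]
  omega

theorem kind (s : ℕ) (hs : 1 ≤ s) (L R : List ℕ) (hL : ∀ i, 1 ≤ L.get i)
    (hR : ∀ i, 1 ≤ R.get i) (u : DSVert s L R) : Kind s L R u := by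
  rcases u with c | ⟨i, k⟩ | ⟨i, k⟩
  · by_cases h0 : c.1 = 0
    · obtain rfl : c = 0 := Fin.ext h0
      exact Kind.left _ rfl (wsum_vL s hs L R hL hR)
    by_cases h1 : c.1 = s
    · obtain rfl : c = Fin.last s := Fin.ext h1
      exact Kind.right _ rfl (wsum_vR s hs L R hL hR)
    have h2 := c.2
    refine Kind.mid _ none (c.1 - 1) (by simp only [len]; omega) ?_ ?_
    · intro h
      simp only [hi]; congr 1; ext
      show c.1 = c.1 - 1 + 1
      omega
    · intro w
      rw [wsum_core s L R hL hR, if_pos (by omega), if_pos (by omega), if_neg h0, if_neg h1,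
        Nat.sub_add_cancel (by omega)]
      omega
  · have h2 := k.2
    by_cases hk : k.1 + 1 < L.get i
    · refine Kind.mid _ (some (Sum.inl i)) k.1 hk (fun h => rfl) ?_
      intro w
      rw [wsum_left, if_pos hk]
    · have hk' : L.get i - 1 = k.1 := by omega
      refine Kind.leaf _ (Sum.inl i) (hL i) ?_ ?_
      · intro h
        simp only [hi, len, hk']
      · intro w
        rw [wsum_left, if_neg hk]
        simp only [len, hk']; rfl
  · have h2 := k.2
    by_cases hk : k.1 + 1 < R.get i
    · refine Kind.mid _ (some (Sum.inr i)) k.1 hk (fun h => rfl) ?_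
      intro w
      rw [wsum_right, if_pos hk]
    · have hk' : R.get i - 1 = k.1 := by omega
      refine Kind.leaf _ (Sum.inr i) (hR i) ?_ ?_
      · intro h
        simp only [hi, len, hk']
      · intro w
        rw [wsum_right, if_neg hk]
        simp only [len, hk']; rfl

end DSA

/-- Let `DS(L, Pᶜᵒʳᵉ, R)` be a double spider with
`deg(v_l) > deg(v_r) ≥ 3` such that every leg in `R` has odd length and `R` contains at
least one leg of odd length at least 3.  Then `DS(L, Pᶜᵒʳᵉ, R)` is strongly antimagic. -/
theorem doubleSpider_right_odd_isStronglyAntimagic (s : ℕ) (hs : 1 ≤ s) (L R : List ℕ)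
    (hL : ∀ ℓ ∈ L, 1 ≤ ℓ) (hR : ∀ ℓ ∈ R, 1 ≤ ℓ)
    (hlr : (DoubleSpider s L R).degree (vR s L R) < (DoubleSpider s L R).degree (vL s L R))
    (hr : 3 ≤ (DoubleSpider s L R).degree (vR s L R))
    (hodd : ∀ ℓ ∈ R, Odd ℓ) (hlong : ∃ ℓ ∈ R, Odd ℓ ∧ 3 ≤ ℓ) :
    IsStronglyAntimagic (DoubleSpider s L R) := by
  have hL' : ∀ i, 1 ≤ L.get i := fun i => hL _ (L.get_mem i)
  have hR' : ∀ i, 1 ≤ R.get i := fun i => hR _ (R.get_mem i)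
  have dl : (DoubleSpider s L R).degree (vL s L R) = L.length + 1 := by
    rw [DSA.degree_eq, DSA.wsum_vL s hs L R hL' hR']
    simp [DSA.vl, add_comm]
  have dr : (DoubleSpider s L R).degree (vR s L R) = R.length + 1 := by
    rw [DSA.degree_eq, DSA.wsum_vR s hs L R hL' hR']
    simp [DSA.vr, add_comm]
  have h3 : ∃ i, 3 ≤ R.get i := by
    obtain ⟨l, hl, -, h⟩ := hlong
    obtain ⟨i, rfl⟩ := List.get_of_mem hl
    exact ⟨i, h⟩
  obtain ⟨lab, hg⟩ := DSA.exists_good s L.length R.length hs (by omega) (by omega) L.get R.get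
    hL' (fun i => Nat.odd_iff.mp (hodd _ (R.get_mem i))) h3
  obtain ⟨i3, h3⟩ := h3
  have leafr : ∀ x, lab (some x) (DSA.len s L.get R.get (some x) - 1) < DSA.vr s lab := by
    intro x
    have hq : 0 + 1 < DSA.len s L.get R.get (some (Sum.inr i3)) := by
      simp only [DSA.len]; omega
    exact (hg.leaf x _ 0 hq).trans (hg.midr _ 0 hq)
  let f : Sym2 (DSVert s L R) → ℕ :=
    Function.extend (DSA.ep s L R) (fun e => lab e.1 e.2) (fun _ => 0)
  have hf : ∀ e, f (DSA.ep s L R e) = lab e.1 e.2 :=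
    fun e => (DSA.ep_inj s L R).extend_apply _ _ e
  have hrl := hg.rl
  refine ⟨f, ?_, ?_, ?_⟩
  · have hmaps : Set.MapsTo f (DoubleSpider s L R).edgeSet
        (Set.Icc 1 (DoubleSpider s L R).edgeFinset.card) := by
      rw [DSA.edgeSet_eq, DSA.card_edges]
      rintro _ ⟨e, rfl⟩
      rw [hf]
      exact hg.range e.1 e.2 e.2.2
    have hinj : Set.InjOn f (DoubleSpider s L R).edgeSet := by
      rw [DSA.edgeSet_eq]
      rintro _ ⟨⟨p, j⟩, rfl⟩ _ ⟨⟨p', j'⟩, rfl⟩ h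
      rw [hf, hf] at h
      obtain ⟨h1, h2⟩ := hg.inj _ _ _ _ j.2 j'.2 h
      subst h1
      rw [Fin.ext h2]
    refine ⟨hmaps, hinj, ?_⟩
    have hm : Set.MapsTo f ((DoubleSpider s L R).edgeFinset : Set (Sym2 (DSVert s L R)))
        (Finset.Icc 1 (DoubleSpider s L R).edgeFinset.card : Finset ℕ) := by
      simpa using hmaps
    have hi' : Set.InjOn f ((DoubleSpider s L R).edgeFinset : Set (Sym2 (DSVert s L R))) := by
      simpa using hinj
    have := Finset.surjOn_of_injOn_of_card_le f hm hi' (by simp)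
    simpa using this
  · intro u v huv
    rw [DSA.vertexSum_eq s L R lab f hf, DSA.vertexSum_eq s L R lab f hf] at huv
    rcases DSA.kind s hs L R hL' hR' u with ⟨x, hp, hu, hw⟩ | ⟨p, j, hj, hu, hw⟩ | ⟨hu, hw⟩ | ⟨hu, hw⟩ <;>
    rcases DSA.kind s hs L R hL' hR' v with ⟨x', hp', hu', hw'⟩ | ⟨p', j', hj', hu', hw'⟩ | ⟨hu', hw'⟩ | ⟨hu', hw'⟩ <;>
    rw [hw, hw'] at huv
    · obtain ⟨h1, -⟩ := hg.inj _ _ _ _ (by omega) (by omega) huv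
      obtain rfl : x = x' := Option.some.inj h1
      rw [hu (by omega), hu' (by omega)]
    · have := hg.leaf x _ _ hj'; omega
    · have := leafr x; omega
    · have := leafr x; omega
    · have := hg.leaf x' _ _ hj; omega
    · obtain ⟨h1, h2⟩ := hg.midinj _ _ _ _ hj hj' huv
      subst h1 h2
      rw [hu (by omega), hu' (by omega)]
    · have := hg.midr _ _ hj; omega
    · have := hg.midr _ _ hj; omega
    · have := leafr x'; omega
    · have := hg.midr _ _ hj'; omega
    · rw [hu, hu']
    · omega
    · have := leafr x'; omega
    · have := hg.midr _ _ hj'; omega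
    · omega
    · rw [hu, hu']
  · intro u v huv
    rw [DSA.vertexSum_eq s L R lab f hf, DSA.vertexSum_eq s L R lab f hf]
    rcases DSA.kind s hs L R hL' hR' u with ⟨x, hp, hu, hw⟩ | ⟨p, j, hj, hu, hw⟩ | ⟨hu, hw⟩ | ⟨hu, hw⟩ <;>
    rcases DSA.kind s hs L R hL' hR' v with ⟨x', hp', hu', hw'⟩ | ⟨p', j', hj', hu', hw'⟩ | ⟨hu', hw'⟩ | ⟨hu', hw'⟩ <;>
    (have du := DSA.degree_eq s L R u
     have dv := DSA.degree_eq s L R v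
     rw [hw] at du ⊢
     rw [hw'] at dv ⊢)
    · omega
    · exact hg.leaf x _ _ hj'
    · exact leafr x
    · exact (leafr x).trans hrl
    · omega
    · omega
    · exact hg.midr _ _ hj
    · exact (hg.midr _ _ hj).trans hrl
    · rw [hu, dr] at huv; omega
    · rw [hu, dr] at huv; omega
    · rw [hu, hu'] at huv; omega
    · exact hrl
    · rw [hu, dl] at huv; omega
    · rw [hu, dl] at huv; omega
    · rw [hu, hu'] at huv; omega
    · rw [hu, hu'] at huv; omega

end
end

section
/- Let DS(L, P^core, R) be a double spider with deg(v_l) > deg(v_r) ≥ 3 such that R contains at least one path of even length. Then DS(L, P^core, R) is strongly antimagic. -/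
open Classical

noncomputable section

lemma tree_aux {V : Type*} [Fintype V] (rel : V → V → Prop) (root : V) (par : V → V)
    (hrel : ∀ x y, rel x y ↔ y ≠ root ∧ x = par y) (dep : V → ℕ)
    (hdep : ∀ y, y ≠ root → dep (par y) < dep y) (h : V → ℕ) (hinj : Function.Injective h)
    (hlt : ∀ v, h v < Fintype.card V) (h0 : h root = 0) :
    ∃ f : Sym2 V → ℕ,
      Set.BijOn f (SimpleGraph.fromRel rel).edgeSet
        (Set.Icc 1 (SimpleGraph.fromRel rel).edgeFinset.card) ∧
      ∀ u, vertexSum (SimpleGraph.fromRel rel) f u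
        = h u + ∑ w ∈ Finset.univ.filter (fun w => rel u w), h w := by
  set G := SimpleGraph.fromRel rel with hG
  set ed : V → Sym2 V := fun y => s(par y, y) with hed
  have hedinj : ∀ y z, y ≠ root → z ≠ root → ed y = ed z → y = z := by
    intro y z hy hz hyz
    simp only [hed, Sym2.eq_iff] at hyz
    rcases hyz with ⟨_, h2⟩ | ⟨h1, h2⟩
    · exact h2
    · have a1 := hdep y hy
      have a2 := hdep z hz
      rw [h1] at a1; rw [← h2] at a2; omega
  have hadj : ∀ x y, G.Adj x y ↔ (y ≠ root ∧ x = par y) ∨ (x ≠ root ∧ y = par x) := by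
    intro x y
    rw [hG, SimpleGraph.fromRel_adj, hrel, hrel]
    constructor
    · rintro ⟨_, h1⟩; exact h1
    · intro h1
      refine ⟨?_, h1⟩
      rintro rfl
      rcases h1 with ⟨h1, h2⟩ | ⟨h1, h2⟩ <;>
      · have := hdep x h1
        rw [← h2] at this; omega
  have hedge : G.edgeFinset = (Finset.univ.filter (fun y => y ≠ root)).image ed := by
    ext e
    induction e using Sym2.ind with
    | _ x y =>
      simp only [SimpleGraph.mem_edgeFinset, SimpleGraph.mem_edgeSet, hadj, Finset.mem_image,
        Finset.mem_filter, Finset.mem_univ, true_and, hed, Sym2.eq_iff]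
      constructor
      · rintro (⟨h1, h2⟩ | ⟨h1, h2⟩)
        · exact ⟨y, h1, Or.inl ⟨h2.symm, rfl⟩⟩
        · exact ⟨x, h1, Or.inr ⟨h2.symm, rfl⟩⟩
      · rintro ⟨z, hz, ⟨h1, h2⟩ | ⟨h1, h2⟩⟩
        · subst h2; exact Or.inl ⟨hz, h1.symm⟩
        · subst h2; exact Or.inr ⟨hz, h1.symm⟩
  have hinjOn : Set.InjOn ed ((Finset.univ.filter (fun y => y ≠ root) : Finset V) : Set V) := by
    intro y hy z hz hyz
    simp at hy hz
    exact hedinj y z hy hz hyz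
  have hcard : G.edgeFinset.card = Fintype.card V - 1 := by
    rw [hedge, Finset.card_image_of_injOn hinjOn, Finset.filter_ne', Finset.card_erase_of_mem
      (Finset.mem_univ _), Finset.card_univ]
  have hVpos : 0 < Fintype.card V := Fintype.card_pos_iff.2 ⟨root⟩
  obtain ⟨f, hf⟩ : ∃ f : Sym2 V → ℕ, ∀ y, y ≠ root → f (ed y) = h y := by
    refine ⟨fun e => if he : ∃ y, y ≠ root ∧ ed y = e then h he.choose else 0, ?_⟩
    intro y hy
    have he : ∃ z, z ≠ root ∧ ed z = ed y := ⟨y, hy, rfl⟩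
    simp only [he, dif_pos]
    congr 1
    exact hedinj _ _ he.choose_spec.1 hy he.choose_spec.2
  have hpos : ∀ y, y ≠ root → 0 < h y := by
    intro y hy
    rcases Nat.eq_zero_or_pos (h y) with h1 | h1
    · exact absurd (hinj (h1.trans h0.symm)) hy
    · exact h1
  refine ⟨f, ?_, ?_⟩
  · have hmaps : Set.MapsTo f G.edgeSet (Set.Icc 1 G.edgeFinset.card) := by
      intro e he
      rw [← SimpleGraph.mem_edgeFinset, hedge] at he
      simp only [Finset.mem_image, Finset.mem_filter, Finset.mem_univ, true_and] at he
      obtain ⟨y, hy, rfl⟩ := he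
      rw [hf y hy, hcard]
      have := hpos y hy
      have := hlt y
      exact ⟨by omega, by omega⟩
    have hinjf : Set.InjOn f G.edgeSet := by
      intro e he e' he' hee
      rw [← SimpleGraph.mem_edgeFinset, hedge] at he he'
      simp only [Finset.mem_image, Finset.mem_filter, Finset.mem_univ, true_and] at he he'
      obtain ⟨y, hy, rfl⟩ := he
      obtain ⟨z, hz, rfl⟩ := he'
      rw [hf y hy, hf z hz] at hee
      rw [hinj hee]
    refine ⟨hmaps, hinjf, ?_⟩
    have hs := Finset.surjOn_of_injOn_of_card_le (s := G.edgeFinset)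
      (t := Finset.Icc 1 G.edgeFinset.card) f
      (by intro e he; have := hmaps (SimpleGraph.mem_edgeFinset.1 he); simpa using this)
      (by intro e he e' he' hee
          exact hinjf (SimpleGraph.mem_edgeFinset.1 he) (SimpleGraph.mem_edgeFinset.1 he') hee)
      (by simp)
    intro n hn
    obtain ⟨e, he, h2⟩ := hs (show n ∈ ((Finset.Icc 1 G.edgeFinset.card : Finset ℕ) : Set ℕ) by
      simpa using hn)
    exact ⟨e, SimpleGraph.mem_edgeFinset.1 he, h2⟩
  · intro u
    have hinc : G.incidenceFinset u
        = (Finset.univ.filter (fun y => y ≠ root ∧ (y = u ∨ par y = u))).image ed := by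
      ext e
      rw [SimpleGraph.mem_incidenceFinset, SimpleGraph.incidenceSet]
      simp only [Set.mem_ofPred_eq]
      rw [← SimpleGraph.mem_edgeFinset, hedge]
      simp only [Finset.mem_image, Finset.mem_filter, Finset.mem_univ, true_and]
      constructor
      · rintro ⟨⟨y, hy, rfl⟩, hu⟩
        simp only [hed, Sym2.mem_iff] at hu
        exact ⟨y, ⟨hy, by tauto⟩, rfl⟩
      · rintro ⟨y, ⟨hy, hu⟩, rfl⟩
        refine ⟨⟨y, hy, rfl⟩, ?_⟩
        simp only [hed, Sym2.mem_iff]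
        tauto
    have hvs : vertexSum (SimpleGraph.fromRel rel) f u = ∑ e ∈
        (Finset.univ.filter (fun y => y ≠ root ∧ (y = u ∨ par y = u))).image ed, f e := by
      unfold vertexSum
      refine Finset.sum_congr ?_ (fun _ _ => rfl)
      rw [← hinc]
      ext e
      simp only [SimpleGraph.mem_incidenceFinset, hG]
    rw [hvs, Finset.sum_image (by
      intro y hy z hz hyz
      simp at hy hz
      exact hedinj y z hy.1 hz.1 hyz)]
    rw [Finset.sum_congr rfl (g := h) (by
      intro y hy
      simp at hy
      exact hf y hy.1)]
    have hsplit : Finset.univ.filter (fun y => y ≠ root ∧ (y = u ∨ par y = u))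
        = (Finset.univ.filter (fun y => y ≠ root ∧ y = u)) ∪
          Finset.univ.filter (fun w => rel u w) := by
      ext y
      simp only [Finset.mem_filter, Finset.mem_univ, true_and, Finset.mem_union, hrel]
      constructor
      · rintro ⟨h1, h2 | h2⟩
        · exact Or.inl ⟨h1, h2⟩
        · exact Or.inr ⟨h1, h2.symm⟩
      · rintro (⟨h1, h2⟩ | ⟨h1, h2⟩)
        · exact ⟨h1, Or.inl h2⟩
        · exact ⟨h1, Or.inr h2.symm⟩
    rw [hsplit, Finset.sum_union]
    · congr 1
      by_cases hu : u = root
      · rw [Finset.sum_eq_zero, hu, h0]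
        intro y hy
        simp at hy
        exact absurd (hy.2.trans hu) hy.1
      · have : Finset.univ.filter (fun y => y ≠ root ∧ y = u) = {u} := by
          ext y
          simp
          rintro rfl; exact hu
        rw [this, Finset.sum_singleton]
    · rw [Finset.disjoint_left]
      intro y hy hy'
      simp [hrel] at hy hy'
      have := hdep y hy.1
      rw [← hy'.2, hy.2] at this
      omega

lemma tree_degree {V : Type*} [Fintype V] (rel : V → V → Prop) (root : V) (par : V → V)
    (hrel : ∀ x y, rel x y ↔ y ≠ root ∧ x = par y) (dep : V → ℕ)
    (hdep : ∀ y, y ≠ root → dep (par y) < dep y) (u : V) :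
    (SimpleGraph.fromRel rel).degree u
        = (if u = root then 0 else 1) + ∑ w ∈ Finset.univ.filter (fun w => rel u w), 1 := by
  have hnb : (SimpleGraph.fromRel rel).neighborFinset u
      = (Finset.univ.filter (fun w => u ≠ root ∧ w = par u)) ∪
        Finset.univ.filter (fun w => rel u w) := by
    ext y
    simp only [SimpleGraph.mem_neighborFinset, SimpleGraph.fromRel_adj, Finset.mem_union,
      Finset.mem_filter, Finset.mem_univ, true_and, hrel]
    constructor
    · tauto
    · intro h1
      refine ⟨?_, by tauto⟩
      rintro rfl
      rcases h1 with ⟨h1, h2⟩ | ⟨h1, h2⟩ <;>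
      · have := hdep u h1
        rw [← h2] at this; omega
  rw [← SimpleGraph.card_neighborFinset_eq_degree, hnb, Finset.card_union_of_disjoint,
    Finset.sum_const, smul_eq_mul, mul_one]
  · congr 1
    by_cases hu : u = root
    · simp [hu]
    · simp only [hu, if_false, ne_eq, not_false_eq_true, true_and]
      rw [Finset.card_eq_one]
      exact ⟨par u, by ext y; simp⟩
  · rw [Finset.disjoint_left]
    intro y hy hy'
    simp [hrel] at hy hy'
    have a1 := hdep y hy'.1
    have a2 := hdep u hy.1
    rw [← hy'.2] at a1
    rw [← hy.2] at a2
    omega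

/-- Non-dependent codes for the vertices of a double spider. -/
inductive DE : Type
  | c (j : ℕ) : DE
  | l (i j : ℕ) : DE
  | r (i j : ℕ) : DE

/-- Numerical data of a double spider with the auxiliary matching. -/
structure DD where
  s : ℕ
  a : ℕ
  b : ℕ
  La : ℕ → ℕ
  Rb : ℕ → ℕ
  ψ : ℕ → ℕ
  φ : ℕ → ℕ
  r0 : ℕ
  l2 : ℕ

namespace DD

def valid (D : DD) : DE → Prop
  | .c j => j ≤ D.s
  | .l i j => i < D.a ∧ j < D.La i
  | .r i j => i < D.b ∧ j < D.Rb i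

def Om (D : DD) : Finset DE :=
  (Finset.range (D.s + 1)).image DE.c ∪
    ((Finset.range D.a).biUnion (fun i => (Finset.range (D.La i)).image (DE.l i)) ∪
     (Finset.range D.b).biUnion (fun i => (Finset.range (D.Rb i)).image (DE.r i)))

lemma mem_Om (D : DD) (e : DE) : e ∈ D.Om ↔ D.valid e := by
  cases e <;> simp [Om, valid]

def nx : DE → DE
  | .c j => .c (j + 1)
  | .l i j => .l i (j + 1)
  | .r i j => .r i (j + 1)

lemma nx_inj : Function.Injective nx := by
  intro x y h
  cases x <;> cases y <;> simp_all [nx]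

def gR (D : DD) (i : ℕ) : ℕ :=
  if i = D.r0 then 6 else if D.Rb i % 2 = 1 then 4 else if D.La (D.ψ i) ≠ 1 then 3
  else if D.Rb i = 2 then 8 else 0

def isA (D : DD) (i : ℕ) : Prop := D.φ i < D.b ∧ D.ψ (D.φ i) = i ∧ D.gR (D.φ i) = 8

def gL (D : DD) (i : ℕ) : ℕ :=
  if D.La i = 1 then (if D.isA i then 10 else if i = D.ψ D.r0 ∨ i = D.l2 then 11 else 9)
  else if D.La i % 2 = 1 then 1 else 5

def key (D : DD) : DE → ℕ × ℕ × ℕ × ℕ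
  | .c j => if j = 0 then (0, 0, 0, 0) else if D.s = 1 then (7, 7, 0, 0)
    else if D.s % 2 = 0 then
      (if j = 1 then (8, 2, 0, j) else if j % 2 = 0 then (7, 2, 0, j) else (2, 2, 0, j))
    else if j % 2 = 1 then (7, 2, 0, D.s - j) else (2, 2, 0, D.s - j)
  | .l i j => if D.gL i = 10 then (1, 0, D.b - D.φ i, 0)
    else if D.gL i = 9 ∨ D.gL i = 11 then (5, D.gL i, i, D.La i - 1 - j)
    else if D.gL i = 1 ∧ j = 0 then (8, 1, i, D.La i - 1 - j)
    else if (D.La i - 1 - j) % 2 = 0 then (2, D.gL i, i, D.La i - 1 - j)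
    else (7, D.gL i, i, D.La i - 1 - j)
  | .r i j => if D.gR i = 8 ∧ j = 0 then (1, 0, D.b - i, 1)
    else if D.gR i = 8 then (6, 8, i, D.Rb i - 1 - j)
    else if D.gR i = 0 ∧ j = 0 then (4, 0, i, D.Rb i - 1 - j)
    else if D.gR i = 0 ∧ j = 1 then (8, 0, i, D.Rb i - 1 - j)
    else if D.Rb i = 1 then (3, D.gR i, i, D.Rb i - 1 - j)
    else if (D.Rb i - 1 - j) % 2 = 0 then (2, D.gR i, i, D.Rb i - 1 - j)
    else (7, D.gR i, i, D.Rb i - 1 - j)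

def kl (p q : ℕ × ℕ × ℕ × ℕ) : Prop :=
  p.1 < q.1 ∨ (p.1 = q.1 ∧ (p.2.1 < q.2.1 ∨ (p.2.1 = q.2.1 ∧
    (p.2.2.1 < q.2.2.1 ∨ (p.2.2.1 = q.2.2.1 ∧ p.2.2.2 < q.2.2.2)))))

def klt (D : DD) (u v : DE) : Prop := kl (D.key u) (D.key v)

def H (D : DD) (e : DE) : ℕ := (D.Om.filter (fun w => D.klt w e)).card

structure Good (D : DD) : Prop where
  hs : 1 ≤ D.s
  hb : 2 ≤ D.b
  hL : ∀ i < D.a, 1 ≤ D.La i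
  hR : ∀ i < D.b, 1 ≤ D.Rb i
  hr0 : D.r0 < D.b
  her0 : D.Rb D.r0 % 2 = 0
  hψ : ∀ r < D.b, D.ψ r < D.a
  hφ : ∀ r < D.b, D.φ (D.ψ r) = r
  hl2 : D.l2 < D.a
  hl2' : ∀ r < D.b, D.ψ r ≠ D.l2
  hI : (D.La (D.ψ D.r0) = 1 ∧ D.La D.l2 = 1 ∧
        ∀ i < D.a, D.La i ≠ 1 → ∃ r < D.b, r ≠ D.r0 ∧ D.Rb r % 2 = 0 ∧ D.ψ r = i) ∨
       (D.La (D.ψ D.r0) ≠ 1 ∧ (∀ r < D.b, r ≠ D.r0 → D.Rb r % 2 = 0 → D.La (D.ψ r) ≠ 1) ∧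
        (D.La (D.ψ D.r0) % 2 = 0 → ∀ i < D.a, D.La i = 1 ∨ D.La i % 2 = 0))

variable {D : DD}

lemma kl_trans {p q r : ℕ × ℕ × ℕ × ℕ} (h1 : kl p q) (h2 : kl q r) : kl p r := by
  unfold kl at *; omega

lemma kl_tri {p q : ℕ × ℕ × ℕ × ℕ} (h1 : ¬ kl p q) (h2 : ¬ kl q p) : p = q := by
  obtain ⟨p1, p2, p3, p4⟩ := p
  obtain ⟨q1, q2, q3, q4⟩ := q
  unfold kl at *
  simp only [Prod.mk.injEq] at *
  omega

lemma kl_le_lt {p q r : ℕ × ℕ × ℕ × ℕ} (h1 : ¬ kl q p) (h2 : kl q r) : kl p r := by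
  unfold kl at *; omega

lemma kl_lt_le {p q r : ℕ × ℕ × ℕ × ℕ} (h1 : kl p q) (h2 : ¬ kl r q) : kl p r := by
  unfold kl at *; omega

lemma kl_irr (p : ℕ × ℕ × ℕ × ℕ) : ¬ kl p p := by
  unfold kl; omega

/-- counting from below -/
lemma H_add_le {u v : DE} (huv : ¬ D.klt v u) (S : Finset DE)
    (hS : ∀ x ∈ S, D.valid x ∧ ¬ D.klt x u ∧ D.klt x v) : D.H u + S.card ≤ D.H v := by
  unfold H
  rw [← Finset.card_union_of_disjoint]
  · apply Finset.card_le_card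
    intro x hx
    simp only [Finset.mem_union, Finset.mem_filter, mem_Om] at hx ⊢
    rcases hx with hx | hx
    · exact ⟨hx.1, kl_lt_le hx.2 huv⟩
    · exact ⟨(hS x hx).1, (hS x hx).2.2⟩
  · rw [Finset.disjoint_left]
    intro x hx hx'
    simp only [Finset.mem_filter] at hx
    exact (hS x hx').2.1 hx.2

lemma card_le_H {v : DE} (S : Finset DE)
    (hS : ∀ x ∈ S, D.valid x ∧ D.klt x v) : S.card ≤ D.H v := by
  unfold H
  apply Finset.card_le_card
  intro x hx
  simp only [Finset.mem_filter, mem_Om]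
  exact hS x hx

lemma H_le_add {u v : DE} (S : Finset DE)
    (hS : ∀ x, D.valid x → ¬ D.klt x u → D.klt x v → x ∈ S) : D.H v ≤ D.H u + S.card := by
  unfold H
  refine le_trans (Finset.card_le_card ?_) (Finset.card_union_le _ _)
  intro x hx
  simp only [Finset.mem_union, Finset.mem_filter, mem_Om] at hx ⊢
  by_cases h : D.klt x u
  · exact Or.inl ⟨hx.1, h⟩
  · exact Or.inr (hS x hx.1 h hx.2)

lemma H_lt {u v : DE} (hu : D.valid u) (h : D.klt u v) : D.H u < D.H v := by
  have := H_add_le (D := D) (u := u) (v := v) (fun h' => kl_irr _ (kl_trans h h')) {u}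
    (by intro x hx; simp at hx; subst hx; exact ⟨hu, kl_irr _, h⟩)
  simpa using this

lemma H_le {u v : DE} (h : ¬ D.klt v u) : D.H u ≤ D.H v := by
  have := H_add_le (D := D) h ∅ (by simp)
  simpa using this

/-! key facts -/

lemma key_c (hs : 1 ≤ D.s) (j : ℕ) (hj : j ≤ D.s) :
    (j = 0 ∧ D.key (.c j) = (0, 0, 0, 0)) ∨
    (D.s = 1 ∧ j = 1 ∧ D.key (.c j) = (7, 7, 0, 0)) ∨
    (1 < D.s ∧ D.s % 2 = 0 ∧ j = 1 ∧ D.key (.c j) = (8, 2, 0, j)) ∨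
    (1 < D.s ∧ D.s % 2 = 0 ∧ 1 < j ∧ j % 2 = 0 ∧ D.key (.c j) = (7, 2, 0, j)) ∨
    (1 < D.s ∧ D.s % 2 = 0 ∧ 1 < j ∧ j % 2 = 1 ∧ D.key (.c j) = (2, 2, 0, j)) ∨
    (1 < D.s ∧ D.s % 2 = 1 ∧ 1 ≤ j ∧ j % 2 = 1 ∧ D.key (.c j) = (7, 2, 0, D.s - j)) ∨
    (1 < D.s ∧ D.s % 2 = 1 ∧ 1 ≤ j ∧ j % 2 = 0 ∧ D.key (.c j) = (2, 2, 0, D.s - j)) := by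
  unfold key
  dsimp only
  split_ifs <;> simp_all <;> omega

lemma gR_cases (D : DD) (i : ℕ) :
    (i = D.r0 ∧ D.gR i = 6) ∨ (i ≠ D.r0 ∧ D.Rb i % 2 = 1 ∧ D.gR i = 4) ∨
    (i ≠ D.r0 ∧ D.Rb i % 2 = 0 ∧ D.La (D.ψ i) ≠ 1 ∧ D.gR i = 3) ∨
    (i ≠ D.r0 ∧ D.Rb i % 2 = 0 ∧ D.La (D.ψ i) = 1 ∧ D.Rb i = 2 ∧ D.gR i = 8) ∨
    (i ≠ D.r0 ∧ D.Rb i % 2 = 0 ∧ D.La (D.ψ i) = 1 ∧ D.Rb i ≠ 2 ∧ D.gR i = 0) := by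
  unfold gR
  split_ifs <;> simp_all

lemma gL_cases (D : DD) (i : ℕ) :
    (D.La i = 1 ∧ D.isA i ∧ D.gL i = 10) ∨
    (D.La i = 1 ∧ ¬ D.isA i ∧ (i = D.ψ D.r0 ∨ i = D.l2) ∧ D.gL i = 11) ∨
    (D.La i = 1 ∧ ¬ D.isA i ∧ ¬ (i = D.ψ D.r0 ∨ i = D.l2) ∧ D.gL i = 9) ∨
    (D.La i ≠ 1 ∧ D.La i % 2 = 1 ∧ D.gL i = 1) ∨
    (D.La i ≠ 1 ∧ D.La i % 2 = 0 ∧ D.gL i = 5) := by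
  unfold gL
  split_ifs <;> simp_all

lemma key_l (i j : ℕ) (hj : j < D.La i) :
    (D.La i = 1 ∧ D.isA i ∧ j = 0 ∧ D.key (.l i j) = (1, 0, D.b - D.φ i, 0)) ∨
    (D.La i = 1 ∧ ¬ D.isA i ∧ (i = D.ψ D.r0 ∨ i = D.l2) ∧ j = 0 ∧
      D.key (.l i j) = (5, 11, i, 0)) ∨
    (D.La i = 1 ∧ ¬ D.isA i ∧ ¬ (i = D.ψ D.r0 ∨ i = D.l2) ∧ j = 0 ∧
      D.key (.l i j) = (5, 9, i, 0)) ∨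
    (D.La i ≠ 1 ∧ D.La i % 2 = 1 ∧ j = 0 ∧ D.key (.l i j) = (8, 1, i, D.La i - 1)) ∨
    (D.La i ≠ 1 ∧ D.La i % 2 = 1 ∧ j ≠ 0 ∧ j % 2 = 0 ∧
      D.key (.l i j) = (2, 1, i, D.La i - 1 - j)) ∨
    (D.La i ≠ 1 ∧ D.La i % 2 = 1 ∧ j % 2 = 1 ∧
      D.key (.l i j) = (7, 1, i, D.La i - 1 - j)) ∨
    (D.La i ≠ 1 ∧ D.La i % 2 = 0 ∧ j % 2 = 1 ∧
      D.key (.l i j) = (2, 5, i, D.La i - 1 - j)) ∨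
    (D.La i ≠ 1 ∧ D.La i % 2 = 0 ∧ j % 2 = 0 ∧
      D.key (.l i j) = (7, 5, i, D.La i - 1 - j)) := by
  unfold key
  dsimp only
  rcases gL_cases D i with h | h | h | h | h
  · obtain ⟨h1, h2, h3⟩ := h
    have : j = 0 := by omega
    simp [h1, h2, h3, this]
  · obtain ⟨h1, h2, h4, h3⟩ := h
    have : j = 0 := by omega
    simp [h1, h2, h3, h4, this]
  · obtain ⟨h1, h2, h4, h3⟩ := h
    have : j = 0 := by omega
    simp [h1, h2, h3, h4, this]
  · obtain ⟨h1, h2, h3⟩ := h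
    by_cases hj0 : j = 0
    · simp [h1, h2, h3, hj0]
    · have e1 : (D.La i - 1 - j) % 2 = 0 ↔ j % 2 = 0 := by omega
      rcases Nat.mod_two_eq_zero_or_one j with e2 | e2 <;> simp [h1, h2, h3, hj0, e1, e2]
  · obtain ⟨h1, h2, h3⟩ := h
    have e1 : (D.La i - 1 - j) % 2 = 0 ↔ j % 2 = 1 := by omega
    rcases Nat.mod_two_eq_zero_or_one j with e2 | e2 <;> simp [h1, h2, h3, e1, e2]

/-- `i` is a G-leg -/
def isG (D : DD) (i : ℕ) : Prop := i < D.b ∧ D.gR i = 8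
/-- `i` is a W-leg -/
def isW (D : DD) (i : ℕ) : Prop := i < D.b ∧ D.gR i = 0

lemma key_r (G : D.Good) (i j : ℕ) (hi : i < D.b) (hj : j < D.Rb i) :
    (D.isG i ∧ i ≠ D.r0 ∧ D.La (D.ψ i) = 1 ∧ D.Rb i = 2 ∧ j = 0 ∧
      D.key (.r i j) = (1, 0, D.b - i, 1)) ∨
    (D.isG i ∧ i ≠ D.r0 ∧ D.La (D.ψ i) = 1 ∧ D.Rb i = 2 ∧ j = 1 ∧
      D.key (.r i j) = (6, 8, i, 0)) ∨
    (D.isW i ∧ i ≠ D.r0 ∧ D.La (D.ψ i) = 1 ∧ D.Rb i % 2 = 0 ∧ 4 ≤ D.Rb i ∧ j = 0 ∧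
      D.key (.r i j) = (4, 0, i, D.Rb i - 1)) ∨
    (D.isW i ∧ i ≠ D.r0 ∧ D.La (D.ψ i) = 1 ∧ D.Rb i % 2 = 0 ∧ 4 ≤ D.Rb i ∧ j = 1 ∧
      D.key (.r i j) = (8, 0, i, D.Rb i - 2)) ∨
    (D.isW i ∧ i ≠ D.r0 ∧ D.La (D.ψ i) = 1 ∧ D.Rb i % 2 = 0 ∧ 4 ≤ D.Rb i ∧ 2 ≤ j ∧ j % 2 = 1 ∧
      D.key (.r i j) = (2, 0, i, D.Rb i - 1 - j)) ∨
    (D.isW i ∧ i ≠ D.r0 ∧ D.La (D.ψ i) = 1 ∧ D.Rb i % 2 = 0 ∧ 4 ≤ D.Rb i ∧ 2 ≤ j ∧ j % 2 = 0 ∧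
      D.key (.r i j) = (7, 0, i, D.Rb i - 1 - j)) ∨
    (i ≠ D.r0 ∧ D.Rb i = 1 ∧ j = 0 ∧ D.key (.r i j) = (3, 4, i, 0)) ∨
    (i ≠ D.r0 ∧ D.Rb i % 2 = 1 ∧ 3 ≤ D.Rb i ∧ j % 2 = 0 ∧
      D.key (.r i j) = (2, 4, i, D.Rb i - 1 - j)) ∨
    (i ≠ D.r0 ∧ D.Rb i % 2 = 1 ∧ 3 ≤ D.Rb i ∧ j % 2 = 1 ∧
      D.key (.r i j) = (7, 4, i, D.Rb i - 1 - j)) ∨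
    (i ≠ D.r0 ∧ D.Rb i % 2 = 0 ∧ D.La (D.ψ i) ≠ 1 ∧ j % 2 = 1 ∧
      D.key (.r i j) = (2, 3, i, D.Rb i - 1 - j)) ∨
    (i ≠ D.r0 ∧ D.Rb i % 2 = 0 ∧ D.La (D.ψ i) ≠ 1 ∧ j % 2 = 0 ∧
      D.key (.r i j) = (7, 3, i, D.Rb i - 1 - j)) ∨
    (i = D.r0 ∧ D.Rb i % 2 = 0 ∧ j % 2 = 1 ∧
      D.key (.r i j) = (2, 6, i, D.Rb i - 1 - j)) ∨
    (i = D.r0 ∧ D.Rb i % 2 = 0 ∧ j % 2 = 0 ∧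
      D.key (.r i j) = (7, 6, i, D.Rb i - 1 - j)) := by
  unfold isG isW key
  dsimp only
  rcases gR_cases D i with h | h | h | h | h
  · obtain ⟨h1, h3⟩ := h
    have h2 : D.Rb i % 2 = 0 := by rw [h1]; exact G.her0
    have h4 : D.Rb i ≠ 1 := by omega
    have e1 : (D.Rb i - 1 - j) % 2 = 0 ↔ j % 2 = 1 := by omega
    rcases Nat.mod_two_eq_zero_or_one j with e2 | e2 <;> simp [h2, h3, h4, e1, e2] <;> simp [h1]
  · obtain ⟨h1, h2, h3⟩ := h
    by_cases h4 : D.Rb i = 1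
    · have : j = 0 := by omega
      simp [h1, h3, h4, this]
    · have e1 : (D.Rb i - 1 - j) % 2 = 0 ↔ j % 2 = 0 := by omega
      have e3 : 3 ≤ D.Rb i := by omega
      rcases Nat.mod_two_eq_zero_or_one j with e2 | e2 <;> simp [h1, h2, h3, h4, e1, e2, e3]
  · obtain ⟨h1, h2, h4, h3⟩ := h
    have h5 : D.Rb i ≠ 1 := by omega
    have e1 : (D.Rb i - 1 - j) % 2 = 0 ↔ j % 2 = 1 := by omega
    rcases Nat.mod_two_eq_zero_or_one j with e2 | e2 <;> simp [h1, h2, h3, h4, h5, e1, e2]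
  · obtain ⟨h1, h2, h4, h5, h3⟩ := h
    have : j = 0 ∨ j = 1 := by omega
    rcases this with e2 | e2 <;> simp [h1, h3, h4, h5, e2, hi]
  · obtain ⟨h1, h2, h4, h5, h3⟩ := h
    have h6 : D.Rb i ≠ 1 := by omega
    have h7 : 4 ≤ D.Rb i := by omega
    by_cases j0 : j = 0
    · simp [h1, h2, h3, h4, h7, j0, hi]
    by_cases j1 : j = 1
    · simp [h1, h2, h3, h4, h7, j1, hi]; omega
    have h8 : 2 ≤ j := by omega
    have e1 : (D.Rb i - 1 - j) % 2 = 0 ↔ j % 2 = 1 := by omega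
    rcases Nat.mod_two_eq_zero_or_one j with e2 | e2 <;>
      simp [h1, h2, h3, h4, h6, h7, h8, e1, e2, j0, j1, hi]

end DD

namespace DD
variable {D : DD}

lemma kf_c (hs : 1 ≤ D.s) (j : ℕ) (hj : j ≤ D.s) :
    ∃ c g d t, D.key (.c j) = (c, g, d, t) ∧
    ((c = 0 ∧ j = 0) ∨ (2 ≤ c ∧ 1 ≤ j ∧ (g = 2 ∨ g = 7) ∧ (D.s % 2 = 0 ∧ t = j ∨
      D.s % 2 = 1 ∧ t = D.s - j))) := by
  rcases key_c hs j hj with h | h | h | h | h | h | h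
  · exact ⟨_, _, _, _, h.2, by omega⟩
  · exact ⟨_, _, _, _, h.2.2, by omega⟩
  · exact ⟨_, _, _, _, h.2.2.2, by omega⟩
  · exact ⟨_, _, _, _, h.2.2.2.2, by omega⟩
  · exact ⟨_, _, _, _, h.2.2.2.2, by omega⟩
  · exact ⟨_, _, _, _, h.2.2.2.2, by omega⟩
  · exact ⟨_, _, _, _, h.2.2.2.2, by omega⟩

lemma kf_l (i j : ℕ) (hj : j < D.La i) :
    ∃ c g d t, D.key (.l i j) = (c, g, d, t) ∧
    ((c = 1 ∧ g = 0 ∧ d = D.b - D.φ i ∧ t = 0 ∧ j = 0 ∧ D.isA i) ∨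
      (2 ≤ c ∧ (g = 1 ∨ g = 5 ∨ g = 9 ∨ g = 11) ∧ d = i ∧ t = D.La i - 1 - j)) := by
  rcases key_l i j hj with h | h | h | h | h | h | h | h
  · exact ⟨_, _, _, _, h.2.2.2, Or.inl ⟨rfl, rfl, rfl, rfl, h.2.2.1, h.2.1⟩⟩
  · exact ⟨_, _, _, _, h.2.2.2.2, by omega⟩
  · exact ⟨_, _, _, _, h.2.2.2.2, by omega⟩
  · exact ⟨_, _, _, _, h.2.2.2, by omega⟩
  · exact ⟨_, _, _, _, h.2.2.2.2, by omega⟩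
  · exact ⟨_, _, _, _, h.2.2.2, by omega⟩
  · exact ⟨_, _, _, _, h.2.2.2, by omega⟩
  · exact ⟨_, _, _, _, h.2.2.2, by omega⟩

lemma kf_r (G : D.Good) (i j : ℕ) (hi : i < D.b) (hj : j < D.Rb i) :
    ∃ c g d t, D.key (.r i j) = (c, g, d, t) ∧
    ((c = 1 ∧ g = 0 ∧ d = D.b - i ∧ t = 1 ∧ j = 0) ∨
      (2 ≤ c ∧ (g = 0 ∨ g = 3 ∨ g = 4 ∨ g = 6 ∨ g = 8) ∧ d = i ∧ t = D.Rb i - 1 - j)) := by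
  rcases key_r G i j hi hj with h | h | h | h | h | h | h | h | h | h | h | h | h
  · exact ⟨_, _, _, _, h.2.2.2.2.2, by omega⟩
  · exact ⟨_, _, _, _, h.2.2.2.2.2, by omega⟩
  · exact ⟨_, _, _, _, h.2.2.2.2.2.2, by omega⟩
  · exact ⟨_, _, _, _, h.2.2.2.2.2.2, by omega⟩
  · exact ⟨_, _, _, _, h.2.2.2.2.2.2.2, by omega⟩
  · exact ⟨_, _, _, _, h.2.2.2.2.2.2.2, by omega⟩
  · exact ⟨_, _, _, _, h.2.2.2, by omega⟩
  · exact ⟨_, _, _, _, h.2.2.2.2, by omega⟩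
  · exact ⟨_, _, _, _, h.2.2.2.2, by omega⟩
  · exact ⟨_, _, _, _, h.2.2.2.2, by omega⟩
  · exact ⟨_, _, _, _, h.2.2.2.2, by omega⟩
  · exact ⟨_, _, _, _, h.2.2.2, by omega⟩
  · exact ⟨_, _, _, _, h.2.2.2, by omega⟩

lemma key_inj (G : D.Good) {u v : DE} (hu : D.valid u) (hv : D.valid v)
    (h : D.key u = D.key v) : u = v := by
  rcases u with j | ⟨i, j⟩ | ⟨i, j⟩ <;> rcases v with j' | ⟨i', j'⟩ | ⟨i', j'⟩ <;>
    simp only [valid] at hu hv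
  · obtain ⟨c, g, d, t, h1, h2⟩ := kf_c G.hs j hu
    obtain ⟨c', g', d', t', h1', h2'⟩ := kf_c G.hs j' hv
    rw [h1, h1'] at h
    simp only [Prod.mk.injEq] at h
    have : j = j' := by omega
    rw [this]
  · obtain ⟨c, g, d, t, h1, h2⟩ := kf_c G.hs j hu
    obtain ⟨c', g', d', t', h1', h2'⟩ := kf_l i' j' hv.2
    rw [h1, h1'] at h
    simp only [Prod.mk.injEq] at h
    omega
  · obtain ⟨c, g, d, t, h1, h2⟩ := kf_c G.hs j hu
    obtain ⟨c', g', d', t', h1', h2'⟩ := kf_r G i' j' hv.1 hv.2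
    rw [h1, h1'] at h
    simp only [Prod.mk.injEq] at h
    omega
  · obtain ⟨c, g, d, t, h1, h2⟩ := kf_l i j hu.2
    obtain ⟨c', g', d', t', h1', h2'⟩ := kf_c G.hs j' hv
    rw [h1, h1'] at h
    simp only [Prod.mk.injEq] at h
    omega
  · obtain ⟨c, g, d, t, h1, h2⟩ := kf_l i j hu.2
    obtain ⟨c', g', d', t', h1', h2'⟩ := kf_l i' j' hv.2
    rw [h1, h1'] at h
    simp only [Prod.mk.injEq] at h
    have : i = i' := by
      rcases h2 with h2 | h2 <;> rcases h2' with h2' | h2' <;> try omega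
      have a1 := h2.2.2.2.2.2
      have a2 := h2'.2.2.2.2.2
      have a3 := a1.1
      have a4 := a2.1
      have : D.φ i = D.φ i' := by omega
      rw [← a1.2.1, ← a2.2.1, this]
    subst this
    have : j = j' := by omega
    rw [this]
  · obtain ⟨c, g, d, t, h1, h2⟩ := kf_l i j hu.2
    obtain ⟨c', g', d', t', h1', h2'⟩ := kf_r G i' j' hv.1 hv.2
    rw [h1, h1'] at h
    simp only [Prod.mk.injEq] at h
    omega
  · obtain ⟨c, g, d, t, h1, h2⟩ := kf_r G i j hu.1 hu.2
    obtain ⟨c', g', d', t', h1', h2'⟩ := kf_c G.hs j' hv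
    rw [h1, h1'] at h
    simp only [Prod.mk.injEq] at h
    omega
  · obtain ⟨c, g, d, t, h1, h2⟩ := kf_r G i j hu.1 hu.2
    obtain ⟨c', g', d', t', h1', h2'⟩ := kf_l i' j' hv.2
    rw [h1, h1'] at h
    simp only [Prod.mk.injEq] at h
    omega
  · obtain ⟨c, g, d, t, h1, h2⟩ := kf_r G i j hu.1 hu.2
    obtain ⟨c', g', d', t', h1', h2'⟩ := kf_r G i' j' hv.1 hv.2
    rw [h1, h1'] at h
    simp only [Prod.mk.injEq] at h
    have : i = i' := by omega
    subst this
    have : j = j' := by omega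
    rw [this]

lemma H_inj (G : D.Good) {u v : DE} (hu : D.valid u) (hv : D.valid v)
    (h : D.H u = D.H v) : u = v := by
  apply key_inj G hu hv
  apply kl_tri
  · intro h1; have := H_lt (D := D) hu h1; omega
  · intro h1; have := H_lt (D := D) hv h1; omega

lemma H_lt_card {u : DE} (hu : D.valid u) : D.H u < D.Om.card := by
  unfold H
  apply Finset.card_lt_card
  rw [Finset.ssubset_iff_of_subset (Finset.filter_subset _ _)]
  refine ⟨u, (mem_Om D u).2 hu, ?_⟩
  simp only [Finset.mem_filter, not_and]
  intro _
  exact kl_irr _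

lemma key_root : D.key (.c 0) = (0, 0, 0, 0) := by simp [key]

lemma H_root : D.H (.c 0) = 0 := by
  unfold H
  rw [Finset.card_eq_zero, Finset.filter_eq_empty_iff]
  intro x _ h
  unfold klt kl at h
  rw [key_root] at h
  simp at h

lemma klt_of {u v : DE} {c g i t c' g' i' t' : ℕ} (hu : D.key u = (c, g, i, t))
    (hv : D.key v = (c', g', i', t'))
    (h : c < c' ∨ c = c' ∧ (g < g' ∨ g = g' ∧ (i < i' ∨ i = i' ∧ t < t'))) : D.klt u v := by
  unfold klt kl
  rw [hu, hv]
  exact h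

lemma klt_iff {u v : DE} {c g i t c' g' i' t' : ℕ} (hu : D.key u = (c, g, i, t))
    (hv : D.key v = (c', g', i', t')) : D.klt u v ↔
    (c < c' ∨ c = c' ∧ (g < g' ∨ g = g' ∧ (i < i' ∨ i = i' ∧ t < t'))) := by
  unfold klt kl
  rw [hu, hv]

def inner (D : DD) (e : DE) : Prop := D.valid e ∧ D.valid (nx e) ∧ e ≠ .c 0

def S (D : DD) (e : DE) : ℕ := D.H e + D.H (nx e)

def T1 (D : DD) (e x y : DE) (g i t t' : ℕ) : Prop :=
  D.valid x ∧ D.valid y ∧ ((x = e ∧ y = nx e) ∨ (x = nx e ∧ y = e)) ∧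
  D.key x = (2, g, i, t) ∧ D.key y = (7, g, i, t') ∧ (t' = t + 1 ∨ t = t' + 1) ∧ g ≤ 6 ∧
  (g = 2 ∧ t % 2 = 1 ∨ g ≠ 2 ∧ t % 2 = 0)

def T3 (D : DD) (e y z : DE) (g i t t' : ℕ) : Prop :=
  D.valid y ∧ D.valid z ∧ ((y = e ∧ z = nx e) ∨ (y = nx e ∧ z = e)) ∧
  D.key y = (7, g, i, t) ∧ D.key z = (8, g, i, t') ∧
  ((g = 0 ∧ e = .r i 1 ∧ D.isW i) ∨
   (g = 1 ∧ e = .l i 0 ∧ i < D.a ∧ D.La i ≠ 1 ∧ D.La i % 2 = 1) ∨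
   (g = 2 ∧ i = 0 ∧ e = .c 1 ∧ D.s % 2 = 0))

lemma T1.sum {e x y : DE} {g i t t' : ℕ} (h : D.T1 e x y g i t t') :
    D.S e = D.H x + D.H y := by
  unfold S
  rcases h.2.2.1 with ⟨rfl, rfl⟩ | ⟨rfl, rfl⟩
  · rfl
  · omega

lemma T3.sum {e x y : DE} {g i t t' : ℕ} (h : D.T3 e x y g i t t') :
    D.S e = D.H x + D.H y := by
  unfold S
  rcases h.2.2.1 with ⟨rfl, rfl⟩ | ⟨rfl, rfl⟩
  · rfl
  · omega

lemma inner_cases (G : D.Good) {e : DE} (he : D.inner e) :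
    (∃ i, D.isG i ∧ e = .r i 0) ∨ (∃ x y g i t t', D.T1 e x y g i t t') ∨
    (∃ i, D.isW i ∧ e = .r i 0) ∨ (∃ y z g i t t', D.T3 e y z g i t t') := by
  obtain ⟨h1, h2, h3⟩ := he
  have H1 := h1
  have H2 := h2
  rcases e with j | ⟨i, j⟩ | ⟨i, j⟩
  · simp only [valid, nx] at h1 h2
    have hj : j ≠ 0 := by rintro rfl; exact h3 rfl
    rcases key_c G.hs j h1 with h | h | h | h | h | h | h <;>
      rcases key_c G.hs (j + 1) h2 with h' | h' | h' | h' | h' | h' | h' <;> try omega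
    · obtain ⟨q1, q2, q3, q4⟩ := h
      obtain ⟨q1', q2', q3', q4', q5'⟩ := h'
      exact Or.inr (Or.inr (Or.inr ⟨_, _, 2, 0, _, _, H2, H1, Or.inr ⟨rfl, rfl⟩, q5', q4,
        Or.inr (Or.inr ⟨rfl, rfl, by rw [q3], q2⟩)⟩))
    · exact Or.inr (Or.inl ⟨_, _, 2, 0, _, _, H2, H1, Or.inr ⟨rfl, rfl⟩, h'.2.2.2.2, h.2.2.2.2,
        by omega, by omega, by omega⟩)
    · exact Or.inr (Or.inl ⟨_, _, 2, 0, _, _, H1, H2, Or.inl ⟨rfl, rfl⟩, h.2.2.2.2, h'.2.2.2.2,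
        by omega, by omega, by omega⟩)
    · exact Or.inr (Or.inl ⟨_, _, 2, 0, _, _, H2, H1, Or.inr ⟨rfl, rfl⟩, h'.2.2.2.2, h.2.2.2.2,
        by omega, by omega, by omega⟩)
    · exact Or.inr (Or.inl ⟨_, _, 2, 0, _, _, H1, H2, Or.inl ⟨rfl, rfl⟩, h.2.2.2.2, h'.2.2.2.2,
        by omega, by omega, by omega⟩)
  · simp only [valid, nx] at h1 h2
    rcases key_l i j h1.2 with h | h | h | h | h | h | h | h <;>
      rcases key_l i (j + 1) h2.2 with h' | h' | h' | h' | h' | h' | h' | h' <;> try omega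
    · obtain ⟨q1, q2, q3, q4⟩ := h
      obtain ⟨q1', q2', q3', q4'⟩ := h'
      exact Or.inr (Or.inr (Or.inr ⟨_, _, 1, i, _, _, H2, H1, Or.inr ⟨rfl, rfl⟩, q4', q4,
        Or.inr (Or.inl ⟨rfl, by rw [q3], h1.1, q1, q2⟩)⟩))
    · exact Or.inr (Or.inl ⟨_, _, 1, i, _, _, H1, H2, Or.inl ⟨rfl, rfl⟩, h.2.2.2.2, h'.2.2.2,
        by omega, by omega, by omega⟩)
    · exact Or.inr (Or.inl ⟨_, _, 1, i, _, _, H2, H1, Or.inr ⟨rfl, rfl⟩, h'.2.2.2.2, h.2.2.2,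
        by omega, by omega, by omega⟩)
    · exact Or.inr (Or.inl ⟨_, _, 5, i, _, _, H1, H2, Or.inl ⟨rfl, rfl⟩, h.2.2.2, h'.2.2.2,
        by omega, by omega, by omega⟩)
    · exact Or.inr (Or.inl ⟨_, _, 5, i, _, _, H2, H1, Or.inr ⟨rfl, rfl⟩, h'.2.2.2, h.2.2.2,
        by omega, by omega, by omega⟩)
  · simp only [valid, nx] at h1 h2
    rcases key_r G i j h1.1 h1.2 with h | h | h | h | h | h | h | h | h | h | h | h | h <;>
      rcases key_r G i (j + 1) h2.1 h2.2 with
        h' | h' | h' | h' | h' | h' | h' | h' | h' | h' | h' | h' | h' <;> try omega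
    · exact Or.inl ⟨i, h.1, by rw [h.2.2.2.2.1]⟩
    · exact Or.inr (Or.inr (Or.inl ⟨i, h.1, by rw [h.2.2.2.2.2.1]⟩))
    · exact Or.inr (Or.inr (Or.inr ⟨_, _, 0, i, _, _, H2, H1, Or.inr ⟨rfl, rfl⟩,
        h'.2.2.2.2.2.2.2, h.2.2.2.2.2.2,
        Or.inl ⟨rfl, by rw [h.2.2.2.2.2.1], h.1⟩⟩))
    · exact Or.inr (Or.inl ⟨_, _, 0, i, _, _, H1, H2, Or.inl ⟨rfl, rfl⟩, h.2.2.2.2.2.2.2,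
        h'.2.2.2.2.2.2.2, by omega, by omega, by omega⟩)
    · exact Or.inr (Or.inl ⟨_, _, 0, i, _, _, H2, H1, Or.inr ⟨rfl, rfl⟩, h'.2.2.2.2.2.2.2,
        h.2.2.2.2.2.2.2, by omega, by omega, by omega⟩)
    · exact Or.inr (Or.inl ⟨_, _, 4, i, _, _, H1, H2, Or.inl ⟨rfl, rfl⟩, h.2.2.2.2,
        h'.2.2.2.2, by omega, by omega, by omega⟩)
    · exact Or.inr (Or.inl ⟨_, _, 4, i, _, _, H2, H1, Or.inr ⟨rfl, rfl⟩, h'.2.2.2.2,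
        h.2.2.2.2, by omega, by omega, by omega⟩)
    · exact Or.inr (Or.inl ⟨_, _, 3, i, _, _, H1, H2, Or.inl ⟨rfl, rfl⟩, h.2.2.2.2,
        h'.2.2.2.2, by omega, by omega, by omega⟩)
    · exact Or.inr (Or.inl ⟨_, _, 3, i, _, _, H2, H1, Or.inr ⟨rfl, rfl⟩, h'.2.2.2.2,
        h.2.2.2.2, by omega, by omega, by omega⟩)
    · exact Or.inr (Or.inl ⟨_, _, 6, i, _, _, H1, H2, Or.inl ⟨rfl, rfl⟩, h.2.2.2,
        h'.2.2.2, by omega, by omega, by omega⟩)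
    · exact Or.inr (Or.inl ⟨_, _, 6, i, _, _, H2, H1, Or.inr ⟨rfl, rfl⟩, h'.2.2.2,
        h.2.2.2, by omega, by omega, by omega⟩)

end DD

namespace DD
variable {D : DD}

lemma isG.facts (G : D.Good) {i : ℕ} (h : D.isG i) :
    D.Rb i = 2 ∧ D.La (D.ψ i) = 1 ∧ i ≠ D.r0 ∧ i < D.b ∧ D.valid (.r i 0) ∧ D.valid (.r i 1) ∧
    D.valid (.l (D.ψ i) 0) ∧ D.key (.r i 0) = (1, 0, D.b - i, 1) ∧
    D.key (.r i 1) = (6, 8, i, 0) ∧ D.key (.l (D.ψ i) 0) = (1, 0, D.b - i, 0) := by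
  obtain ⟨hi, h8⟩ := h
  have h2 : D.Rb i = 2 ∧ D.La (D.ψ i) = 1 ∧ i ≠ D.r0 := by
    rcases gR_cases D i with h | h | h | h | h <;> omega
  have hA : D.isA (D.ψ i) := by
    unfold isA
    rw [G.hφ i hi]
    exact ⟨hi, rfl, h8⟩
  refine ⟨h2.1, h2.2.1, h2.2.2, hi, ⟨hi, by omega⟩, ⟨hi, by omega⟩, ⟨G.hψ i hi, by omega⟩, ?_, ?_, ?_⟩
  · simp [key, h8]
  · simp [key, h8, h2.1]
  · have : D.gL (D.ψ i) = 10 := by simp [gL, h2.2.1, hA]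
    simp [key, this, G.hφ i hi]

/-- the leg matched to a non-G leg is not an A leg -/
lemma not_isA (G : D.Good) {i : ℕ} (hi : i < D.b) (h : ¬ D.isG i) : ¬ D.isA (D.ψ i) := by
  rintro ⟨_, _, h3⟩
  rw [G.hφ i hi] at h3
  exact h ⟨hi, h3⟩

lemma not_isA_l2 (G : D.Good) : ¬ D.isA D.l2 := by
  rintro ⟨h1, h2, _⟩
  exact G.hl2' _ h1 h2

/-- key of a one-leg that is not an A leg -/
lemma key_one {i : ℕ} (h1 : D.La i = 1) (hA : ¬ D.isA i) :
    ∃ g, D.key (.l i 0) = (5, g, i, 0) := by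
  rcases key_l (D := D) i 0 (by omega) with h | h | h | h | h | h | h | h
  · exact absurd h.2.1 hA
  · exact ⟨_, h.2.2.2.2⟩
  · exact ⟨_, h.2.2.2.2⟩
  all_goals exact absurd h1 h.1

lemma isW.facts (G : D.Good) {i : ℕ} (h : D.isW i) :
    4 ≤ D.Rb i ∧ D.Rb i % 2 = 0 ∧ D.La (D.ψ i) = 1 ∧ i ≠ D.r0 ∧ i < D.b ∧ D.valid (.r i 0) ∧
    D.valid (.r i 1) ∧
    D.valid (.l (D.ψ i) 0) ∧ D.key (.r i 0) = (4, 0, i, D.Rb i - 1) ∧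
    D.key (.r i 1) = (8, 0, i, D.Rb i - 2) ∧ ∃ g, D.key (.l (D.ψ i) 0) = (5, g, D.ψ i, 0) := by
  obtain ⟨hi, h8⟩ := h
  have h2 : 4 ≤ D.Rb i ∧ D.Rb i % 2 = 0 ∧ D.La (D.ψ i) = 1 ∧ i ≠ D.r0 := by
    have := G.hR i hi
    rcases gR_cases D i with h | h | h | h | h <;> omega
  refine ⟨h2.1, h2.2.1, h2.2.2.1, h2.2.2.2, hi, ⟨hi, by omega⟩, ⟨hi, by omega⟩,
    ⟨G.hψ i hi, by omega⟩, ?_, ?_, ?_⟩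
  · simp [key, h8]
  · simp [key, h8]; omega
  · apply key_one h2.2.2.1
    apply not_isA G hi
    rintro ⟨_, h9⟩
    omega

lemma inv6 (G : D.Good) {x : DE} (hx : D.valid x) (h : (D.key x).1 = 6) :
    ∃ j, D.isG j ∧ x = .r j 1 := by
  rcases x with j | ⟨i, j⟩ | ⟨i, j⟩ <;> simp only [valid] at hx
  · rcases key_c G.hs j hx with k | k | k | k | k | k | k <;> (simp only [Prod.ext_iff] at k; omega)
  · rcases key_l i j hx.2 with k | k | k | k | k | k | k | k <;> (simp only [Prod.ext_iff] at k; omega)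
  · rcases key_r G i j hx.1 hx.2 with k | k | k | k | k | k | k | k | k | k | k | k | k
    case inr.inl => exact ⟨i, k.1, by rw [k.2.2.2.2.1]⟩
    all_goals (simp only [Prod.ext_iff] at k; omega)

lemma inv80 (G : D.Good) {x : DE} (hx : D.valid x) (h : (D.key x).1 = 8)
    (h' : (D.key x).2.1 = 0) : ∃ j, D.isW j ∧ x = .r j 1 := by
  rcases x with j | ⟨i, j⟩ | ⟨i, j⟩ <;> simp only [valid] at hx
  · rcases key_c G.hs j hx with k | k | k | k | k | k | k <;> (simp only [Prod.ext_iff] at k; omega)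
  · rcases key_l i j hx.2 with k | k | k | k | k | k | k | k <;> (simp only [Prod.ext_iff] at k; omega)
  · rcases key_r G i j hx.1 hx.2 with k | k | k | k | k | k | k | k | k | k | k | k | k
    case inr.inr.inr.inl => exact ⟨i, k.1, by rw [k.2.2.2.2.2.1]⟩
    all_goals (simp only [Prod.ext_iff] at k; omega)

/-- T0 sums are decreasing -/
lemma T0_anti (G : D.Good) {i i' : ℕ} (hi : D.isG i) (hi' : D.isG i') (hlt : i < i') :
    D.S (.r i' 0) < D.S (.r i 0) := by
  obtain ⟨-, -, -, f1, f2, f3, f4, f5, f6, f7⟩ := hi.facts G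
  obtain ⟨-, -, -, f1', f2', f3', f4', f5', f6', f7'⟩ := hi'.facts G
  set J := (Finset.range D.b).filter (fun j => D.isG j ∧ i ≤ j ∧ j < i') with hJ
  have h1 : D.H (.r i' 1) ≤ D.H (.r i 1) + J.card := by
    refine le_trans (H_le_add (J.image (fun j => DE.r j 1)) ?_)
      (Nat.add_le_add_left Finset.card_image_le _)
    intro x hx hx1 hx2
    have h6 : (D.key x).1 = 6 := by
      unfold klt kl at hx1 hx2
      rw [f6] at hx1
      rw [f6'] at hx2
      simp only at hx1 hx2
      omega
    obtain ⟨j, hj, rfl⟩ := inv6 G hx h6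
    obtain ⟨-, -, -, g1, g2, g3, g4, g5, g6, g7⟩ := hj.facts G
    rw [klt_iff g6 f6] at hx1
    rw [klt_iff g6 f6'] at hx2
    simp only [Finset.mem_image, hJ, Finset.mem_filter, Finset.mem_range]
    exact ⟨j, ⟨g1, hj, by omega, by omega⟩, rfl⟩
  have h2 : D.H (.r i' 0) + (J.card + 1) ≤ D.H (.r i 0) := by
    have hcard : (insert (DE.r i' 0) (J.image (fun j => DE.l (D.ψ j) 0))).card = J.card + 1 := by
      rw [Finset.card_insert_of_notMem (by simp), Finset.card_image_of_injOn]
      intro j hj j' hj' hjj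
      simp [hJ] at hj hj' hjj
      rw [← G.hφ j hj.1, ← G.hφ j' hj'.1, hjj]
    rw [← hcard]
    apply H_add_le
    · rw [klt_iff f5 f5']; omega
    · intro x hx
      simp only [Finset.mem_insert, Finset.mem_image, hJ, Finset.mem_filter] at hx
      rcases hx with rfl | ⟨j, ⟨_, hj, hj1, hj2⟩, rfl⟩
      · exact ⟨f2', kl_irr _, by rw [klt_iff f5' f5]; omega⟩
      · obtain ⟨-, -, -, g1, g2, g3, g4, g5, g6, g7⟩ := hj.facts G
        refine ⟨g4, ?_, ?_⟩
        · rw [klt_iff g7 f5']; omega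
        · rw [klt_iff g7 f5]; omega
  simp only [S, nx, zero_add] at *
  omega

lemma T1_mono {e x y e' x' y' : DE} {g i t u g' i' t' u' : ℕ}
    (h : D.T1 e x y g i t u) (h' : D.T1 e' x' y' g' i' t' u')
    (hlt : g < g' ∨ g = g' ∧ (i < i' ∨ i = i' ∧ (t < t' ∨ t = t' ∧ u < u'))) :
    D.S e < D.S e' := by
  rw [h.sum, h'.sum]
  obtain ⟨v1, v2, -, k1, k2, p1, p2, p3⟩ := h
  obtain ⟨v1', v2', -, k1', k2', p1', p2', p3'⟩ := h'
  by_cases hx : D.klt x x'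
  · have a1 := H_lt v1 hx
    have a2 : D.H y ≤ D.H y' := H_le (by rw [klt_iff k2' k2]; rw [klt_iff k1 k1'] at hx; omega)
    omega
  · have a1 : D.H x ≤ D.H x' := H_le (by rw [klt_iff k1' k1]; omega)
    have a2 : D.H y < D.H y' := H_lt v2 (by rw [klt_iff k2 k2']; rw [klt_iff k1 k1'] at hx; omega)
    omega

lemma T1_inj (G : D.Good) {e x y e' x' y' : DE} {g i t u g' i' t' u' : ℕ}
    (h : D.T1 e x y g i t u) (h' : D.T1 e' x' y' g' i' t' u') (hS : D.S e = D.S e') :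
    e = e' := by
  have n1 : ¬ (g < g' ∨ g = g' ∧ (i < i' ∨ i = i' ∧ (t < t' ∨ t = t' ∧ u < u'))) := fun hlt => (T1_mono h h' hlt).ne hS
  have n2 : ¬ (g' < g ∨ g' = g ∧ (i' < i ∨ i' = i ∧ (t' < t ∨ t' = t ∧ u' < u))) :=
    fun hlt => (T1_mono h' h hlt).ne hS.symm
  obtain ⟨v1, v2, w, k1, k2, p1, p2, p3⟩ := h
  obtain ⟨v1', v2', w', k1', k2', p1', p2', p3'⟩ := h'
  have e1 : g = g' ∧ i = i' ∧ t = t' ∧ u = u' := by omega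
  obtain ⟨rfl, rfl, rfl, rfl⟩ := e1
  have ex := key_inj G v1 v1' (k1.trans k1'.symm)
  have ey := key_inj G v2 v2' (k2.trans k2'.symm)
  subst ex ey
  rcases w with ⟨rfl, w⟩ | ⟨w, rfl⟩ <;> rcases w' with ⟨rfl, w'⟩ | ⟨w', rfl⟩
  · rfl
  · exfalso
    subst w
    cases x <;> simp [nx] at w' <;> omega
  · exfalso
    subst w'
    cases x <;> simp [nx] at w <;> omega
  · rfl

lemma T2_mono (G : D.Good) {i i' : ℕ} (hi : D.isW i) (hi' : D.isW i') (hlt : i < i') :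
    D.S (.r i 0) < D.S (.r i' 0) := by
  obtain ⟨-, -, -, -, f1, f2, f3, f4, f5, f6, f7⟩ := hi.facts G
  obtain ⟨-, -, -, -, f1', f2', f3', f4', f5', f6', f7'⟩ := hi'.facts G
  have a1 : D.H (.r i 0) < D.H (.r i' 0) := H_lt f2 (by rw [klt_iff f5 f5']; omega)
  have a2 : D.H (.r i 1) < D.H (.r i' 1) := H_lt f3 (by rw [klt_iff f6 f6']; omega)
  simp only [S, nx, zero_add]; omega

lemma T3_mono {e x y e' x' y' : DE} {g i t u g' i' t' u' : ℕ}
    (h : D.T3 e x y g i t u) (h' : D.T3 e' x' y' g' i' t' u')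
    (hlt : g < g' ∨ g = g' ∧ i < i') :
    D.S e < D.S e' := by
  rw [h.sum, h'.sum]
  obtain ⟨v1, v2, -, k1, k2, p1⟩ := h
  obtain ⟨v1', v2', -, k1', k2', p1'⟩ := h'
  have a1 : D.H x < D.H x' := H_lt v1 (by rw [klt_iff k1 k1']; omega)
  have a2 : D.H y < D.H y' := H_lt v2 (by rw [klt_iff k2 k2']; omega)
  omega

lemma T3_inj {e x y e' x' y' : DE} {g i t u g' i' t' u' : ℕ}
    (h : D.T3 e x y g i t u) (h' : D.T3 e' x' y' g' i' t' u') (hS : D.S e = D.S e') :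
    e = e' := by
  have n1 : ¬ (g < g' ∨ g = g' ∧ i < i') := fun hlt => (T3_mono h h' hlt).ne hS
  have n2 : ¬ (g' < g ∨ g' = g ∧ i' < i) := fun hlt => (T3_mono h' h hlt).ne hS.symm
  obtain ⟨v1, v2, w, k1, k2, p1⟩ := h
  obtain ⟨v1', v2', w', k1', k2', p1'⟩ := h'
  have e1 : g = g' ∧ i = i' := by omega
  obtain ⟨rfl, rfl⟩ := e1
  rcases p1 with p1 | p1 | p1 <;> rcases p1' with p1' | p1' | p1' <;>
    first | omega | simp [p1, p1']

lemma T0_T1 (G : D.Good) {j : ℕ} (hj : D.isG j) {e x y : DE} {g i t u : ℕ}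
    (h : D.T1 e x y g i t u) : D.S (.r j 0) < D.S e := by
  rw [h.sum]
  obtain ⟨-, -, -, f1, f2, f3, f4, f5, f6, f7⟩ := hj.facts G
  obtain ⟨v1, v2, -, k1, k2, -⟩ := h
  have a1 : D.H (.r j 0) < D.H x := H_lt f2 (by rw [klt_iff f5 k1]; omega)
  have a2 : D.H (.r j 1) < D.H y := H_lt f3 (by rw [klt_iff f6 k2]; omega)
  simp only [S, nx, zero_add]; omega

lemma T1_T2 (G : D.Good) {j : ℕ} (hj : D.isW j) {e x y : DE} {g i t u : ℕ}
    (h : D.T1 e x y g i t u) : D.S e < D.S (.r j 0) := by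
  rw [h.sum]
  obtain ⟨-, -, -, -, f1, f2, f3, f4, f5, f6, f7⟩ := hj.facts G
  obtain ⟨v1, v2, -, k1, k2, -⟩ := h
  have a1 : D.H x < D.H (.r j 0) := H_lt v1 (by rw [klt_iff k1 f5]; omega)
  have a2 : D.H y < D.H (.r j 1) := H_lt v2 (by rw [klt_iff k2 f6]; omega)
  simp only [S, nx, zero_add]; omega

lemma T0_T2 (G : D.Good) {j i : ℕ} (hj : D.isG j) (hi : D.isW i) :
    D.S (.r j 0) < D.S (.r i 0) := by
  obtain ⟨-, -, -, f1, f2, f3, f4, f5, f6, f7⟩ := hj.facts G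
  obtain ⟨-, -, -, -, g1, g2, g3, g4, g5, g6, g7⟩ := hi.facts G
  have a1 : D.H (.r j 0) < D.H (.r i 0) := H_lt f2 (by rw [klt_iff f5 g5]; omega)
  have a2 : D.H (.r j 1) < D.H (.r i 1) := H_lt f3 (by rw [klt_iff f6 g6]; omega)
  simp only [S, nx, zero_add]; omega

lemma T0_T3 (G : D.Good) {j : ℕ} (hj : D.isG j) {e x y : DE} {g i t u : ℕ}
    (h : D.T3 e x y g i t u) : D.S (.r j 0) < D.S e := by
  rw [h.sum]
  obtain ⟨-, -, -, f1, f2, f3, f4, f5, f6, f7⟩ := hj.facts G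
  obtain ⟨v1, v2, -, k1, k2, -⟩ := h
  have a1 : D.H (.r j 0) < D.H x := H_lt f2 (by rw [klt_iff f5 k1]; omega)
  have a2 : D.H (.r j 1) < D.H y := H_lt f3 (by rw [klt_iff f6 k2]; omega)
  simp only [S, nx, zero_add]; omega

lemma T1_T3 {e x y e' x' y' : DE} {g i t u g' i' t' u' : ℕ}
    (h : D.T1 e x y g i t u) (h' : D.T3 e' x' y' g' i' t' u') : D.S e < D.S e' := by
  rw [h.sum, h'.sum]
  obtain ⟨v1, v2, -, k1, k2, -⟩ := h
  obtain ⟨v1', v2', -, k1', k2', -⟩ := h'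
  have a1 : D.H x < D.H x' := H_lt v1 (by rw [klt_iff k1 k1']; omega)
  have a2 : D.H y < D.H y' := H_lt v2 (by rw [klt_iff k2 k2']; omega)
  omega

lemma T2_T3 (G : D.Good) {i : ℕ} (hi : D.isW i) {e y z : DE} {g j t u : ℕ}
    (h : D.T3 e y z g j t u) : D.S (.r i 0) < D.S e := by
  rw [h.sum]
  obtain ⟨-, -, -, -, f1, f2, f3, f4, f5, f6, f7⟩ := hi.facts G
  obtain ⟨v1, v2, -, k1, k2, p⟩ := h
  simp only [S, nx, zero_add]
  by_cases hz : D.klt z (.r i 1)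
  · have hz' := hz
    rw [klt_iff k2 f6] at hz'
    set J := (Finset.range D.b).filter (fun k => D.isW k ∧ j ≤ k ∧ k < i) with hJ
    have h1 : D.H (.r i 1) ≤ D.H z + J.card := by
      refine le_trans (H_le_add (J.image (fun j => DE.r j 1)) ?_)
        (Nat.add_le_add_left Finset.card_image_le _)
      intro x hx hx1 hx2
      have h6 : (D.key x).1 = 8 ∧ (D.key x).2.1 = 0 := by
        unfold klt kl at hx1 hx2
        rw [k2] at hx1
        rw [f6] at hx2
        simp only at hx1 hx2
        omega
      obtain ⟨k, hk, rfl⟩ := inv80 G hx h6.1 h6.2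
      obtain ⟨-, -, -, -, g1, g2, g3, g4, g5, g6, g7⟩ := hk.facts G
      rw [klt_iff g6 k2] at hx1
      rw [klt_iff g6 f6] at hx2
      have hki : k < i := by
        rcases hx2 with hx2 | hx2
        · omega
        · rcases Nat.lt_trichotomy k i with q | q | q
          · exact q
          · subst q; omega
          · omega
      simp only [Finset.mem_image, hJ, Finset.mem_filter, Finset.mem_range]
      exact ⟨k, ⟨g1, hk, by omega, hki⟩, rfl⟩
    have h2 : D.H (.r i 0) + (J.card + 1) ≤ D.H y := by
      have hcard : (insert (DE.r i 0) (J.image (fun j => DE.l (D.ψ j) 0))).card = J.card + 1 := by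
        rw [Finset.card_insert_of_notMem (by simp), Finset.card_image_of_injOn]
        intro j hj j' hj' hjj
        simp [hJ] at hj hj' hjj
        rw [← G.hφ j hj.1, ← G.hφ j' hj'.1, hjj]
      rw [← hcard]
      apply H_add_le
      · rw [klt_iff k1 f5]; omega
      · intro x hx
        simp only [Finset.mem_insert, Finset.mem_image, hJ, Finset.mem_filter] at hx
        rcases hx with rfl | ⟨j, ⟨_, hj, hj1, hj2⟩, rfl⟩
        · exact ⟨f2, kl_irr _, by rw [klt_iff f5 k1]; omega⟩
        · obtain ⟨-, -, -, -, g1, g2, g3, g4, g5, g6, ⟨gg, g7⟩⟩ := hj.facts G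
          refine ⟨g4, ?_, ?_⟩
          · rw [klt_iff g7 f5]; omega
          · rw [klt_iff g7 k1]; omega
    omega
  · have a1 := H_le hz
    have a2 : D.H (.r i 0) < D.H y := H_lt f2 (by rw [klt_iff f5 k1]; omega)
    omega

theorem S_inj (G : D.Good) {e e' : DE} (he : D.inner e) (he' : D.inner e')
    (h : D.S e = D.S e') : e = e' := by
  rcases inner_cases G he with ⟨i, hi, rfl⟩ | ⟨x, y, g, i, t, t', k⟩ | ⟨i, hi, rfl⟩ |
      ⟨x, y, g, i, t, t', k⟩ <;>
    rcases inner_cases G he' with ⟨i', hi', rfl⟩ | ⟨x', y', g', i', u, u', k'⟩ | ⟨i', hi', rfl⟩ |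
      ⟨x', y', g', i', u, u', k'⟩
  · rcases Nat.lt_trichotomy i i' with q | q | q
    · exact absurd h (T0_anti G hi hi' q).ne'
    · rw [q]
    · exact absurd h (T0_anti G hi' hi q).ne
  · exact absurd h (T0_T1 G hi k').ne
  · exact absurd h (T0_T2 G hi hi').ne
  · exact absurd h (T0_T3 G hi k').ne
  · exact absurd h (T0_T1 G hi' k).ne'
  · exact T1_inj G k k' h
  · exact absurd h (T1_T2 G hi' k).ne
  · exact absurd h (T1_T3 k k').ne
  · exact absurd h (T0_T2 G hi' hi).ne'
  · exact absurd h (T1_T2 G hi k').ne'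
  · rcases Nat.lt_trichotomy i i' with q | q | q
    · exact absurd h (T2_mono G hi hi' q).ne
    · rw [q]
    · exact absurd h (T2_mono G hi' hi q).ne'
  · exact absurd h (T2_T3 G hi k').ne
  · exact absurd h (T0_T3 G hi' k).ne'
  · exact absurd h (T1_T3 k' k).ne'
  · exact absurd h (T2_T3 G hi' k).ne'
  · exact T3_inj k k' h

def leaf (D : DD) (e : DE) : Prop := D.valid e ∧ ¬ D.valid (nx e) ∧ ∀ j, e ≠ .c j

lemma leaf_cls (G : D.Good) {e : DE} (he : D.leaf e) : (D.key e).1 ≤ 6 := by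
  obtain ⟨hx, h2, h3⟩ := he
  rcases e with j | ⟨i, j⟩ | ⟨i, j⟩ <;> simp only [valid, nx] at hx h2
  · exact absurd rfl (h3 j)
  · rcases key_l i j hx.2 with k | k | k | k | k | k | k | k <;>
      (simp only [Prod.ext_iff] at k; omega)
  · rcases key_r G i j hx.1 hx.2 with k | k | k | k | k | k | k | k | k | k | k | k | k <;>
      (simp only [Prod.ext_iff] at k; omega)

lemma H_pos {x : DE} (h : 1 ≤ (D.key x).1) : 1 ≤ D.H x := by
  have := H_lt (D := D) (u := .c 0) (v := x) (by simp [valid])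
    (by unfold klt kl; rw [key_root]; simp only; omega)
  omega

theorem leaf_lt (G : D.Good) {e e' : DE} (he : D.leaf e) (he' : D.inner e') :
    D.H e < D.S e' := by
  have hc := leaf_cls G he
  rcases inner_cases G he' with ⟨i, hi, rfl⟩ | ⟨x, y, g, i, t, t', k⟩ | ⟨i, hi, rfl⟩ |
      ⟨x, y, g, i, t, t', k⟩
  · obtain ⟨-, -, -, f1, f2, f3, f4, f5, f6, f7⟩ := hi.facts G
    by_cases hb : D.klt (.r i 1) e
    · have h6 : (D.key e).1 = 6 := by
        unfold klt kl at hb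
        rw [f6] at hb
        simp only at hb
        omega
      obtain ⟨j, hj, rfl⟩ := inv6 G he.1 h6
      obtain ⟨-, -, -, g1, g2, g3, g4, g5, g6, g7⟩ := hj.facts G
      rw [klt_iff f6 g6] at hb
      have := T0_anti G hi hj (by omega)
      simp only [S, nx, zero_add] at *
      omega
    · have a1 := H_le hb
      have a2 := H_pos (x := .r i 0) (by rw [f5])
      simp only [S, nx, zero_add] at *
      omega
  · rw [k.sum]
    have : D.H e < D.H y := H_lt he.1 (by unfold klt kl; rw [k.2.2.2.2.1]; simp only; omega)
    omega
  · obtain ⟨-, -, -, -, g1, g2, g3, g4, g5, g6, g7⟩ := hi.facts G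
    have : D.H e < D.H (.r i 1) := H_lt he.1 (by unfold klt kl; rw [g6]; simp only; omega)
    simp only [S, nx, zero_add]
    omega
  · rw [k.sum]
    have : D.H e < D.H y := H_lt he.1 (by unfold klt kl; rw [k.2.2.2.2.1]; simp only; omega)
    omega

end DD

namespace DD
variable {D : DD}

def SR (D : DD) : ℕ := D.H (.c D.s) + ∑ r ∈ Finset.range D.b, D.H (.r r 0)
def SL (D : DD) : ℕ := D.H (.c 1) + ∑ i ∈ Finset.range D.a, D.H (.l i 0)

lemma M_facts (G : D.Good) : D.valid (.r D.r0 0) ∧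
    D.key (.r D.r0 0) = (7, 6, D.r0, D.Rb D.r0 - 1) := by
  have h1 := G.hR _ G.hr0
  refine ⟨⟨G.hr0, h1⟩, ?_⟩
  rcases key_r G D.r0 0 G.hr0 h1 with k | k | k | k | k | k | k | k | k | k | k | k | k <;>
    first | omega | skip
  exact k.2.2.2

lemma cs_facts (G : D.Good) : D.valid (.c D.s) ∧ ∃ g t, D.key (.c D.s) = (7, g, 0, t) ∧
    (D.s = 1 ∧ g = 7 ∨ 1 < D.s ∧ g = 2) ∧ (D.s % 2 = 0 ∧ t = D.s ∨ D.s % 2 = 1 ∧ t = 0) := by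
  have h1 := G.hs
  refine ⟨le_refl _, ?_⟩
  rcases key_c h1 D.s le_rfl with h | h | h | h | h | h | h <;> try omega
  · exact ⟨_, _, h.2.2, by omega⟩
  · exact ⟨_, _, h.2.2.2.2, by omega⟩
  · exact ⟨_, _, h.2.2.2.2, by omega⟩

lemma Ytop (G : D.Good) {y : DE} (hy : D.valid y) (h7 : (D.key y).1 = 7) (hne : y ≠ .c D.s) :
    ¬ D.klt (.r D.r0 0) y := by
  obtain ⟨hM, kM⟩ := M_facts G
  unfold klt kl
  rw [kM]
  simp only
  rcases y with j | ⟨i, j⟩ | ⟨i, j⟩ <;> simp only [valid] at hy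
  · have : j ≠ D.s := fun h => hne (by rw [h])
    rcases key_c G.hs j hy with k | k | k | k | k | k | k <;>
      (simp only [Prod.ext_iff] at k; omega)
  · rcases key_l i j hy.2 with k | k | k | k | k | k | k | k <;>
      (simp only [Prod.ext_iff] at k; omega)
  · rcases key_r G i j hy.1 hy.2 with k | k | k | k | k | k | k | k | k | k | k | k | k
    case inr.inr.inr.inr.inr.inr.inr.inr.inr.inr.inr.inr =>
      obtain ⟨rfl, k1, k2, k3⟩ := k
      simp only [Prod.ext_iff] at k3
      omega
    all_goals (simp only [Prod.ext_iff] at k; omega)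

lemma inv8 (G : D.Good) {x : DE} (hx : D.valid x) (h : (D.key x).1 = 8) :
    (∃ j, D.isW j ∧ x = .r j 1) ∨
    (∃ i, i < D.a ∧ D.La i ≠ 1 ∧ D.La i % 2 = 1 ∧ x = .l i 0) ∨ x = .c 1 := by
  rcases x with j | ⟨i, j⟩ | ⟨i, j⟩ <;> simp only [valid] at hx
  · rcases key_c G.hs j hx with k | k | k | k | k | k | k
    case inr.inr.inl => right; right; rw [k.2.2.1]
    all_goals (simp only [Prod.ext_iff] at k; omega)
  · rcases key_l i j hx.2 with k | k | k | k | k | k | k | k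
    case inr.inr.inr.inl =>
      right; left; exact ⟨i, hx.1, k.1, k.2.1, by rw [k.2.2.1]⟩
    all_goals (simp only [Prod.ext_iff] at k; omega)
  · rcases key_r G i j hx.1 hx.2 with k | k | k | k | k | k | k | k | k | k | k | k | k
    case inr.inr.inr.inl => exact Or.inl ⟨i, k.1, by rw [k.2.2.2.2.2.1]⟩
    all_goals (simp only [Prod.ext_iff] at k; omega)

def Zs (D : DD) : Finset DE := D.Om.filter (fun x => (D.key x).1 = 8 ∧ x ≠ .c 1)

lemma Zs_nxnx (G : D.Good) {x : DE} (hx : x ∈ D.Zs) :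
    D.valid (nx (nx x)) ∧ (D.key (nx (nx x))).1 = 2 ∧ (D.key (nx (nx x))).2.1 ≤ 1 := by
  simp only [Zs, Finset.mem_filter, mem_Om] at hx
  obtain ⟨hv, h8, hc⟩ := hx
  rcases inv8 G hv h8 with ⟨j, hj, rfl⟩ | ⟨i, hi, h1, h2, rfl⟩ | h
  · obtain ⟨g0, g00, -, gr, g1, g2, g3, g4, g5, g6, g7⟩ := hj.facts G
    simp only [nx, Nat.reduceAdd]
    refine ⟨⟨g1, by omega⟩, ?_⟩
    have hg := hj.2
    have e1 : D.Rb j ≠ 1 := by omega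
    have e2 : (D.Rb j - 1 - 3) % 2 = 0 := by omega
    simp [key, hg, e1, e2]
  · have h3 : 3 ≤ D.La i := by omega
    simp only [nx, Nat.reduceAdd]
    refine ⟨⟨hi, by omega⟩, ?_⟩
    rcases key_l (D := D) i 2 (by omega) with k | k | k | k | k | k | k | k <;>
      (simp only [Prod.ext_iff] at k; omega)
  · exact absurd h hc

lemma T3_bound (G : D.Good) {e y z : DE} {g i t u : ℕ} (h : D.T3 e y z g i t u) :
    D.S e ≤ D.H (.r D.r0 0) + D.H (.c D.s) + (D.Zs.card + 1) := by
  rw [h.sum]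
  obtain ⟨v1, v2, w, k1, k2, p⟩ := h
  obtain ⟨hM, kM⟩ := M_facts G
  obtain ⟨hC, gc, tc, kC, pC, qC⟩ := cs_facts G
  -- upper bound for z
  have key1 : ∀ P, D.valid P → (D.key P).1 = 7 → ¬ D.klt P (.r D.r0 0) → ¬ D.klt P (.c D.s) →
      D.H z ≤ D.H P + (D.Zs.card + 1) := by
    intro P hP h7 hPM hPC
    have hz : D.H z + 1 ≤ D.H P + (insert P (insert (.c 1) D.Zs)).card := by
      have hzm : z ∈ insert P (insert (DE.c 1) D.Zs) := by
        by_cases hz1 : z = .c 1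
        · simp [hz1]
        · simp only [Finset.mem_insert, Zs, Finset.mem_filter, mem_Om]
          right; right; exact ⟨v2, by rw [k2], hz1⟩
      have h2 : D.H z ≤ D.H P + ((insert P (insert (DE.c 1) D.Zs)).erase z).card := by
        apply H_le_add
        intro x hx hx1 hx2
        rw [Finset.mem_erase]
        refine ⟨fun hh => kl_irr _ (hh ▸ hx2), ?_⟩
        have hc : (D.key x).1 = 7 ∨ (D.key x).1 = 8 := by
          unfold klt kl at hx1 hx2
          rw [k2] at hx2
          simp only at hx2
          omega
        rcases hc with hc | hc
        · have : x = P := by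
            apply key_inj G hx hP
            apply kl_tri hx1
            intro hh
            by_cases hxs : x = .c D.s
            · exact hPC (hxs ▸ hh)
            · exact Ytop G hx hc hxs (kl_le_lt hPM hh)
          simp [this]
        · by_cases hx1 : x = .c 1
          · simp [hx1]
          · simp only [Finset.mem_insert, Zs, Finset.mem_filter, mem_Om]
            right; right; exact ⟨hx, hc, hx1⟩
      rw [Finset.card_erase_of_mem hzm] at h2
      have : 0 < (insert P (insert (DE.c 1) D.Zs)).card := Finset.card_pos.2 ⟨z, hzm⟩
      omega
    have c1 := Finset.card_insert_le P (insert (DE.c 1) D.Zs)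
    have c2 := Finset.card_insert_le (DE.c 1) D.Zs
    omega
  by_cases hs : D.s = 1
  · have a1 := key1 (.c D.s) hC (by rw [kC]) (by rw [klt_iff kC kM]; omega) (kl_irr _)
    have a2 : D.H y ≤ D.H (.r D.r0 0) := H_le (by rw [klt_iff kM k1]; omega)
    omega
  · have a1 := key1 (.r D.r0 0) hM (by rw [kM]) (kl_irr _) (by rw [klt_iff kM kC]; omega)
    have a2 : D.H y ≤ D.H (.c D.s) := H_le (by
      rw [klt_iff kC k1]
      rcases p with p | p | p
      · omega
      · omega
      · -- core, s even
        obtain ⟨p1, p2, p3, p4⟩ := p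
        subst p3
        have hy : ∃ j, y = .c j := by
          rcases w with w | w
          · exact ⟨_, w.1⟩
          · exact ⟨_, w.1⟩
        obtain ⟨j, rfl⟩ := hy
        have v1' : j ≤ D.s := v1
        obtain ⟨c, g', d, t', h1, h2⟩ := kf_c G.hs j v1'
        rw [h1] at k1
        simp only [Prod.ext_iff] at k1
        omega)
    omega

lemma SR_split (G : D.Good) : D.SR = D.H (.c D.s) + D.H (.r D.r0 0) +
    ∑ r ∈ (Finset.range D.b).erase D.r0, D.H (.r r 0) := by
  unfold SR
  rw [← Finset.add_sum_erase _ _ (Finset.mem_range.2 G.hr0)]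
  omega

lemma SR_ge (G : D.Good) {r : ℕ} (hr : r < D.b) (hne : r ≠ D.r0) :
    D.H (.c D.s) + D.H (.r D.r0 0) + D.H (.r r 0) ≤ D.SR := by
  rw [SR_split G]
  apply Nat.add_le_add_left
  exact Finset.single_le_sum (f := fun r => D.H (.r r 0)) (fun _ _ => Nat.zero_le _)
    (by simp [hr, hne])

lemma other_ge (G : D.Good) {r : ℕ} (hr : r < D.b) (hG : ¬ D.isG r) :
    D.Zs.card + 2 ≤ D.H (.r r 0) := by
  obtain ⟨hM, kM⟩ := M_facts G
  have hR := G.hR r hr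
  have hR0 := G.hR _ G.hr0
  have he0 := G.her0
  obtain ⟨w, hw, kw, kwr⟩ : ∃ w, D.valid w ∧ ((D.key w).1 = 2 ∧ 3 ≤ (D.key w).2.1) ∧
      D.klt w (.r r 0) := by
    by_cases h3 : D.Rb r % 2 = 1 ∧ 3 ≤ D.Rb r
    · rcases key_r G r 2 hr (by omega) with k | k | k | k | k | k | k | k | k | k | k | k | k <;>
        first | omega | skip
      rcases key_r G r 0 hr (by omega) with
        k' | k' | k' | k' | k' | k' | k' | k' | k' | k' | k' | k' | k' <;> first | omega | skip
      refine ⟨.r r 2, ⟨hr, by omega⟩, ?_, ?_⟩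
      · rw [k.2.2.2.2]; simp
      · rw [klt_iff k.2.2.2.2 k'.2.2.2.2]; omega
    · have hw : D.key (.r D.r0 1) = (2, 6, D.r0, D.Rb D.r0 - 1 - 1) := by
        rcases key_r G D.r0 1 G.hr0 (by omega) with
          k | k | k | k | k | k | k | k | k | k | k | k | k <;> first | omega | skip
        exact k.2.2.2
      refine ⟨.r D.r0 1, ⟨G.hr0, by omega⟩, by rw [hw]; simp, ?_⟩
      unfold klt kl
      rw [hw]
      rcases key_r G r 0 hr (by omega) with k | k | k | k | k | k | k | k | k | k | k | k | k
      case inl => exact absurd k.1 hG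
      all_goals (simp only [Prod.ext_iff] at k; omega)
  have hcard : (insert (DE.c 0) (insert w (D.Zs.image (fun x => nx (nx x))))).card
      = D.Zs.card + 2 := by
    rw [Finset.card_insert_of_notMem, Finset.card_insert_of_notMem, Finset.card_image_of_injective]
    · intro x y h; exact nx_inj (nx_inj h)
    · simp only [Finset.mem_image, not_exists, not_and]
      rintro x hx rfl
      have := Zs_nxnx G hx
      omega
    · simp only [Finset.mem_insert, Finset.mem_image, not_or, not_exists, not_and]
      constructor
      · rintro rfl; rw [key_root] at kw; simp at kw
      · intro x hx h
        have := Zs_nxnx G hx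
        rw [h, key_root] at this; simp at this
  rw [← hcard]
  apply card_le_H
  intro x hx
  simp only [Finset.mem_insert, Finset.mem_image] at hx
  rcases hx with rfl | rfl | ⟨z, hz, rfl⟩
  · refine ⟨by simp [valid], kl_trans ?_ kwr⟩
    unfold kl; rw [key_root]; simp only; omega
  · exact ⟨hw, kwr⟩
  · obtain ⟨z1, z2, z3⟩ := Zs_nxnx G hz
    refine ⟨z1, kl_trans ?_ kwr⟩
    unfold kl; omega

theorem inner_lt_SR (G : D.Good) {e : DE} (he : D.inner e) : D.S e < D.SR := by
  obtain ⟨hM, kM⟩ := M_facts G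
  obtain ⟨hC, gc, tc, kC, pC, qC⟩ := cs_facts G
  have hSR := SR_split G
  have hT3 : ∀ {e y z : DE} {g i t u : ℕ}, D.T3 e y z g i t u → D.S e < D.SR := by
    intro e y z g i t u h
    have hb := T3_bound G h
    by_cases hex : ∃ r, r < D.b ∧ r ≠ D.r0 ∧ ¬ D.isG r
    · obtain ⟨r, hr, hne, hG⟩ := hex
      have a1 := SR_ge G hr hne
      have a2 := other_ge G hr hG
      omega
    · have hall : ∀ r, r < D.b → r ≠ D.r0 → D.isG r := by
        intro r hr hne
        by_contra hh
        exact hex ⟨r, hr, hne, hh⟩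
      obtain ⟨r1, hr1, hr1'⟩ : ∃ r, r < D.b ∧ r ≠ D.r0 := by
        by_cases h0 : D.r0 = 0
        · exact ⟨1, by have := G.hb; omega, by omega⟩
        · exact ⟨0, by have := G.hb; omega, by omega⟩
      have g1 := hall r1 hr1 hr1'
      obtain ⟨f0, fL, -, f1, f2, f3, f4, f5, f6, f7⟩ := g1.facts G
      have hone : ∀ i < D.a, D.La i = 1 := by
        rcases G.hI with hI | hI
        · intro i hi
          by_contra hne
          obtain ⟨r, hr, hr', _, rfl⟩ := hI.2.2 i hi hne
          exact hne ((hall r hr hr').facts G).2.1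
        · exact absurd fL (hI.2.1 r1 hr1 hr1' (by omega))
      have hZ : D.Zs = ∅ := by
        rw [Finset.eq_empty_iff_forall_notMem]
        intro x hx
        simp only [Zs, Finset.mem_filter, mem_Om] at hx
        rcases inv8 G hx.1 hx.2.1 with ⟨j, hj, rfl⟩ | ⟨i, hi, h1, h2, rfl⟩ | h
        · obtain ⟨q1, q2, q3, q4, q5, -⟩ := hj.facts G
          have := ((hall j q5 q4).facts G).1
          omega
        · exact h1 (hone i hi)
        · exact hx.2.2 h
      rw [hZ, Finset.card_empty] at hb
      have a1 := SR_ge G hr1 hr1'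
      have a2 : D.H (.l (D.ψ r1) 0) < D.H (.r r1 0) := H_lt f4 (by rw [klt_iff f7 f5]; omega)
      have a3 := H_pos (D := D) (x := .l (D.ψ r1) 0) (by rw [f7])
      omega
  rcases inner_cases G he with ⟨i, hi, rfl⟩ | ⟨x, y, g, i, t, t', k⟩ | ⟨i, hi, rfl⟩ |
      ⟨x, y, g, i, t, t', k⟩
  · obtain ⟨-, -, -, f1, f2, f3, f4, f5, f6, f7⟩ := hi.facts G
    have a1 : D.H (.r i 0) < D.H (.c D.s) := H_lt f2 (by rw [klt_iff f5 kC]; omega)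
    have a2 : D.H (.r i 1) < D.H (.r D.r0 0) := H_lt f3 (by rw [klt_iff f6 kM]; omega)
    simp only [S, nx, zero_add]
    omega
  · rw [k.sum]
    obtain ⟨v1, v2, -, k1, k2, p1, p2, p3⟩ := k
    have a1 : D.H x < D.H (.c D.s) := H_lt v1 (by rw [klt_iff k1 kC]; omega)
    have a2 : D.H y ≤ D.H (.r D.r0 0) := by
      by_cases hy : y = .c D.s
      · apply H_le
        rw [hy, klt_iff kM kC]
        rw [hy, kC] at k2
        simp only [Prod.ext_iff] at k2
        omega
      · exact H_le (Ytop G v2 (by rw [k2]) hy)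
    omega
  · obtain ⟨q1, q2, q3, q4, q5, q6, q7, -⟩ := hi.facts G
    have hin : D.inner (.r i 1) := ⟨q7, ⟨q5, by omega⟩, by simp⟩
    have w1 := hi.2
    have k1 : D.key (.r i 2) = (7, 0, i, D.Rb i - 1 - 2) := by
      have e2 : (D.Rb i - 1 - 2) % 2 = 1 := by omega
      have e1 : D.Rb i ≠ 1 := by omega
      simp [key, w1, e1, e2]
    have k2 : D.key (.r i 1) = (8, 0, i, D.Rb i - 1 - 1) := by
      simp [key, w1]
    have t3 : D.T3 (.r i 1) (.r i 2) (.r i 1) 0 i (D.Rb i - 1 - 2) (D.Rb i - 1 - 1) :=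
      ⟨⟨q5, by omega⟩, q7, Or.inr ⟨rfl, rfl⟩, k1, k2, Or.inl ⟨rfl, rfl, hi⟩⟩
    exact (T2_T3 G hi t3).trans (hT3 t3)
  · exact hT3 k

end DD

namespace DD
variable {D : DD}

def gset (D : DD) : Finset ℕ := (Finset.range D.b).filter (fun r => D.isG r)

lemma R_lt_L (G : D.Good) {r : ℕ} (hr : r < D.b) (hne : r ≠ D.r0) (hG : ¬ D.isG r) :
    D.H (.r r 0) < D.H (.l (D.ψ r) 0) := by
  have hR := G.hR r hr
  have hL := G.hL _ (G.hψ r hr)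
  have hA := not_isA G hr hG
  refine H_lt (D := D) (u := .r r 0) (show D.valid (.r r 0) from ⟨hr, hR⟩) ?_
  unfold klt kl
  rcases key_r G r 0 hr hR with k | k | k | k | k | k | k | k | k | k | k | k | k
  case inl => exact absurd k.1 hG
  all_goals
    rcases key_l (D.ψ r) 0 hL with k' | k' | k' | k' | k' | k' | k' | k'
    case inl => exact absurd k'.2.1 hA
    all_goals (simp only [Prod.ext_iff] at k k'; omega)

lemma c_le_A (G : D.Good) {r : ℕ} (hG : D.isG r) :
    D.H (.r r 0) ≤ D.H (.l (D.ψ r) 0) + 1 := by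
  obtain ⟨f0, fL, -, f1, f2, f3, f4, f5, f6, f7⟩ := hG.facts G
  have := H_le_add (D := D) (u := .l (D.ψ r) 0) (v := .r r 0) {.l (D.ψ r) 0} (by
    intro x hx h1 h2
    rw [Finset.mem_singleton]
    apply key_inj G hx f4
    apply kl_tri h1
    unfold klt kl at *
    rw [f7] at *
    rw [f5] at *
    simp only at *
    omega)
  simpa using this

lemma stepA (G : D.Good) : ∑ r ∈ (Finset.range D.b).erase D.r0, D.H (.r r 0) ≤
    ∑ r ∈ (Finset.range D.b).erase D.r0, D.H (.l (D.ψ r) 0) + D.gset.card := by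
  have h1 : ∑ r ∈ (Finset.range D.b).erase D.r0, D.H (.r r 0) ≤
      ∑ r ∈ (Finset.range D.b).erase D.r0, (D.H (.l (D.ψ r) 0) + if D.isG r then 1 else 0) := by
    apply Finset.sum_le_sum
    intro r hr
    simp at hr
    by_cases hG : D.isG r
    · simpa [hG] using c_le_A G hG
    · simpa [hG] using (R_lt_L G hr.2 hr.1 hG).le
  rw [Finset.sum_add_distrib] at h1
  have h2 : ∑ r ∈ (Finset.range D.b).erase D.r0, (if D.isG r then 1 else 0) ≤ D.gset.card := by
    rw [gset, Finset.card_filter]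
    exact Finset.sum_le_sum_of_subset (Finset.erase_subset _ _)
  omega

lemma stepB (G : D.Good) : D.H (.l (D.ψ D.r0) 0) +
    ∑ r ∈ (Finset.range D.b).erase D.r0, D.H (.l (D.ψ r) 0) + D.H (.l D.l2 0) ≤
    ∑ i ∈ Finset.range D.a, D.H (.l i 0) := by
  rw [Finset.add_sum_erase _ (fun r => D.H (.l (D.ψ r) 0)) (Finset.mem_range.2 G.hr0)]
  rw [← Finset.sum_image (s := Finset.range D.b) (g := D.ψ) (f := fun i => D.H (.l i 0)),
    add_comm, ← Finset.sum_insert (f := fun i => D.H (.l i 0))]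
  · apply Finset.sum_le_sum_of_subset
    intro i hi
    simp only [Finset.mem_insert, Finset.mem_image, Finset.mem_range] at hi ⊢
    rcases hi with rfl | ⟨r, hr, rfl⟩
    · exact G.hl2
    · exact G.hψ r hr
  · simp only [Finset.mem_image, Finset.mem_range, not_exists, not_and]
    exact G.hl2'
  · intro r hr r' hr' h
    simp at hr hr'
    rw [← G.hφ r hr, ← G.hφ r' hr', h]

def Xs (D : DD) : Finset DE := D.Om.filter (fun x => (D.key x).1 = 2)

lemma Ynx (G : D.Good) {y : DE} (hy : D.valid y) (h7 : (D.key y).1 = 7) (hne : y ≠ .c D.s) :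
    nx y ∈ D.Xs := by
  simp only [Xs, Finset.mem_filter, mem_Om]
  rcases y with j | ⟨i, j⟩ | ⟨i, j⟩ <;> simp only [valid, nx] at hy ⊢
  · have : j ≠ D.s := fun h => hne (by rw [h])
    refine ⟨by omega, ?_⟩
    rcases key_c G.hs j hy with k | k | k | k | k | k | k <;>
      rcases key_c G.hs (j + 1) (by omega) with k' | k' | k' | k' | k' | k' | k' <;>
      (simp only [Prod.ext_iff] at k k'; omega)
  · have hj : j + 1 < D.La i := by
      rcases key_l i j hy.2 with k | k | k | k | k | k | k | k <;>
        (simp only [Prod.ext_iff] at k; omega)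
    refine ⟨⟨hy.1, hj⟩, ?_⟩
    rcases key_l i j hy.2 with k | k | k | k | k | k | k | k <;>
      rcases key_l i (j + 1) hj with k' | k' | k' | k' | k' | k' | k' | k' <;>
      (simp only [Prod.ext_iff] at k k'; omega)
  · have hj : j + 1 < D.Rb i := by
      rcases key_r G i j hy.1 hy.2 with k | k | k | k | k | k | k | k | k | k | k | k | k <;>
        (simp only [Prod.ext_iff] at k; omega)
    refine ⟨⟨hy.1, hj⟩, ?_⟩
    rcases key_r G i j hy.1 hy.2 with k | k | k | k | k | k | k | k | k | k | k | k | k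
    all_goals first | (exfalso; simp only [Prod.ext_iff] at k; omega) | skip
    all_goals
      rcases key_r G i (j + 1) hy.1 hj with
        k' | k' | k' | k' | k' | k' | k' | k' | k' | k' | k' | k' | k' <;>
      (simp only [Prod.ext_iff] at k k'; omega)

lemma c1_facts (G : D.Good) : D.valid (.c 1) ∧
    (D.s = 1 ∨ (1 < D.s ∧ D.s % 2 = 0 ∧ D.key (.c 1) = (8, 2, 0, 1)) ∨
     (1 < D.s ∧ D.s % 2 = 1 ∧ D.key (.c 1) = (7, 2, 0, D.s - 1))) := by
  have h1 := G.hs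
  refine ⟨h1, ?_⟩
  rcases key_c h1 1 h1 with h | h | h | h | h | h | h <;> try omega
  · exact Or.inr (Or.inl ⟨h.1, h.2.1, h.2.2.2⟩)
  · exact Or.inr (Or.inr ⟨h.1, h.2.1, h.2.2.2.2⟩)

lemma cs_le_c1 (G : D.Good) : D.s % 2 = 1 →
    D.H (.c D.s) ≤ D.H (.c 1) ∧ (D.s ≠ 1 → D.H (.c D.s) + 1 ≤ D.H (.c 1)) := by
  intro ho
  obtain ⟨hC, gc, tc, kC, pC, qC⟩ := cs_facts G
  rcases (c1_facts G).2 with h | h | h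
  · rw [h]; exact ⟨le_rfl, fun h => absurd rfl h⟩
  · omega
  · have : D.H (.c D.s) < D.H (.c 1) := H_lt hC (by rw [klt_iff kC h.2.2]; omega)
    omega

lemma M_lt_c1 (G : D.Good) (he : D.s % 2 = 0) : D.H (.r D.r0 0) + 1 ≤ D.H (.c 1) := by
  obtain ⟨hM, kM⟩ := M_facts G
  rcases (c1_facts G).2 with h | h | h
  · omega
  · exact H_lt hM (by rw [klt_iff kM h.2.2]; omega)
  · omega

/-- case I -/
lemma main_I (G : D.Good)
    (hI : D.La (D.ψ D.r0) ≠ 1 ∧ (∀ r < D.b, r ≠ D.r0 → D.Rb r % 2 = 0 → D.La (D.ψ r) ≠ 1) ∧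
        (D.La (D.ψ D.r0) % 2 = 0 → ∀ i < D.a, D.La i = 1 ∨ D.La i % 2 = 0)) :
    D.H (.c D.s) + D.H (.r D.r0 0) + D.gset.card <
      D.H (.c 1) + D.H (.l (D.ψ D.r0) 0) + D.H (.l D.l2 0) := by
  obtain ⟨hM, kM⟩ := M_facts G
  obtain ⟨hC, gc, tc, kC, pC, qC⟩ := cs_facts G
  have hψ0 := G.hψ _ G.hr0
  have hL1 := G.hL _ hψ0
  have hL2 := G.hL _ G.hl2
  have hg : D.gset = ∅ := by
    rw [Finset.eq_empty_iff_forall_notMem]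
    intro r hr
    simp only [gset, Finset.mem_filter, Finset.mem_range] at hr
    obtain ⟨f0, fL, fr, -⟩ := hr.2.facts G
    exact hI.2.1 r hr.1 fr (by omega) fL
  rw [hg, Finset.card_empty]
  by_cases hs : D.s % 2 = 0
  · have a1 := M_lt_c1 G hs
    have a2 : D.H (.c D.s) < D.H (.l (D.ψ D.r0) 0) := H_lt hC (by
      unfold klt kl
      rw [kC]
      simp only
      rcases key_l (D.ψ D.r0) 0 hL1 with k | k | k | k | k | k | k | k <;>
        (simp only [Prod.ext_iff] at k; omega))
    omega
  · have a1 := (cs_le_c1 G (by omega)).1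
    by_cases ho : D.La (D.ψ D.r0) % 2 = 1
    · have a2 : D.H (.r D.r0 0) < D.H (.l (D.ψ D.r0) 0) := H_lt hM (by
        unfold klt kl
        rw [kM]
        rcases key_l (D.ψ D.r0) 0 hL1 with k | k | k | k | k | k | k | k <;>
          (simp only [Prod.ext_iff] at k; omega))
      omega
    · have hall := hI.2.2 (by omega)
      have kL : D.key (.l (D.ψ D.r0) 0) = (7, 5, D.ψ D.r0, D.La (D.ψ D.r0) - 1) := by
        rcases key_l (D.ψ D.r0) 0 hL1 with k | k | k | k | k | k | k | k <;> first | omega | skip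
        exact k.2.2.2
      set Q := D.Om.filter (fun x => ¬ D.klt x (.l (D.ψ D.r0) 0) ∧ D.klt x (.r D.r0 0)) with hQ
      have a2 : D.H (.r D.r0 0) ≤ D.H (.l (D.ψ D.r0) 0) + Q.card := by
        apply H_le_add
        intro x hx h1 h2
        simp only [hQ, Finset.mem_filter, mem_Om]
        exact ⟨hx, h1, h2⟩
      have hQX : ∀ x ∈ Q, nx x ∈ D.Xs := by
        intro x hx
        simp only [hQ, Finset.mem_filter, mem_Om] at hx
        obtain ⟨hx, h1, h2⟩ := hx
        have hxs : x ≠ .c D.s := by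
          rintro rfl
          rw [klt_iff kC kL] at h1
          rw [klt_iff kC kM] at h2
          omega
        unfold klt kl at h1 h2
        rw [kL] at h1
        rw [kM] at h2
        simp only at h1 h2
        exact Ynx G hx (by omega) hxs
      have a3 : (insert (DE.c 0) (Q.image nx)).card ≤ D.H (.l D.l2 0) := by
        have kl2 : 5 ≤ (D.key (.l D.l2 0)).1 := by
          have hA := not_isA_l2 G
          have := hall _ G.hl2
          rcases key_l D.l2 0 hL2 with k | k | k | k | k | k | k | k
          case inl => exact absurd k.2.1 hA
          all_goals (simp only [Prod.ext_iff] at k; omega)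
        apply card_le_H
        intro x hx
        simp only [Finset.mem_insert, Finset.mem_image] at hx
        rcases hx with rfl | ⟨q, hq, rfl⟩
        · refine ⟨by simp [valid], ?_⟩
          unfold klt kl; rw [key_root]; simp only; omega
        · have := hQX q hq
          simp only [Xs, Finset.mem_filter, mem_Om] at this
          refine ⟨this.1, ?_⟩
          unfold klt kl; omega
      have hc : (insert (DE.c 0) (Q.image nx)).card = Q.card + 1 := by
        rw [Finset.card_insert_of_notMem, Finset.card_image_of_injective _ nx_inj]
        simp only [Finset.mem_image, not_exists, not_and]
        intro q hq h
        have := hQX q hq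
        simp only [Xs, Finset.mem_filter, mem_Om] at this
        rw [h, key_root] at this
        simp at this
      omega

lemma inv511 (G : D.Good) {x : DE} (hx : D.valid x) (h : (D.key x).1 = 5)
    (h' : (D.key x).2.1 ≥ 11) : x = .l (D.ψ D.r0) 0 ∨ x = .l D.l2 0 := by
  rcases x with j | ⟨i, j⟩ | ⟨i, j⟩ <;> simp only [valid] at hx
  · rcases key_c G.hs j hx with k | k | k | k | k | k | k <;>
      (simp only [Prod.ext_iff] at k; omega)
  · rcases key_l i j hx.2 with k | k | k | k | k | k | k | k
    case inr.inl =>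
      rcases k.2.2.1 with q | q
      · left; rw [q, k.2.2.2.1]
      · right; rw [q, k.2.2.2.1]
    all_goals (simp only [Prod.ext_iff] at k; omega)
  · rcases key_r G i j hx.1 hx.2 with k | k | k | k | k | k | k | k | k | k | k | k | k <;>
      (simp only [Prod.ext_iff] at k; omega)

/-- case II, with the two special one-legs ordered -/
lemma main_II_aux (G : D.Good) {p q : ℕ} (hp : p < D.a) (hlt : p < q)
    (kp : D.key (.l p 0) = (5, 11, p, 0)) (kq : D.key (.l q 0) = (5, 11, q, 0))
    (hpq : ∀ x, x = DE.l (D.ψ D.r0) 0 ∨ x = .l D.l2 0 → x = .l p 0 ∨ x = .l q 0) :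
    D.H (.c D.s) + D.H (.r D.r0 0) + D.gset.card <
      D.H (.c 1) + D.H (.l p 0) + D.H (.l q 0) := by
  obtain ⟨hM, kM⟩ := M_facts G
  obtain ⟨hC, gc, tc, kC, pC, qC⟩ := cs_facts G
  -- lower bound for the smaller one
  have hB : 1 + D.Xs.card + 2 * D.gset.card ≤ D.H (.l p 0) := by
    have hcard : (insert (DE.c 0) (D.Xs ∪ (D.gset.image (fun r => DE.l (D.ψ r) 0) ∪
        D.gset.image (fun r => DE.r r 0)))).card = 1 + D.Xs.card + 2 * D.gset.card := by
      rw [Finset.card_insert_of_notMem, Finset.card_union_of_disjoint,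
        Finset.card_union_of_disjoint, Finset.card_image_of_injOn, Finset.card_image_of_injOn]
      · ring
      · intro r hr r' hr' h
        simpa using h
      · intro r hr r' hr' h
        simp [gset] at hr hr' h
        rw [← G.hφ r hr.1, ← G.hφ r' hr'.1, h]
      · rw [Finset.disjoint_left]
        intro x hx hx'
        simp only [Finset.mem_image] at hx hx'
        obtain ⟨r, _, rfl⟩ := hx
        obtain ⟨r', _, h⟩ := hx'
        simp at h
      · rw [Finset.disjoint_left]
        intro x hx hx'
        simp only [Xs, Finset.mem_filter] at hx
        simp only [Finset.mem_union, Finset.mem_image, gset, Finset.mem_filter] at hx'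
        rcases hx' with ⟨r, hr, rfl⟩ | ⟨r, hr, rfl⟩
        · obtain ⟨-, -, -, f1, f2, f3, f4, f5, f6, f7⟩ := hr.2.facts G
          rw [f7] at hx; simp at hx
        · obtain ⟨-, -, -, f1, f2, f3, f4, f5, f6, f7⟩ := hr.2.facts G
          rw [f5] at hx; simp at hx
      · simp [Xs, key_root]
    rw [← hcard]
    apply card_le_H
    intro x hx
    simp only [Finset.mem_insert, Finset.mem_union, Finset.mem_image, gset, Xs,
      Finset.mem_filter, mem_Om] at hx
    rcases hx with rfl | hx | ⟨r, hr, rfl⟩ | ⟨r, hr, rfl⟩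
    · exact ⟨by simp [valid], by rw [klt_iff key_root kp]; omega⟩
    · refine ⟨hx.1, ?_⟩
      unfold klt kl; rw [kp]; simp only; omega
    · obtain ⟨-, -, -, f1, f2, f3, f4, f5, f6, f7⟩ := hr.2.facts G
      exact ⟨f4, by rw [klt_iff f7 kp]; omega⟩
    · obtain ⟨-, -, -, f1, f2, f3, f4, f5, f6, f7⟩ := hr.2.facts G
      exact ⟨f2, by rw [klt_iff f5 kp]; omega⟩
  -- upper bound above the larger one
  have hU : ∀ P, D.valid P → (D.key P).1 = 7 →
      ∀ Y : Finset DE, (∀ x, D.valid x → (D.key x).1 = 7 → ¬ D.klt P x → x ∈ Y) →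
      D.H P ≤ D.H (.l q 0) + (D.gset.card + Y.card) := by
    intro P hP h7 Y hY
    have hPY : P ∈ Y := hY P hP h7 (kl_irr _)
    have h1 : D.H P ≤ D.H (.l q 0) +
        (insert (.l q 0) (D.gset.image (fun r => DE.r r 1) ∪ Y.erase P)).card := by
      apply H_le_add
      intro x hx h1 h2
      have hxP : x ≠ P := fun h => kl_irr _ (h ▸ h2)
      simp only [Finset.mem_insert, Finset.mem_union, Finset.mem_image, Finset.mem_erase]
      have hc : (D.key x).1 = 5 ∧ (D.key x).2.1 ≥ 11 ∨ (D.key x).1 = 6 ∨ (D.key x).1 = 7 := by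
        unfold klt kl at h1 h2
        rw [kq] at h1
        simp only at h1
        omega
      rcases hc with ⟨c1, c2⟩ | hc | hc
      · rcases hpq x (inv511 G hx c1 c2) with rfl | rfl
        · rw [klt_iff kp kq] at h1; omega
        · exact Or.inl rfl
      · obtain ⟨j, hj, rfl⟩ := inv6 G hx hc
        right; left
        exact ⟨j, by simp [gset, hj, hj.1], rfl⟩
      · right; right
        exact ⟨hxP, hY x hx hc (fun h => kl_irr _ (kl_trans h h2))⟩
    have c1 := Finset.card_insert_le (DE.l q 0) (D.gset.image (fun r => DE.r r 1) ∪ Y.erase P)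
    have c2 := Finset.card_union_le (D.gset.image (fun r => DE.r r 1)) (Y.erase P)
    have c3 : (D.gset.image (fun r => DE.r r 1)).card ≤ D.gset.card := Finset.card_image_le
    have c4 := Finset.card_erase_of_mem hPY
    have c5 : 0 < Y.card := Finset.card_pos.2 ⟨P, hPY⟩
    omega
  set Y0 := D.Om.filter (fun x => (D.key x).1 = 7 ∧ x ≠ .c D.s) with hY0
  have hY0c : Y0.card ≤ D.Xs.card := by
    rw [← Finset.card_image_of_injective _ nx_inj]
    apply Finset.card_le_card
    intro x hx
    simp only [Finset.mem_image, hY0, Finset.mem_filter, mem_Om] at hx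
    obtain ⟨y, hy, rfl⟩ := hx
    exact Ynx G hy.1 hy.2.1 hy.2.2
  have hU1 : ∀ P, D.valid P → (D.key P).1 = 7 →
      D.H P ≤ D.H (.l q 0) + (D.gset.card + (D.Xs.card + 1)) := by
    intro P hP h7
    have := hU P hP h7 (insert (.c D.s) Y0) (by
      intro x hx hx7 _
      simp only [hY0, Finset.mem_insert, Finset.mem_filter, mem_Om]
      by_cases h : x = .c D.s
      · exact Or.inl h
      · exact Or.inr ⟨hx, hx7, h⟩)
    have c := Finset.card_insert_le (.c D.s) Y0
    omega
  by_cases hs : D.s % 2 = 0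
  · have a1 := M_lt_c1 G hs
    have a2 := hU1 (.c D.s) hC (by rw [kC])
    omega
  · have a1 := cs_le_c1 G (by omega)
    by_cases h1 : D.s = 1
    · have a2 := hU (.r D.r0 0) hM (by rw [kM]) Y0 (by
        intro x hx hx7 hh
        simp only [hY0, Finset.mem_filter, mem_Om]
        refine ⟨hx, hx7, ?_⟩
        rintro rfl
        rw [klt_iff kM kC] at hh
        omega)
      have := a1.1
      omega
    · have a2 := hU1 (.r D.r0 0) hM (by rw [kM])
      have := a1.2 h1
      omega

lemma main_II (G : D.Good) (h1 : D.La (D.ψ D.r0) = 1) (h2 : D.La D.l2 = 1) :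
    D.H (.c D.s) + D.H (.r D.r0 0) + D.gset.card <
      D.H (.c 1) + D.H (.l (D.ψ D.r0) 0) + D.H (.l D.l2 0) := by
  have hne := G.hl2' _ G.hr0
  have hA1 : ¬ D.isA (D.ψ D.r0) := not_isA G G.hr0 (fun h => (h.facts G).2.2.1 rfl)
  have hA2 := not_isA_l2 G
  have k1 : D.key (.l (D.ψ D.r0) 0) = (5, 11, D.ψ D.r0, 0) := by
    simp [key, gL, h1, hA1]
  have k2 : D.key (.l D.l2 0) = (5, 11, D.l2, 0) := by
    simp [key, gL, h2, hA2]
  rcases Nat.lt_or_gt_of_ne hne with h | h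
  · exact main_II_aux G (G.hψ _ G.hr0) h k1 k2 (fun x hx => hx)
  · have := main_II_aux G G.hl2 h k2 k1 (fun x hx => hx.symm)
    omega

theorem SR_lt_SL (G : D.Good) : D.SR < D.SL := by
  have hm : D.H (.c D.s) + D.H (.r D.r0 0) + D.gset.card <
      D.H (.c 1) + D.H (.l (D.ψ D.r0) 0) + D.H (.l D.l2 0) := by
    rcases G.hI with h | h
    · exact main_II G h.1 h.2.1
    · exact main_I G h
  have a := stepA G
  have b := stepB G
  rw [SR_split G, SL]
  omega

end DD

namespace DD

lemma exists_injOn (X Y : Finset ℕ) (h : X.card ≤ Y.card) :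
    ∃ f : ℕ → ℕ, (∀ x ∈ X, f x ∈ Y) ∧ ∀ x ∈ X, ∀ y ∈ X, f x = f y → x = y := by
  induction X using Finset.induction_on with
  | empty => exact ⟨id, by simp, by simp⟩
  | insert x X hx ih =>
    rw [Finset.card_insert_of_notMem hx] at h
    obtain ⟨f, hf, hi⟩ := ih (by omega)
    have hc : (X.image f).card < Y.card := lt_of_le_of_lt Finset.card_image_le (by omega)
    obtain ⟨y, hy, hy'⟩ := Finset.exists_mem_notMem_of_card_lt_card hc
    have hne : ∀ z ∈ X, f z ≠ y := fun z hz h => hy' (Finset.mem_image.2 ⟨z, hz, h⟩)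
    have hxz : ∀ z ∈ X, z ≠ x := fun z hz h => hx (h ▸ hz)
    refine ⟨fun z => if z = x then y else f z, ?_, ?_⟩
    · intro z hz
      rcases Finset.mem_insert.1 hz with rfl | hz
      · simpa using hy
      · simpa [hxz z hz] using hf z hz
    · intro z hz w hw
      rcases Finset.mem_insert.1 hz with hz | hz <;> rcases Finset.mem_insert.1 hw with hw | hw
      · intro _; rw [hz, hw]
      · simp only [hz, if_true, hxz w hw, if_false]
        intro h; exact absurd h.symm (hne w hw)
      · simp only [hw, if_true, hxz z hz, if_false]
        intro h; exact absurd h (hne z hz)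
      · simp only [hxz z hz, hxz w hw, if_false]
        exact hi z hz w hw

lemma exists_good (s a b : ℕ) (La Rb : ℕ → ℕ) (hs : 1 ≤ s) (hb : 2 ≤ b) (hab : b < a)
    (hL : ∀ i < a, 1 ≤ La i) (hR : ∀ i < b, 1 ≤ Rb i) (r0 : ℕ) (hr0 : r0 < b)
    (her0 : Rb r0 % 2 = 0) : ∃ (ψ φ : ℕ → ℕ) (l2 : ℕ), Good ⟨s, a, b, La, Rb, ψ, φ, r0, l2⟩ := by
  suffices hmain : ∃ (ψ : ℕ → ℕ) (l2 : ℕ), (∀ r < b, ψ r < a) ∧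
      (∀ r < b, ∀ r' < b, ψ r = ψ r' → r = r') ∧ l2 < a ∧ (∀ r < b, ψ r ≠ l2) ∧
      ((La (ψ r0) = 1 ∧ La l2 = 1 ∧
        ∀ i < a, La i ≠ 1 → ∃ r < b, r ≠ r0 ∧ Rb r % 2 = 0 ∧ ψ r = i) ∨
       (La (ψ r0) ≠ 1 ∧ (∀ r < b, r ≠ r0 → Rb r % 2 = 0 → La (ψ r) ≠ 1) ∧
        (La (ψ r0) % 2 = 0 → ∀ i < a, La i = 1 ∨ La i % 2 = 0))) by
    obtain ⟨ψ, l2, h1, h2, h3, h4, h5⟩ := hmain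
    refine ⟨ψ, Function.invFunOn ψ {r | r < b}, l2, ?_⟩
    refine ⟨hs, hb, hL, hR, hr0, her0, h1, ?_, h3, h4, h5⟩
    intro r hr
    have hex : ∃ x ∈ {r | r < b}, ψ x = ψ r := ⟨r, hr, rfl⟩
    exact h2 _ (Function.invFunOn_mem hex) _ hr (Function.invFunOn_eq hex)
  set N := (Finset.range a).filter (fun i => La i ≠ 1) with hN
  set Q := (Finset.range b).filter (fun r => r ≠ r0 ∧ Rb r % 2 = 0) with hQ
  have mN : ∀ i, i ∈ N ↔ i < a ∧ La i ≠ 1 := by intro i; simp [hN]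
  have mQ : ∀ r, r ∈ Q ↔ r < b ∧ r ≠ r0 ∧ Rb r % 2 = 0 := by intro i; simp [hQ]
  have hNa : N ⊆ Finset.range a := Finset.filter_subset _ _
  have hQb : Q ⊆ Finset.range b := Finset.filter_subset _ _
  have hQb' : Q.card < b := by
    have : Q.card < (Finset.range b).card := Finset.card_lt_card
      ⟨hQb, fun h => ((mQ r0).1 (h (Finset.mem_range.2 hr0))).2.1 rfl⟩
    simpa using this
  by_cases hfq : N.card ≤ Q.card
  · obtain ⟨Q', hQ', hc⟩ := Finset.exists_subset_card_eq hfq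
    obtain ⟨f, hf, hfi⟩ := exists_injOn Q' N (by omega)
    have hsurj : Q'.image f = N := by
      apply Finset.eq_of_subset_of_card_le
      · intro y hy
        obtain ⟨x, hx, rfl⟩ := Finset.mem_image.1 hy
        exact hf x hx
      · rw [Finset.card_image_of_injOn (fun x hx y hy => hfi x hx y hy)]; omega
    have hO : (Finset.range a \ N).card = a - N.card := by
      rw [Finset.card_sdiff_of_subset hNa, Finset.card_range]
    have hO2 : (Finset.range b \ Q').card = b - N.card := by
      rw [Finset.card_sdiff_of_subset (hQ'.trans hQb), Finset.card_range, hc]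
    obtain ⟨l2, hl2⟩ : (Finset.range a \ N).Nonempty := Finset.card_pos.1 (by omega)
    obtain ⟨g, hg, hgi⟩ := exists_injOn (Finset.range b \ Q') ((Finset.range a \ N).erase l2) (by
      rw [Finset.card_erase_of_mem hl2]; omega)
    simp only [Finset.mem_sdiff, Finset.mem_range, Finset.mem_erase] at hg hgi hl2
    have hr0Q : r0 ∉ Q' := fun h => ((mQ r0).1 (hQ' h)).2.1 rfl
    have hg' : ∀ r < b, r ∉ Q' → g r ≠ l2 ∧ g r < a ∧ La (g r) = 1 := by
      intro r hr hrq
      have := hg r ⟨hr, hrq⟩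
      rw [mN] at this
      refine ⟨this.1, this.2.1, ?_⟩
      by_contra h
      exact this.2.2 ⟨this.2.1, h⟩
    have hf' : ∀ r ∈ Q', f r < a ∧ La (f r) ≠ 1 := fun r hr => (mN _).1 (hf r hr)
    have hl2' : La l2 = 1 := by
      by_contra h
      exact hl2.2 ((mN _).2 ⟨hl2.1, h⟩)
    refine ⟨fun r => if r ∈ Q' then f r else g r, l2, ?_, ?_, hl2.1, ?_, Or.inl ⟨?_, hl2', ?_⟩⟩
    · intro r hr
      by_cases h : r ∈ Q'
      · simpa [h] using (hf' r h).1
      · simpa [h] using (hg' r hr h).2.1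
    · intro r hr r' hr'
      by_cases h : r ∈ Q' <;> by_cases h' : r' ∈ Q' <;> simp only [h, h', if_true, if_false]
      · exact hfi r h r' h'
      · intro e
        exact absurd (e ▸ (hg' r' hr' h').2.2) (hf' r h).2
      · intro e
        exact absurd (e ▸ (hg' r hr h).2.2) (hf' r' h').2
      · exact hgi r ⟨hr, h⟩ r' ⟨hr', h'⟩
    · intro r hr
      by_cases h : r ∈ Q'
      · simp only [h, if_true]
        intro e
        exact (hf' r h).2 (e ▸ hl2')
      · simpa [h] using (hg' r hr h).1
    · simpa [hr0Q] using (hg' r0 hr0 hr0Q).2.2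
    · intro i hi hi1
      have : i ∈ Q'.image f := by rw [hsurj]; exact (mN i).2 ⟨hi, hi1⟩
      obtain ⟨r, hr, e⟩ := Finset.mem_image.1 this
      have hq := (mQ r).1 (hQ' hr)
      exact ⟨r, hq.1, hq.2.1, hq.2.2, by simpa [hr] using e⟩
  · obtain ⟨n0, hn0, hn0'⟩ : ∃ n0 ∈ N, (La n0 % 2 = 0 → ∀ i < a, La i = 1 ∨ La i % 2 = 0) := by
      by_cases h : ∃ n ∈ N, La n % 2 = 1
      · obtain ⟨n, hn, h⟩ := h
        exact ⟨n, hn, by omega⟩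
      · obtain ⟨n, hn⟩ : N.Nonempty := Finset.card_pos.1 (by omega)
        refine ⟨n, hn, fun _ i hi => ?_⟩
        by_contra hc
        exact h ⟨i, (mN i).2 ⟨hi, by omega⟩, by omega⟩
    obtain ⟨f, hf, hfi⟩ := exists_injOn Q (N.erase n0) (by
      rw [Finset.card_erase_of_mem hn0]; omega)
    set Z := insert n0 (Q.image f) with hZ
    set W := insert r0 Q with hW
    have hZa : Z ⊆ Finset.range a := by
      intro z hz
      rw [hZ, Finset.mem_insert, Finset.mem_image] at hz
      rcases hz with rfl | ⟨r, hr, rfl⟩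
      · exact hNa hn0
      · exact hNa (Finset.mem_of_mem_erase (hf r hr))
    have hWb : W ⊆ Finset.range b := by
      intro z hz
      rw [hW, Finset.mem_insert] at hz
      rcases hz with rfl | hz
      · exact Finset.mem_range.2 hr0
      · exact hQb hz
    have hr0Q : r0 ∉ Q := fun h => ((mQ r0).1 h).2.1 rfl
    have hZc : Z.card ≤ Q.card + 1 :=
      (Finset.card_insert_le _ _).trans (by have := Finset.card_image_le (s := Q) (f := f); omega)
    have hWc : W.card = Q.card + 1 := Finset.card_insert_of_notMem hr0Q
    have hO : (Finset.range a \ Z).card = a - Z.card := by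
      rw [Finset.card_sdiff_of_subset hZa, Finset.card_range]
    have hO2 : (Finset.range b \ W).card = b - W.card := by
      rw [Finset.card_sdiff_of_subset hWb, Finset.card_range]
    obtain ⟨l2, hl2⟩ : (Finset.range a \ Z).Nonempty := Finset.card_pos.1 (by omega)
    obtain ⟨g, hg, hgi⟩ := exists_injOn (Finset.range b \ W) ((Finset.range a \ Z).erase l2) (by
      rw [Finset.card_erase_of_mem hl2]; omega)
    simp only [Finset.mem_sdiff, Finset.mem_range, Finset.mem_erase] at hg hgi hl2
    have hfZ : ∀ r ∈ Q, f r ∈ Z := fun r hr =>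
      Finset.mem_insert_of_mem (Finset.mem_image_of_mem _ hr)
    have hnZ : n0 ∈ Z := Finset.mem_insert_self _ _
    set k : ℕ → ℕ := fun r => if r = r0 then n0 else f r with hk
    have hkZ : ∀ r ∈ W, k r ∈ Z := by
      intro r hr
      rcases Finset.mem_insert.1 hr with rfl | hr
      · simpa [hk] using hnZ
      · have := ((mQ r).1 hr).2.1
        simpa [hk, this] using hfZ r hr
    have hki : ∀ r ∈ W, ∀ r' ∈ W, k r = k r' → r = r' := by
      intro r hr r' hr'
      rcases Finset.mem_insert.1 hr with rfl | hr <;> rcases Finset.mem_insert.1 hr' with rfl | hr'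
      · simp
      · have := ((mQ r').1 hr').2.1
        simp only [hk, if_true, this, if_false]
        intro e
        exact absurd e.symm (Finset.ne_of_mem_erase (hf r' hr'))
      · have := ((mQ r).1 hr).2.1
        simp only [hk, if_true, this, if_false]
        intro e
        exact absurd e (Finset.ne_of_mem_erase (hf r hr))
      · have h1 := ((mQ r).1 hr).2.1
        have h2 := ((mQ r').1 hr').2.1
        simp only [hk, h1, h2, if_false]
        exact hfi r hr r' hr'
    have hr0W : r0 ∈ W := Finset.mem_insert_self _ _
    have hk0 : k r0 = n0 := by simp [hk]
    refine ⟨fun r => if r ∈ W then k r else g r, l2, ?_, ?_, hl2.1, ?_, Or.inr ⟨?_, ?_, ?_⟩⟩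
    · intro r hr
      by_cases h : r ∈ W
      · simpa [h] using hZa (hkZ r h)
      · simpa [h] using (hg r ⟨hr, h⟩).2.1
    · intro r hr r' hr'
      by_cases h : r ∈ W <;> by_cases h' : r' ∈ W <;> simp only [h, h', if_true, if_false]
      · exact hki r h r' h'
      · intro e
        exact absurd (e ▸ hkZ r h) (hg r' ⟨hr', h'⟩).2.2
      · intro e
        exact absurd (e ▸ hkZ r' h') (hg r ⟨hr, h⟩).2.2
      · exact hgi r ⟨hr, h⟩ r' ⟨hr', h'⟩
    · intro r hr
      by_cases h : r ∈ W
      · simp only [h, if_true]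
        intro e
        exact hl2.2 (e ▸ hkZ r h)
      · simpa [h] using (hg r ⟨hr, h⟩).1
    · simp only [hr0W, if_true, hk0]
      exact ((mN _).1 hn0).2
    · intro r hr hne he
      have hq : r ∈ Q := (mQ r).2 ⟨hr, hne, he⟩
      have hw : r ∈ W := Finset.mem_insert_of_mem hq
      simp only [hw, if_true, hk, hne, if_false]
      exact ((mN _).1 (Finset.mem_of_mem_erase (hf r hq))).2
    · simp only [hr0W, if_true, hk0]
      exact hn0'

end DD

namespace DD
variable {D : DD}

def relE (D : DD) (e e' : DE) : Prop :=
  e' = nx e ∨ (e = .c 0 ∧ ∃ i, e' = .l i 0) ∨ (e = .c D.s ∧ ∃ i, e' = .r i 0)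

def ch (D : DD) (e : DE) : Finset DE := D.Om.filter (fun w => D.relE e w)

lemma ch_inner {e : DE} (he : D.inner e) : D.ch e = {nx e} := by
  obtain ⟨h1, h2, h3⟩ := he
  have h4 : e ≠ .c D.s := by
    rintro rfl
    simp [nx, valid] at h2
  ext x
  simp only [ch, relE, Finset.mem_filter, mem_Om, h3, h4, false_and, or_false,
    Finset.mem_singleton]
  constructor
  · exact fun h => h.2
  · rintro rfl; exact ⟨h2, rfl⟩

lemma ch_leaf {e : DE} (he : D.leaf e) : D.ch e = ∅ := by
  obtain ⟨h1, h2, h3⟩ := he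
  rw [Finset.eq_empty_iff_forall_notMem]
  intro x
  simp only [ch, relE, Finset.mem_filter, mem_Om, h3, false_and, or_false]
  rintro ⟨hx, rfl⟩
  exact h2 hx

lemma ch_root (hs : 1 ≤ D.s) (hL : ∀ i < D.a, 1 ≤ D.La i) : D.ch (.c 0) =
    insert (.c 1) ((Finset.range D.a).image (fun i => DE.l i 0)) := by
  ext x
  simp only [ch, relE, Finset.mem_filter, mem_Om, nx, Finset.mem_insert, Finset.mem_image,
    Finset.mem_range]
  constructor
  · rintro ⟨hx, rfl | ⟨-, i, rfl⟩ | ⟨h, -⟩⟩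
    · exact Or.inl rfl
    · exact Or.inr ⟨i, hx.1, rfl⟩
    · simp at h; omega
  · rintro (rfl | ⟨i, hi, rfl⟩)
    · exact ⟨hs, Or.inl rfl⟩
    · exact ⟨⟨hi, hL i hi⟩, Or.inr (Or.inl ⟨trivial, i, rfl⟩)⟩

lemma ch_right (hs : 1 ≤ D.s) (hR : ∀ i < D.b, 1 ≤ D.Rb i) : D.ch (.c D.s) =
    (Finset.range D.b).image (fun i => DE.r i 0) := by
  ext x
  simp only [ch, relE, Finset.mem_filter, mem_Om, nx, Finset.mem_image,
    Finset.mem_range]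
  constructor
  · rintro ⟨hx, rfl | ⟨h, -⟩ | ⟨-, i, rfl⟩⟩
    · simp [valid] at hx
    · simp at h; omega
    · exact ⟨i, hx.1, rfl⟩
  · rintro ⟨i, hi, rfl⟩
    exact ⟨⟨hi, hR i hi⟩, Or.inr (Or.inr ⟨trivial, i, rfl⟩)⟩

def VS (D : DD) (e : DE) : ℕ := D.H e + ∑ w ∈ D.ch e, D.H w

def dg (D : DD) (e : DE) : ℕ := (if e = .c 0 then 0 else 1) + ∑ _w ∈ D.ch e, 1

lemma classify (D : DD) {e : DE} (he : D.valid e) :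
    e = .c 0 ∨ e = .c D.s ∨ D.inner e ∨ D.leaf e := by
  by_cases h0 : e = .c 0
  · exact Or.inl h0
  by_cases hS : e = .c D.s
  · exact Or.inr (Or.inl hS)
  right; right
  by_cases hn : D.valid (nx e)
  · exact Or.inl ⟨he, hn, h0⟩
  · refine Or.inr ⟨he, hn, ?_⟩
    rintro j rfl
    have : j ≠ D.s := fun h => hS (by rw [h])
    simp only [valid, nx] at he hn
    omega

lemma VS_root (G : D.Good) : D.VS (.c 0) = D.SL := by
  rw [VS, ch_root G.hs G.hL, H_root, Finset.sum_insert, Finset.sum_image, SL]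
  · simp
  · intro i _ j _ h; simpa using h
  · simp

lemma VS_right (G : D.Good) : D.VS (.c D.s) = D.SR := by
  rw [VS, ch_right G.hs G.hR, Finset.sum_image, SR]
  intro i _ j _ h; simpa using h

lemma VS_inner {e : DE} (he : D.inner e) : D.VS e = D.S e := by
  rw [VS, ch_inner he, Finset.sum_singleton, S]

lemma VS_leaf {e : DE} (he : D.leaf e) : D.VS e = D.H e := by
  rw [VS, ch_leaf he, Finset.sum_empty, add_zero]

lemma dg_root (hs : 1 ≤ D.s) (hL : ∀ i < D.a, 1 ≤ D.La i) : D.dg (.c 0) = D.a + 1 := by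
  rw [dg, ch_root hs hL, Finset.sum_insert, Finset.sum_image]
  · simp [add_comm]
  · intro i _ j _ h; simpa using h
  · simp

lemma dg_right (hs : 1 ≤ D.s) (hR : ∀ i < D.b, 1 ≤ D.Rb i) : D.dg (.c D.s) = D.b + 1 := by
  rw [dg, ch_right hs hR, Finset.sum_image, if_neg]
  · simp [add_comm]
  · simp; omega
  · intro i _ j _ h; simpa using h

lemma dg_inner {e : DE} (he : D.inner e) : D.dg e = 2 := by
  rw [dg, ch_inner he, Finset.sum_singleton, if_neg he.2.2]

lemma dg_leaf {e : DE} (he : D.leaf e) : D.dg e = 1 := by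
  rw [dg, ch_leaf he, Finset.sum_empty, if_neg (he.2.2 0), add_zero]

lemma leaf_lt_SR (G : D.Good) {e : DE} (he : D.leaf e) : D.H e < D.SR := by
  have h1 := G.hR _ G.hr0
  have h2 := G.her0
  have hin : D.inner (.r D.r0 0) := by
    refine ⟨⟨G.hr0, h1⟩, ⟨G.hr0, ?_⟩, by simp⟩
    omega
  exact (leaf_lt G he hin).trans (inner_lt_SR G hin)

lemma VS_main (G : D.Good) (hab : D.b < D.a) {u v : DE} (hu : D.valid u) (hv : D.valid v) :
    (D.VS u = D.VS v → u = v) ∧ (D.dg u < D.dg v → D.VS u < D.VS v) := by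
  have hSS := SR_lt_SL G
  have hb := G.hb
  rcases D.classify hu with rfl | rfl | iu | lu <;> rcases D.classify hv with rfl | rfl | iv | lv <;>
    try simp only [VS_root G, VS_right G, dg_root G.hs G.hL, dg_right G.hs G.hR]
  all_goals try rw [VS_inner iu, dg_inner iu]
  all_goals try rw [VS_inner iv, dg_inner iv]
  all_goals try rw [VS_leaf lu, dg_leaf lu]
  all_goals try rw [VS_leaf lv, dg_leaf lv]
  all_goals try have a1 := inner_lt_SR G iu
  all_goals try have a2 := inner_lt_SR G iv
  all_goals try have a3 := leaf_lt_SR G lu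
  all_goals try have a4 := leaf_lt_SR G lv
  all_goals try have a5 := leaf_lt G lu iv
  all_goals try have a6 := leaf_lt G lv iu
  all_goals refine ⟨fun h => ?_, fun h => ?_⟩
  all_goals first
    | rfl
    | (exfalso; omega)
    | omega
    | exact S_inj G iu iv h
    | exact H_inj G hu hv h

end DD

/-- the code of a vertex -/
def toE {s : ℕ} {L R : List ℕ} : DSVert s L R → DE
  | Sum.inl a => .c a
  | Sum.inr (Sum.inl p) => .l p.1 p.2
  | Sum.inr (Sum.inr p) => .r p.1 p.2

lemma toE_inj {s : ℕ} {L R : List ℕ} : Function.Injective (toE (s := s) (L := L) (R := R)) := by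
  rintro (a | ⟨i, j⟩ | ⟨i, j⟩) (a' | ⟨i', j'⟩ | ⟨i', j'⟩) h <;>
    simp only [toE, DE.c.injEq, DE.l.injEq, DE.r.injEq, reduceCtorEq] at h
  · rw [Fin.ext h]
  · obtain ⟨h1, h2⟩ := h
    obtain rfl := Fin.ext h1
    rw [Fin.ext h2]
  · obtain ⟨h1, h2⟩ := h
    obtain rfl := Fin.ext h1
    rw [Fin.ext h2]

/-- The defining relation of the double spider. -/
def dsRel (s : ℕ) (L R : List ℕ) : DSVert s L R → DSVert s L R → Prop := fun x y =>
    match x, y with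
    | Sum.inl a, Sum.inl b => (b : ℕ) = (a : ℕ) + 1
    | Sum.inl a, Sum.inr (Sum.inl p) => (a : ℕ) = 0 ∧ (p.2 : ℕ) = 0
    | Sum.inl a, Sum.inr (Sum.inr p) => (a : ℕ) = s ∧ (p.2 : ℕ) = 0
    | Sum.inr (Sum.inl p), Sum.inr (Sum.inl q) => p.1 = q.1 ∧ (q.2 : ℕ) = (p.2 : ℕ) + 1
    | Sum.inr (Sum.inr p), Sum.inr (Sum.inr q) => p.1 = q.1 ∧ (q.2 : ℕ) = (p.2 : ℕ) + 1
    | _, _ => False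

lemma ds_eq (s : ℕ) (L R : List ℕ) : DoubleSpider s L R = SimpleGraph.fromRel (dsRel s L R) := rfl

lemma dsRel_iff (D : DD) {L R : List ℕ} (x y : DSVert D.s L R) :
    dsRel D.s L R x y ↔ D.relE (toE x) (toE y) := by
  rcases x with a | ⟨i, j⟩ | ⟨i, j⟩ <;> rcases y with a' | ⟨i', j'⟩ | ⟨i', j'⟩ <;>
    simp [dsRel, toE, DD.relE, DD.nx, -Fin.val_eq_zero_iff] <;> rw [Fin.ext_iff] <;> omega

/-- the parent of a vertex -/
def dsPar {s : ℕ} {L R : List ℕ} : DSVert s L R → DSVert s L R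
  | Sum.inl a => Sum.inl ⟨a - 1, by omega⟩
  | Sum.inr (Sum.inl p) => if (p.2 : ℕ) = 0 then Sum.inl 0 else
      Sum.inr (Sum.inl ⟨p.1, ⟨p.2 - 1, by omega⟩⟩)
  | Sum.inr (Sum.inr p) => if (p.2 : ℕ) = 0 then Sum.inl (Fin.last s) else
      Sum.inr (Sum.inr ⟨p.1, ⟨p.2 - 1, by omega⟩⟩)

def dsDep {s : ℕ} {L R : List ℕ} : DSVert s L R → ℕ
  | Sum.inl a => a
  | Sum.inr (Sum.inl p) => p.2 + 1
  | Sum.inr (Sum.inr p) => s + p.2 + 1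

lemma ds_dep {s : ℕ} {L R : List ℕ} (y : DSVert s L R) (hy : y ≠ Sum.inl 0) :
    dsDep (dsPar y) < dsDep y := by
  rcases y with a | ⟨i, j⟩ | ⟨i, j⟩
  · have : (a : ℕ) ≠ 0 := fun h => hy (by rw [Fin.ext (a := a) (b := 0) h])
    simp only [dsPar, dsDep]; omega
  · by_cases h : (j : ℕ) = 0 <;> simp [dsPar, dsDep, h]
    omega
  · by_cases h : (j : ℕ) = 0 <;> simp [dsPar, dsDep, h]
    omega

lemma ds_rel {s : ℕ} {L R : List ℕ} (x y : DSVert s L R) :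
    dsRel s L R x y ↔ y ≠ Sum.inl 0 ∧ x = dsPar y := by
  rw [← toE_inj.ne_iff, ← toE_inj.eq_iff]
  rcases x with a | ⟨i, j⟩ | ⟨i, j⟩ <;> rcases y with a' | ⟨i', j'⟩ | ⟨i', j'⟩ <;>
    simp only [dsRel, dsPar]
  · simp only [toE, ne_eq, DE.c.injEq, Fin.val_zero]; omega
  · by_cases h : (j' : ℕ) = 0 <;> simp [toE, h]
  · by_cases h : (j' : ℕ) = 0 <;> simp [toE, h]
  · simp [toE]
  · by_cases h : (j' : ℕ) = 0 <;> simp [toE, h, Fin.ext_iff]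
    omega
  · by_cases h : (j' : ℕ) = 0 <;> simp [toE, h]
  · simp [toE]
  · by_cases h : (j' : ℕ) = 0 <;> simp [toE, h]
  · by_cases h : (j' : ℕ) = 0 <;> simp [toE, h, Fin.ext_iff]
    omega

/-- numerical data of a double spider -/
def dsD (s : ℕ) (L R : List ℕ) (ψ φ : ℕ → ℕ) (r0 l2 : ℕ) : DD :=
  ⟨s, L.length, R.length, fun i => L.getD i 1, fun i => R.getD i 1, ψ, φ, r0, l2⟩

lemma toE_valid {s : ℕ} {L R : List ℕ} {ψ φ : ℕ → ℕ} {r0 l2 : ℕ} (e : DE) :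
    (dsD s L R ψ φ r0 l2).valid e ↔ ∃ x : DSVert s L R, toE x = e := by
  constructor
  · rcases e with j | ⟨i, j⟩ | ⟨i, j⟩ <;> simp only [DD.valid, dsD]
    · intro h; exact ⟨Sum.inl ⟨j, by omega⟩, rfl⟩
    · rintro ⟨h1, h2⟩
      rw [List.getD_eq_getElem _ _ h1] at h2
      exact ⟨Sum.inr (Sum.inl ⟨⟨i, h1⟩, ⟨j, h2⟩⟩), rfl⟩
    · rintro ⟨h1, h2⟩
      rw [List.getD_eq_getElem _ _ h1] at h2
      exact ⟨Sum.inr (Sum.inr ⟨⟨i, h1⟩, ⟨j, h2⟩⟩), rfl⟩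
  · rintro ⟨a | ⟨i, j⟩ | ⟨i, j⟩, rfl⟩ <;> simp only [DD.valid, dsD, toE]
    · omega
    · refine ⟨i.2, ?_⟩
      rw [List.getD_eq_getElem _ _ i.2]
      exact j.2
    · refine ⟨i.2, ?_⟩
      rw [List.getD_eq_getElem _ _ i.2]
      exact j.2

section
variable {s : ℕ} {L R : List ℕ} {ψ φ : ℕ → ℕ} {r0 l2 : ℕ}

lemma toE_image : (Finset.univ : Finset (DSVert s L R)).image toE = (dsD s L R ψ φ r0 l2).Om := by
  ext e
  rw [DD.mem_Om, toE_valid]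
  simp

lemma Om_card : (dsD s L R ψ φ r0 l2).Om.card = Fintype.card (DSVert s L R) := by
  rw [← toE_image, Finset.card_image_of_injective _ toE_inj, Finset.card_univ]

lemma child_sum (g : DE → ℕ) (u : DSVert s L R) :
    ∑ w ∈ Finset.univ.filter (fun w => dsRel s L R u w), g (toE w) =
      ∑ e ∈ (dsD s L R ψ φ r0 l2).ch (toE u), g e := by
  rw [DD.ch, ← toE_image, Finset.filter_image, Finset.sum_image (fun x _ y _ h => toE_inj h)]
  apply Finset.sum_congr _ (fun _ _ => rfl)
  ext w
  simp only [Finset.mem_filter, Finset.mem_univ, true_and]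
  exact dsRel_iff (dsD s L R ψ φ r0 l2) u w

lemma ds_degree (u : DSVert s L R) :
    (DoubleSpider s L R).degree u = (dsD s L R ψ φ r0 l2).dg (toE u) := by
  have h := tree_degree (dsRel s L R) (Sum.inl 0) dsPar ds_rel dsDep ds_dep u
  have h2 := child_sum (ψ := ψ) (φ := φ) (r0 := r0) (l2 := l2) (fun _ => 1) u
  have h3 : (u = Sum.inl 0) ↔ toE u = .c 0 := by
    rw [← toE_inj.eq_iff]; simp [toE]
  simp only [h3] at h
  rw [DD.dg, ← h2]
  convert h using 2
  exact ds_eq s L R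

end

lemma ds_branch_degrees {s : ℕ} {L R : List ℕ} (hs : 1 ≤ s)
    (hL : ∀ i < L.length, 1 ≤ L.getD i 1) (hR : ∀ i < R.length, 1 ≤ R.getD i 1) :
    (DoubleSpider s L R).degree (vL s L R) = L.length + 1 ∧
    (DoubleSpider s L R).degree (vR s L R) = R.length + 1 := by
  rw [ds_degree (ψ := id) (φ := id) (r0 := 0) (l2 := 0),
    ds_degree (ψ := id) (φ := id) (r0 := 0) (l2 := 0)]
  exact ⟨DD.dg_root (D := dsD s L R id id 0 0) hs hL,
    DD.dg_right (D := dsD s L R id id 0 0) hs hR⟩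

/-- Let `DS(L, Pᶜᵒʳᵉ, R)` be a double spider with
`deg(v_l) > deg(v_r) ≥ 3` such that `R` contains at least one leg of even length.
Then `DS(L, Pᶜᵒʳᵉ, R)` is strongly antimagic. -/
theorem doubleSpider_right_even_isStronglyAntimagic (s : ℕ) (hs : 1 ≤ s) (L R : List ℕ)
    (hL : ∀ ℓ ∈ L, 1 ≤ ℓ) (hR : ∀ ℓ ∈ R, 1 ≤ ℓ)
    (hlr : (DoubleSpider s L R).degree (vR s L R) < (DoubleSpider s L R).degree (vL s L R))
    (hr : 3 ≤ (DoubleSpider s L R).degree (vR s L R))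
    (heven : ∃ ℓ ∈ R, Even ℓ) :
    IsStronglyAntimagic (DoubleSpider s L R) := by
  have hLl : ∀ i < L.length, 1 ≤ L.getD i 1 := by
    intro i hi
    rw [List.getD_eq_getElem _ _ hi]
    exact hL _ (List.getElem_mem hi)
  have hRl : ∀ i < R.length, 1 ≤ R.getD i 1 := by
    intro i hi
    rw [List.getD_eq_getElem _ _ hi]
    exact hR _ (List.getElem_mem hi)
  obtain ⟨dl, dr⟩ := ds_branch_degrees hs hLl hRl
  rw [dr] at hr
  rw [dl, dr] at hlr
  obtain ⟨ℓ, hℓ, he⟩ := heven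
  obtain ⟨r0, hr0, rfl⟩ := List.getElem_of_mem hℓ
  obtain ⟨ψ, φ, l2, G⟩ := DD.exists_good s L.length R.length (fun i => L.getD i 1)
    (fun i => R.getD i 1) hs (by omega) (by omega) hLl hRl r0 hr0 (by
      rw [List.getD_eq_getElem _ _ hr0]
      exact Nat.even_iff.1 he)
  change (dsD s L R ψ φ r0 l2).Good at G
  have hval : ∀ u : DSVert s L R, (dsD s L R ψ φ r0 l2).valid (toE u) :=
    fun u => (toE_valid _).2 ⟨u, rfl⟩
  obtain ⟨f, hf, hsum⟩ := tree_aux (dsRel s L R) (Sum.inl 0) dsPar ds_rel dsDep ds_dep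
    (fun v => (dsD s L R ψ φ r0 l2).H (toE v))
    (fun u v h => toE_inj (DD.H_inj G (hval u) (hval v) h))
    (fun v => by
      have := DD.H_lt_card (hval v)
      rwa [Om_card] at this)
    (by simpa [toE] using DD.H_root (D := dsD s L R ψ φ r0 l2))
  have hVS : ∀ u, vertexSum (DoubleSpider s L R) f u = (dsD s L R ψ φ r0 l2).VS (toE u) := by
    intro u
    rw [DD.VS, ← child_sum]
    exact hsum u
  have hab : (dsD s L R ψ φ r0 l2).b < (dsD s L R ψ φ r0 l2).a := by
    simp only [dsD]; omega
  refine ⟨f, by convert hf <;> exact ds_eq s L R, ?_, ?_⟩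
  · intro u v h
    rw [hVS, hVS] at h
    exact toE_inj ((DD.VS_main G hab (hval u) (hval v)).1 h)
  · intro u v h
    rw [hVS, hVS]
    rw [ds_degree (ψ := ψ) (φ := φ) (r0 := r0) (l2 := l2),
      ds_degree (ψ := ψ) (φ := φ) (r0 := r0) (l2 := l2)] at h
    exact (DD.VS_main G hab (hval u) (hval v)).2 h

end
end
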